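/- arXiv:1205.0236 — 10 statements merged into one kernel-verified Lean document; each statement's English description precedes it below -/
import Mathlib

section
/- Identity theorem for convergent generalized power series: Let X be a complex Banach space, δ > 0, σ ∈ (0,∞], and let (a_α)_{α∈S} be a generalized power series with coefficients in X converging normally on Ω(δ,σ), with sum f(w) = ∑_{α∈S} a_α e^{αw} for w ∈ Ω(δ,σ). If there exists a sequence (w_n) in Ω(δ,σ) with Re w_n → −∞ and f(w_n) = 0 for all n, then a_α = 0 for every α ∈ S, and consequently f vanishes identically on Ω(δ,σ). -/
noncomputable section

/-- The logarithm of the punctured disc of radius `δ` and half-opening angle `σ`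
on the logarithmic cover of `ℂ`. -/
def Omega (δ : ℝ) (σ : ENNReal) : Set ℂ :=
  {w : ℂ | w.re < Real.log δ ∧ ENNReal.ofReal |w.im| < σ}

/-- Identity theorem for convergent generalized power series. -/
theorem identity_theorem_generalized_power_series
    {X : Type*} [NormedAddCommGroup X] [NormedSpace ℂ X] [CompleteSpace X]
    (δ : ℝ) (hδ : 0 < δ) (σ : ENNReal) (hσ : 0 < σ)
    (S : Set ℝ) (hSc : S.Countable) (hSwf : S.IsWF) (hS0 : S ⊆ Set.Ici 0)
    (a : ℝ → X)
    (hconv : Summable fun α : S => ‖a (α : ℝ)‖ * δ ^ (α : ℝ))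
    (f : ℂ → X)
    (hf : ∀ w ∈ Omega δ σ, f w = ∑' α : S, Complex.exp (((α : ℝ) : ℂ) * w) • a (α : ℝ))
    (wseq : ℕ → ℂ) (hw : ∀ n, wseq n ∈ Omega δ σ)
    (hre : Filter.Tendsto (fun n => (wseq n).re) Filter.atTop Filter.atBot)
    (hzero : ∀ n, f (wseq n) = 0) :
    (∀ α ∈ S, a α = 0) ∧ ∀ w ∈ Omega δ σ, f w = 0 := by
  have key : ∀ α ∈ S, a α = 0 := by
    by_contra hcon
    push Not at hcon
    obtain ⟨β, hβS, hβ⟩ := hcon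
    have hTwf : ({α | α ∈ S ∧ a α ≠ 0} : Set ℝ).IsWF := hSwf.mono (fun x hx => hx.1)
    have hTne : ({α | α ∈ S ∧ a α ≠ 0} : Set ℝ).Nonempty := ⟨β, hβS, hβ⟩
    obtain ⟨α0, ⟨h0S, h0⟩, hmin⟩ : ∃ α0, (α0 ∈ S ∧ a α0 ≠ 0) ∧
        ∀ α ∈ S, a α ≠ 0 → α0 ≤ α :=
      ⟨hTwf.min hTne, hTwf.min_mem hTne, fun α h1 h2 => hTwf.min_le hTne ⟨h1, h2⟩⟩
    have hnorm : ∀ (α : ℝ) (w : ℂ),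
        ‖Complex.exp (((α - α0 : ℝ) : ℂ) * w) • a α‖ = Real.exp ((α - α0) * w.re) * ‖a α‖ := by
      intro α w
      rw [norm_smul, Complex.norm_exp, Complex.re_ofReal_mul]
    have hlim : Filter.Tendsto
        (fun n => ∑' α : S, Complex.exp ((((α : ℝ) - α0 : ℝ) : ℂ) * wseq n) • a (α : ℝ))
        Filter.atTop (nhds (∑' α : S, if α = (⟨α0, h0S⟩ : S) then a α0 else 0)) := by
      refine tendsto_tsum_of_dominated_convergence
        (bound := fun α : S => (‖a (α : ℝ)‖ * δ ^ (α : ℝ)) * δ ^ (-α0))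
        (hconv.mul_right _) ?_ ?_
      · rintro ⟨α, hα⟩
        by_cases h : α = α0
        · subst h
          simp
        · have : (⟨α, hα⟩ : S) ≠ ⟨α0, h0S⟩ := fun h' => h (congrArg Subtype.val h')
          rw [if_neg this]
          by_cases ha : a α = 0
          · simp [ha]
          have hlt : 0 < α - α0 := sub_pos.2 (lt_of_le_of_ne (hmin α hα ha) (Ne.symm h))
          rw [tendsto_zero_iff_norm_tendsto_zero]
          simp only [hnorm]
          have := (Real.tendsto_exp_atBot.comp
            (Filter.Tendsto.const_mul_atBot hlt hre)).mul_const ‖a α‖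
          simpa using this
      · refine Filter.Eventually.of_forall ?_
        rintro n ⟨α, hα⟩
        simp only [hnorm]
        by_cases ha : a α = 0
        · simp [ha]
        have hle : 0 ≤ α - α0 := sub_nonneg.2 (hmin α hα ha)
        have e : ‖a α‖ * δ ^ α * δ ^ (-α0) = Real.exp ((α - α0) * Real.log δ) * ‖a α‖ := by
          rw [mul_assoc, ← Real.rpow_add hδ, Real.rpow_def_of_pos hδ, mul_comm]
          congr 2
          ring
        rw [e]
        have := (hw n).1.le
        gcongr
    have hz : ∀ n, ∑' α : S, Complex.exp ((((α : ℝ) - α0 : ℝ) : ℂ) * wseq n) • a (α : ℝ) = 0 := by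
      intro n
      have h1 := hzero n
      rw [hf _ (hw n)] at h1
      have h2 : ∀ α : S, Complex.exp ((((α : ℝ) - α0 : ℝ) : ℂ) * wseq n) • a (α : ℝ) =
          Complex.exp (-(α0 : ℂ) * wseq n) •
            (Complex.exp (((α : ℝ) : ℂ) * wseq n) • a (α : ℝ)) := by
        intro α
        rw [smul_smul, ← Complex.exp_add]
        congr 2
        push_cast
        ring
      simp only [h2]
      rw [tsum_const_smul'', h1, smul_zero]
    simp only [hz, tsum_ite_eq] at hlim
    exact h0 (tendsto_nhds_unique hlim tendsto_const_nhds)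
  refine ⟨key, fun w hw' => ?_⟩
  rw [hf w hw']
  have : ∀ α : S, Complex.exp (((α : ℝ) : ℂ) * w) • a (α : ℝ) = 0 := fun α => by
    rw [key α α.2, smul_zero]
  simp only [this, tsum_zero]
end
end

section
/- Inverses of z-Hahn holomorphic functions (Theorem 2.12, z-case): Let R be a complex unital Banach algebra, δ > 0, σ ∈ (0,∞], and let f : Ω(δ,σ) → R be z-Hahn holomorphic, represented on Ω(δ',σ) by the normally convergent series f(w) = ∑_{α∈S} a_α e^{αw}. Assume that f(w) is invertible in R for every w ∈ Ω(δ,σ) and that the limit value f(0) = a_0 is invertible in R. Then the function w ↦ f(w)^{-1} is z-Hahn holomorphic: there exist δ'' ∈ (0,δ'], a countable well-ordered set S' ⊂ [0,∞), and coefficients (b_γ)_{γ∈S'} in R with ∑_{γ∈S'} ‖b_γ‖ (δ'')^γ < ∞ and f(w)^{-1} = ∑_{γ∈S'} b_γ e^{γw} for all w ∈ Ω(δ'',σ). -/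
noncomputable section

def listEquivAux (T : Type*) : List T ≃ Unit ⊕ (T × List T) where
  toFun l := match l with
    | [] => Sum.inl ()
    | t :: l => Sum.inr (t, l)
  invFun o := match o with
    | Sum.inl _ => []
    | Sum.inr (t, l) => t :: l
  left_inv l := by cases l <;> rfl
  right_inv o := by rcases o with _ | ⟨t, l⟩ <;> rfl

lemma ennreal_tsum_list_aux {T : Type*} (F : List T → ENNReal) :
    ∑' l, F l = F [] + ∑' t, ∑' l, F (t :: l) := by
  rw [← (listEquivAux T).symm.tsum_eq F, Summable.tsum_sum ENNReal.summable ENNReal.summable,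
    ← ENNReal.tsum_prod (f := fun t l => F (t :: l)), tsum_fintype]
  simp only [Finset.univ_unique, Finset.sum_singleton]
  rfl

open Classical in
lemma ennreal_list_sum_aux {T : Type*} (y : T → ENNReal) :
    ∑' l : List T, (l.map y).prod = (1 - ∑' t, y t)⁻¹ := by
  have hA : ∀ n : ℕ, ∑' l : List T, (if l.length = n then (l.map y).prod else 0)
      = (∑' t, y t) ^ n := by
    intro n
    induction n with
    | zero =>
      rw [ennreal_tsum_list_aux]
      simp
    | succ n ih =>
      rw [ennreal_tsum_list_aux, pow_succ', ← ih, ← ENNReal.tsum_mul_right]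
      simp only [List.length_nil, List.length_cons, Nat.add_right_cancel_iff, List.map_cons,
        List.prod_cons]
      rw [if_neg (by omega), zero_add]
      refine tsum_congr fun t => ?_
      rw [← ENNReal.tsum_mul_left]
      refine tsum_congr fun l => ?_
      split_ifs <;> simp
  rw [← ENNReal.tsum_geometric]
  simp_rw [← hA]
  rw [ENNReal.tsum_comm]
  refine tsum_congr fun l => ?_
  rw [tsum_eq_single l.length]
  · simp
  · intro n hn
    rw [if_neg (Ne.symm hn)]

lemma real_list_summable_aux {T : Type*} (y : T → ℝ) (hy : ∀ t, 0 ≤ y t) (hs : Summable y)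
    (h1 : ∑' t, y t < 1) : Summable fun l : List T => (l.map y).prod := by
  have h0 : ∀ l : List T, 0 ≤ (l.map y).prod := by
    intro l
    apply List.prod_nonneg
    intro a ha
    obtain ⟨t, -, rfl⟩ := List.mem_map.1 ha
    exact hy t
  have hof : ∀ l : List T, ENNReal.ofReal (l.map y).prod
      = (l.map fun t => ENNReal.ofReal (y t)).prod := by
    intro l
    induction l with
    | nil => simp
    | cons t l ih => simp [ENNReal.ofReal_mul (hy t), ih]
  have hfin : ∑' l : List T, ENNReal.ofReal (l.map y).prod ≠ ⊤ := by
    simp_rw [hof]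
    rw [ennreal_list_sum_aux, ← ENNReal.ofReal_tsum_of_nonneg hy hs]
    rw [ENNReal.inv_ne_top]
    have : ENNReal.ofReal (∑' t, y t) < 1 := by
      rw [← ENNReal.ofReal_one]
      exact (ENNReal.ofReal_lt_ofReal_iff one_pos).2 h1
    exact (tsub_pos_of_lt this).ne'
  have := ENNReal.summable_toReal hfin
  refine this.congr fun l => ?_
  rw [ENNReal.toReal_ofReal (h0 l)]

lemma norm_list_prod_aux {T R : Type*} [NormedRing R] (x : T → R) (l : List T) :
    ‖(l.map x).prod‖ ≤ ‖(1 : R)‖ * (l.map fun t => ‖x t‖).prod := by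
  induction l with
  | nil => simp
  | cons t l ih =>
    simp only [List.map_cons, List.prod_cons]
    calc _ ≤ ‖x t‖ * ‖(l.map x).prod‖ := norm_mul_le _ _
      _ ≤ ‖x t‖ * (‖(1 : R)‖ * (l.map fun t => ‖x t‖).prod) := by gcongr
      _ = _ := by ring

lemma neumann_list_aux {T R : Type*} [NormedRing R] [CompleteSpace R] (x : T → R)
    (hs : Summable fun t => ‖x t‖) (h1 : ∑' t, ‖x t‖ < 1) :
    (Summable fun l : List T => ‖(l.map x).prod‖) ∧
    ∑' l : List T, (l.map x).prod = 1 + (∑' t, x t) * ∑' l : List T, (l.map x).prod := by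
  have hn : Summable fun l : List T => ‖(l.map x).prod‖ :=
    Summable.of_nonneg_of_le (fun _ => norm_nonneg _) (norm_list_prod_aux x)
      ((real_list_summable_aux _ (fun t => norm_nonneg _) hs h1).mul_left _)
  refine ⟨hn, ?_⟩
  have h2 := tsum_mul_tsum_of_summable_norm hs hn
  rw [h2]
  conv_lhs => rw [← (listEquivAux T).symm.tsum_eq]
  have hs' := ((listEquivAux T).symm.summable_iff (f := fun l : List T => (l.map x).prod)).2
    hn.of_norm
  change ∑' c, ((fun l : List T => (l.map x).prod) ∘ (listEquivAux T).symm) c = _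
  rw [Summable.tsum_sum (hs'.comp_injective Sum.inl_injective)
    (hs'.comp_injective Sum.inr_injective), tsum_fintype]
  simp only [Finset.univ_unique, Finset.sum_singleton]
  rfl

set_option maxHeartbeats 2000000 in
/-- Inverses of z-Hahn holomorphic functions (Theorem 2.12, z-case). -/
theorem inverse_zHahn_holomorphic
    {R : Type*} [NormedRing R] [NormedAlgebra ℂ R] [CompleteSpace R]
    (δ : ℝ) (hδ : 0 < δ) (σ : ENNReal) (hσ : 0 < σ)
    (δ' : ℝ) (hδ' : δ' ∈ Set.Ioc 0 δ)
    (S : Set ℝ) (hSc : S.Countable) (hSwf : S.IsWF) (hS0 : S ⊆ Set.Ici 0)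
    (a : ℝ → R) (hsupp : ∀ α ∉ S, a α = 0)
    (hsum : Summable fun α : S => ‖a (α : ℝ)‖ * δ' ^ (α : ℝ))
    (f : ℂ → R)
    (hhol : DifferentiableOn ℂ f (Omega δ σ))
    (hf : ∀ w ∈ Omega δ' σ, f w = ∑' α : S, Complex.exp (((α : ℝ) : ℂ) * w) • a (α : ℝ))
    (hinv : ∀ w ∈ Omega δ σ, IsUnit (f w))
    (h0 : IsUnit (a 0)) :
    ∃ δ'' ∈ Set.Ioc 0 δ', ∃ S' : Set ℝ, S'.Countable ∧ S'.IsWF ∧ S' ⊆ Set.Ici 0 ∧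
      ∃ b : ℝ → R,
        (Summable fun γ : S' => ‖b (γ : ℝ)‖ * δ'' ^ (γ : ℝ)) ∧
        ∀ w ∈ Omega δ'' σ,
          Ring.inverse (f w) = ∑' γ : S', Complex.exp (((γ : ℝ) : ℂ) * w) • b (γ : ℝ) := by
  obtain ⟨u, hu⟩ := h0
  obtain ⟨hδ'0, hδ'δ⟩ := hδ'
  let T : Set ℝ := {α | α ∈ S ∧ 0 < α}
  have hTS : T ⊆ S := fun α h => h.1
  let p : T → R := fun t => -((↑u⁻¹ : R) * a t)
  have hsumT : Summable fun t : T => ‖a (t : ℝ)‖ * δ' ^ (t : ℝ) :=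
    hsum.comp_injective (Set.inclusion_injective hTS)
  have hpb : ∀ t : T, ‖p t‖ ≤ ‖(↑u⁻¹ : R)‖ * ‖a t‖ := fun t => by
    simp only [p, norm_neg]; exact norm_mul_le _ _
  have hps : Summable fun t : T => ‖p t‖ * δ' ^ (t : ℝ) := by
    refine Summable.of_nonneg_of_le (fun t => by positivity) (fun t => ?_)
      (hsumT.mul_left ‖(↑u⁻¹ : R)‖)
    rw [← mul_assoc]
    gcongr
    exact hpb t
  -- choose the radius
  have hlim : Filter.Tendsto (fun d : ℝ => ∑' t : T, ‖p t‖ * d ^ (t : ℝ))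
      (nhdsWithin 0 (Set.Ioi 0)) (nhds (∑' t : T, (0 : ℝ))) := by
    refine tendsto_tsum_of_dominated_convergence hps ?_ ?_
    · intro t
      have : Filter.Tendsto (fun d : ℝ => ‖p t‖ * d ^ (t : ℝ)) (nhds 0)
          (nhds (‖p t‖ * 0 ^ (t : ℝ))) :=
        ((Real.continuousAt_rpow_const 0 t (Or.inr t.2.2.le)).tendsto).const_mul _
      rw [Real.zero_rpow t.2.2.ne', mul_zero] at this
      exact this.mono_left nhdsWithin_le_nhds
    · filter_upwards [Ioo_mem_nhdsGT hδ'0] with d hd t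
      have := hd.1
      rw [Real.norm_of_nonneg (by positivity)]
      gcongr
      · exact t.2.2.le
      · exact hd.2.le
  rw [tsum_zero] at hlim
  obtain ⟨d, hd1, hd⟩ := ((hlim.eventually (gt_mem_nhds one_pos)).and
    (Ioo_mem_nhdsGT hδ'0)).exists
  obtain ⟨hd0, hdδ⟩ := hd
  have hpd : Summable fun t : T => ‖p t‖ * d ^ (t : ℝ) := by
    refine Summable.of_nonneg_of_le (fun t => by positivity) (fun t => ?_) hps
    gcongr
    exact t.2.2.le
  have hlist := real_list_summable_aux (fun t : T => ‖p t‖ * d ^ (t : ℝ))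
    (fun t => by positivity) hpd hd1
  let s0 : List T → ℝ := fun l => (l.map (fun t : T => (t : ℝ))).sum
  have hs0cons : ∀ t l, s0 (t :: l) = t + s0 l := fun t l => by simp [s0]
  let s : List T → Set.range s0 := Set.rangeFactorization s0
  have hw : ∀ l : List T, (l.map (fun t : T => ‖p t‖ * d ^ (t : ℝ))).prod
      = (l.map fun t => ‖p t‖).prod * d ^ (s0 l) := by
    intro l
    induction l with
    | nil => simp [s0]
    | cons t l ih =>
      rw [hs0cons, Real.rpow_add hd0, List.map_cons, List.prod_cons, ih, List.map_cons,
        List.prod_cons]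
      ring
  have hPs : Summable fun l : List T => ‖(l.map p).prod‖ * d ^ (s0 l) := by
    refine Summable.of_nonneg_of_le (fun t => by positivity) (fun l => ?_)
      (hlist.mul_left ‖(1 : R)‖)
    rw [hw, ← mul_assoc]
    gcongr
    exact norm_list_prod_aux p l
  let B : Set.range s0 → R := fun γ => (∑' l : {l // s l = γ}, ((l : List T).map p).prod) * ↑u⁻¹
  have hext : ∀ γ : Set.range s0, Function.extend Subtype.val B 0 (γ : ℝ) = B γ := fun γ =>
    Subtype.val_injective.extend_apply _ _ _
  have hsl : ∀ (γ : Set.range s0) (l : {l // s l = γ}), s0 l = γ := fun γ l =>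
    congrArg Subtype.val l.2
  have hTc : Countable T := (hSc.mono hTS).to_subtype
  have hsig : Summable fun x : (Σ γ : Set.range s0, {l // s l = γ}) =>
      ‖((x.2 : List T).map p).prod‖ * d ^ (x.1 : ℝ) := by
    refine ((Equiv.sigmaFiberEquiv s).summable_iff.2 hPs).congr ?_
    rintro ⟨γ, l⟩
    simp [Equiv.sigmaFiberEquiv, hsl]
  have hfib : ∀ γ : Set.range s0,
      Summable fun l : {l // s l = γ} => ‖((l : List T).map p).prod‖ := by
    intro γ
    have h := hsig.sigma_factor γ
    have hne : d ^ (γ : ℝ) ≠ 0 := (Real.rpow_pos_of_pos hd0 _).ne'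
    exact (summable_mul_right_iff hne).1 h
  refine ⟨d, ⟨hd0, hdδ.le⟩, Set.range s0, Set.countable_range s0, ?_, ?_,
    Function.extend Subtype.val B 0, ?_, ?_⟩
  · have hT : T.IsPWO := (hSwf.mono hTS).isPWO
    have hc := hT.addSubmonoid_closure (fun x hx => hx.2.le)
    refine (hc.mono ?_).isWF
    rintro _ ⟨l, rfl⟩
    refine AddSubmonoid.list_sum_mem _ ?_
    intro x hx
    obtain ⟨t, -, rfl⟩ := List.mem_map.1 hx
    exact AddSubmonoid.subset_closure t.2
  · rintro _ ⟨l, rfl⟩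
    change 0 ≤ s0 l
    refine List.sum_nonneg (M := ℝ) ?_
    intro x hx
    obtain ⟨t, -, rfl⟩ := List.mem_map.1 hx
    exact t.2.2.le
  · simp_rw [hext]
    refine Summable.of_nonneg_of_le (fun t => by positivity) (fun γ => ?_)
      (hsig.sigma.mul_left ‖(↑u⁻¹ : R)‖)
    simp only
    rw [tsum_mul_right, ← mul_assoc, mul_comm ‖(↑u⁻¹ : R)‖]
    gcongr
    refine (norm_mul_le _ _).trans ?_
    gcongr
    exact norm_tsum_le_tsum_norm (hfib γ)
  · intro w hwd
    simp_rw [hext]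
    have hwδ' : w ∈ Omega δ' σ := ⟨hwd.1.trans_le (Real.log_le_log hd0 hdδ.le), hwd.2⟩
    have hwδ : w ∈ Omega δ σ := ⟨hwδ'.1.trans_le (Real.log_le_log hδ'0 hδ'δ), hwd.2⟩
    have hexp : ∀ (r : ℝ) (e : ℝ), 0 < e → 0 ≤ r → w.re < Real.log e →
        ‖Complex.exp ((r : ℂ) * w)‖ ≤ e ^ r := by
      intro r e he hr hwe
      rw [Complex.norm_exp, Real.rpow_def_of_pos he, mul_comm (Real.log e)]
      simp only [Complex.mul_re, Complex.ofReal_re, Complex.ofReal_im, zero_mul, sub_zero]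
      gcongr
    let F : ℝ → R := fun α => Complex.exp ((α : ℂ) * w) • a α
    have hFS : Function.support F ⊆ S := by
      intro α hα
      by_contra h
      exact hα (by simp [F, hsupp α h])
    have hFsumS : Summable fun α : S => F α := by
      refine Summable.of_norm_bounded hsum fun α => ?_
      rw [norm_smul, mul_comm]
      gcongr
      exact hexp _ _ hδ'0 (hS0 α.2) hwδ'.1
    have hFsum : Summable F := (hasSum_subtype_iff_of_support_subset hFS).1 hFsumS.hasSum |>.summable
    have hfw : f w = a 0 + ∑' t : T, F t := by
      rw [hf w hwδ']
      change ∑' α : S, F α = _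
      rw [tsum_subtype_eq_of_support_subset hFS, hFsum.tsum_eq_add_tsum_ite 0]
      congr 1
      · simp [F]
      · rw [tsum_subtype T F]
        refine tsum_congr fun α => ?_
        by_cases h0 : α = 0
        · simp [h0, T]
        · rw [if_neg h0]
          by_cases hS : α ∈ S
          · rw [Set.indicator_of_mem]
            exact ⟨hS, lt_of_le_of_ne (hS0 hS) (Ne.symm h0)⟩
          · rw [Set.indicator_of_notMem (fun h => hS h.1)]
            simp [F, hsupp α hS]
    let x : T → R := fun t => Complex.exp (((t : ℝ) : ℂ) * w) • p t
    have hxb : ∀ t : T, ‖x t‖ ≤ ‖p t‖ * d ^ (t : ℝ) := by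
      intro t
      rw [norm_smul, mul_comm]
      gcongr
      exact hexp _ _ hd0 t.2.2.le hwd.1
    have hxs : Summable fun t => ‖x t‖ :=
      Summable.of_nonneg_of_le (fun _ => norm_nonneg _) hxb hpd
    have hx1 : ∑' t, ‖x t‖ < 1 := (hxs.tsum_le_tsum hxb hpd).trans_lt hd1
    obtain ⟨hGs, hG⟩ := neumann_list_aux x hxs hx1
    have hFT : Summable fun t : T => F t := hFsum.subtype T
    have hxsum : ∑' t, x t = 1 - (↑u⁻¹ : R) * f w := by
      have : ∀ t, x t = (-(↑u⁻¹ : R)) * F t := by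
        intro t
        simp [x, p, F]
      simp_rw [this]
      rw [hFT.tsum_mul_left, hfw, mul_add, ← hu, Units.inv_mul]
      simp
    have hxl : ∀ l : List T, (l.map x).prod = Complex.exp ((s0 l : ℂ) * w) • (l.map p).prod := by
      intro l
      induction l with
      | nil => simp [s0]
      | cons t l ih =>
        rw [hs0cons, List.map_cons, List.prod_cons, ih, List.map_cons, List.prod_cons]
        simp only [x]
        rw [smul_mul_smul_comm, ← Complex.exp_add]
        push_cast
        rw [add_mul]
    set G := ∑' l : List T, (l.map x).prod with hGdef
    have hfG : f w * (G * ↑u⁻¹) = 1 := by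
      rw [hxsum, sub_mul, one_mul] at hG
      have h1 : (↑u⁻¹ : R) * f w * G = 1 := by
        have := hG
        rw [add_sub_assoc'] at this
        have h3 := sub_eq_zero.2 this
        have h4 : (↑u⁻¹ : R) * f w * G - 1 = 0 := by rw [← h3]; abel
        exact sub_eq_zero.1 h4
      have h2 : f w * G = u := by
        rw [mul_assoc] at h1
        rw [← u.mul_inv_cancel_left (f w * G), h1, mul_one]
      rw [← mul_assoc, h2, Units.mul_inv]
    have hinvw : Ring.inverse (f w) = G * ↑u⁻¹ := by
      rw [← Ring.inverse_mul_cancel_left (f w) (G * ↑u⁻¹) (hinv w hwδ), hfG, mul_one]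
    rw [hinvw, hGdef]
    have hsigx : Summable fun y : (Σ γ : Set.range s0, {l // s l = γ}) =>
        ((y.2 : List T).map x).prod :=
      (Equiv.sigmaFiberEquiv s).summable_iff.2 hGs.of_norm
    rw [← (Equiv.sigmaFiberEquiv s).tsum_eq]
    change (∑' y : (Σ γ : Set.range s0, {l // s l = γ}), ((y.2 : List T).map x).prod) * _ = _
    rw [hsigx.tsum_sigma, ← hsigx.sigma.tsum_mul_right]
    refine tsum_congr fun γ => ?_
    simp only [B]
    rw [← smul_mul_assoc, ← (hfib γ).of_norm.tsum_const_smul]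
    congr 1
    refine tsum_congr fun l => ?_
    rw [hxl, hsl]
end
end

section
/- Composition with holomorphic functions (Theorem 2.13, z-case): Let δ > 0, σ ∈ (0,∞], let f : Ω(δ,σ) → ℂ be z-Hahn holomorphic with value f(0) at zero, and let h be a holomorphic function on an open set U ⊂ ℂ containing f(0). Then h∘f is z-Hahn holomorphic on its domain: there exist δ'' > 0 with f(Ω(δ'',σ)) ⊂ U, a countable well-ordered set S' ⊂ [0,∞), and complex coefficients (c_γ)_{γ∈S'} with ∑_{γ∈S'} |c_γ| (δ'')^γ < ∞ such that h(f(w)) = ∑_{γ∈S'} c_γ e^{γw} for all w ∈ Ω(δ'',σ). -/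
noncomputable section

theorem hasSum_pi_pow {R : Type*} [NormedField R] [CompleteSpace R] {T : Type*} (t : T → R)
    (ht : Summable fun x => ‖t x‖) (n : ℕ) :
    (Summable fun v : Fin n → T => ‖∏ i, t (v i)‖) ∧
    HasSum (fun v : Fin n → T => ∏ i, t (v i)) ((∑' x, t x) ^ n) := by
  induction n with
  | zero =>
    refine ⟨(hasSum_fintype _).summable, ?_⟩
    simp
  | succ n ih =>
    obtain ⟨h1, h2⟩ := ih
    constructor
    · rw [← (Fin.consEquiv (fun _ : Fin (n+1) => T)).summable_iff]
      have := ht.mul_norm h1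
      refine this.congr fun x => ?_
      simp [Fin.prod_univ_succ, Fin.consEquiv]
    · rw [← (Fin.consEquiv (fun _ : Fin (n+1) => T)).hasSum_iff, pow_succ']
      have hsm : Summable fun x : T × (Fin n → T) => t x.1 * ∏ i, t (x.2 i) :=
        summable_mul_of_summable_norm (f := t) (g := fun v : Fin n → T => ∏ i, t (v i)) ht h1
      have hts : HasSum t (∑' x, t x) := ht.of_norm.hasSum
      have := HasSum.mul hts h2 hsm
      have he : (fun v : Fin (n+1) → T => ∏ i, t (v i)) ∘ (Fin.consEquiv (fun _ : Fin (n+1) => T))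
          = fun x : T × (Fin n → T) => t x.1 * ∏ i, t (x.2 i) := by
        funext x
        simp [Fin.prod_univ_succ, Fin.consEquiv]
      rw [he]
      exact this

theorem norm_exp_le {x : ℝ} (hx : 0 < x) {σ : ENNReal} {w : ℂ} (hw : w ∈ Omega x σ) {α : ℝ}
    (hα : 0 ≤ α) : ‖Complex.exp ((α : ℂ) * w)‖ ≤ x ^ α := by
  rw [Complex.norm_exp, Real.rpow_def_of_pos hx, Real.exp_le_exp]
  simp
  nlinarith [hw.1]

/-- regrouping -/
theorem regroup {I : Type*} [Countable I] (E : I → ℝ) (hE : ∀ i, 0 ≤ E i) (d : I → ℂ)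
    (x : ℝ) (hx : 0 < x) (σ : ENNReal)
    (hs : Summable fun i => ‖d i‖ * x ^ (E i)) (F : ℂ → ℂ)
    (hF : ∀ w ∈ Omega x σ, F w = ∑' i, Complex.exp ((E i : ℂ) * w) * d i) :
    ∃ c : ℝ → ℂ,
          (Summable fun γ : Set.range E => ‖c (γ : ℝ)‖ * x ^ (γ : ℝ)) ∧
          ∀ w ∈ Omega x σ,
            F w = ∑' γ : Set.range E, Complex.exp (((γ : ℝ) : ℂ) * w) * c (γ : ℝ) := by
  classical
  let e : I → Set.range E := fun i => ⟨E i, i, rfl⟩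
  have he : ∀ (γ : Set.range E) (i : {i // e i = γ}), E i.1 = (γ : ℝ) := fun γ i =>
    congrArg Subtype.val i.2
  let c0 : Set.range E → ℂ := fun γ => ∑' i : {i // e i = γ}, d i
  refine ⟨fun r => if h : r ∈ Set.range E then c0 ⟨r, h⟩ else 0, ?_, ?_⟩
  · have h1 := (Equiv.sigmaFiberEquiv e).summable_iff.mpr hs
    have h2 := (summable_sigma_of_nonneg (fun y => by
      simp only [Function.comp]; positivity)).mp h1
    refine Summable.of_nonneg_of_le (fun γ => by positivity) (fun γ => ?_) h2.2
    have h3 := h2.1 γ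
    simp only [Function.comp, Equiv.sigmaFiberEquiv_apply, he] at h3
    have h4 : Summable fun i : {i // e i = γ} => ‖d i‖ := by
      have := h3.mul_right (x ^ (γ : ℝ))⁻¹
      have hne : x ^ (γ : ℝ) ≠ 0 := (Real.rpow_pos_of_pos hx _).ne'
      refine this.congr fun i => ?_
      field_simp
    simp only [Function.comp, Equiv.sigmaFiberEquiv_apply, he, tsum_mul_right]
    have := norm_tsum_le_tsum_norm h4
    simp only [Subtype.coe_prop, dite_true, c0]
    gcongr
  · intro w hw
    have hs' : Summable fun i => Complex.exp ((E i : ℂ) * w) * d i := by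
      refine Summable.of_norm_bounded hs fun i => ?_
      rw [norm_mul, mul_comm]
      gcongr
      exact norm_exp_le hx hw (hE i)
    have h1 := (Equiv.sigmaFiberEquiv e).summable_iff.mpr hs'
    rw [hF w hw, ← (Equiv.sigmaFiberEquiv e).tsum_eq]
    refine h1.tsum_sigma.trans (tsum_congr fun γ => ?_)
    simp only [Subtype.coe_prop, dite_true, c0, ← tsum_mul_left]
    exact tsum_congr fun i => by simp [he]

/-- Composition of a z-Hahn holomorphic function with a holomorphic function
(Theorem 2.13, z-case). -/
theorem comp_holomorphic_zHahn_holomorphic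
    (δ : ℝ) (hδ : 0 < δ) (σ : ENNReal) (hσ : 0 < σ)
    (δ' : ℝ) (hδ' : δ' ∈ Set.Ioc 0 δ)
    (S : Set ℝ) (hSc : S.Countable) (hSwf : S.IsWF) (hS0 : S ⊆ Set.Ici 0)
    (a : ℝ → ℂ) (hsupp : ∀ α ∉ S, a α = 0)
    (hsum : Summable fun α : S => ‖a (α : ℝ)‖ * δ' ^ (α : ℝ))
    (f : ℂ → ℂ)
    (hhol : DifferentiableOn ℂ f (Omega δ σ))
    (hf : ∀ w ∈ Omega δ' σ, f w = ∑' α : S, Complex.exp (((α : ℝ) : ℂ) * w) * a (α : ℝ))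
    (U : Set ℂ) (hU : IsOpen U) (h : ℂ → ℂ)
    (hh : DifferentiableOn ℂ h U)
    (hmem : a 0 ∈ U) :
    ∃ δ'' ∈ Set.Ioc 0 δ',
      (∀ w ∈ Omega δ'' σ, f w ∈ U) ∧
      ∃ S' : Set ℝ, S'.Countable ∧ S'.IsWF ∧ S' ⊆ Set.Ici 0 ∧
        ∃ c : ℝ → ℂ,
          (Summable fun γ : S' => ‖c (γ : ℝ)‖ * δ'' ^ (γ : ℝ)) ∧
          ∀ w ∈ Omega δ'' σ,
            h (f w) = ∑' γ : S', Complex.exp (((γ : ℝ) : ℂ) * w) * c (γ : ℝ) := by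
  classical
  obtain ⟨hδ0, hδδ⟩ := hδ'
  let a' : ℝ → ℂ := fun α => if α = 0 then 0 else a α
  have ha'le : ∀ α, ‖a' α‖ ≤ ‖a α‖ := by
    intro α
    simp only [a']
    split_ifs <;> simp
  have hsum' : Summable fun α : S => ‖a' (α : ℝ)‖ * δ' ^ (α : ℝ) := by
    refine Summable.of_nonneg_of_le (fun γ => by positivity) (fun γ => ?_) hsum
    gcongr
    exact ha'le _
  have hsplit : ∀ w ∈ Omega δ' σ,
      f w = a 0 + ∑' α : S, Complex.exp (((α : ℝ) : ℂ) * w) * a' (α : ℝ) := by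
    intro w hw
    rw [hf w hw]
    have hs : Summable fun α : S => Complex.exp (((α : ℝ) : ℂ) * w) * a (α : ℝ) := by
      refine Summable.of_norm_bounded hsum fun i => ?_
      rw [norm_mul, mul_comm]
      gcongr
      exact norm_exp_le hδ0 hw (hS0 i.2)
    by_cases h0 : (0 : ℝ) ∈ S
    · rw [hs.tsum_eq_add_tsum_ite ⟨0, h0⟩]
      congr 1
      · simp
      · refine tsum_congr fun α => ?_
        by_cases hα : (α : ℝ) = 0
        · have : α = ⟨0, h0⟩ := Subtype.ext hα
          simp [a', this]
        · have : α ≠ ⟨0, h0⟩ := fun h => hα (congrArg Subtype.val h)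
          simp [a', this, hα]
    · rw [hsupp 0 h0, zero_add]
      refine tsum_congr fun α => ?_
      have hα : (α : ℝ) ≠ 0 := fun h => h0 (h ▸ α.2)
      simp [a', hα]
  obtain ⟨p, r, hp⟩ := hh.analyticAt (hU.mem_nhds hmem)
  obtain ⟨ε, hε, hεU⟩ := Metric.isOpen_iff.mp hU _ hmem
  obtain ⟨ρ, hρ0, hρ⟩ := ENNReal.lt_iff_exists_nnreal_btwn.mp
    (show (0 : ENNReal) < min r (ENNReal.ofReal ε) from
      lt_min hp.r_pos (ENNReal.ofReal_pos.mpr hε))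
  have hρ0' : (0 : ℝ) < ρ := by exact_mod_cast hρ0
  have hρr : (ρ : ENNReal) < r := hρ.trans_le (min_le_left _ _)
  have hρε : (ρ : ℝ) < ε := by
    have := hρ.trans_le (min_le_right _ _)
    rw [← ENNReal.ofReal_coe_nnreal] at this
    exact (ENNReal.ofReal_lt_ofReal_iff hε).mp this
  have htend : Filter.Tendsto (fun x : ℝ => ∑' α : S, ‖a' (α : ℝ)‖ * x ^ (α : ℝ))
      (nhdsWithin 0 (Set.Ioi 0)) (nhds (∑' _ : S, (0 : ℝ))) := by
    refine tendsto_tsum_of_dominated_convergence hsum' (fun α => ?_) ?_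
    · by_cases hα : (α : ℝ) = 0
      · simp [a', hα]
      · have hpos : 0 < (α : ℝ) := lt_of_le_of_ne (hS0 α.2) (Ne.symm hα)
        have h1 : Filter.Tendsto (fun x : ℝ => x ^ (α : ℝ)) (nhds 0) (nhds ((0 : ℝ) ^ (α : ℝ))) :=
          (Real.continuousAt_rpow_const 0 (α : ℝ) (Or.inr hpos.le)).tendsto
        rw [Real.zero_rpow hα] at h1
        have h3 : Filter.Tendsto (fun x : ℝ => x ^ (α : ℝ)) (nhdsWithin 0 (Set.Ioi 0)) (nhds 0) :=
          h1.mono_left nhdsWithin_le_nhds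
        have h2 := h3.const_mul ‖a' (α : ℝ)‖
        simpa using h2
    · filter_upwards [Ioo_mem_nhdsGT hδ0] with x hx α
      have hx0 := hx.1
      rw [Real.norm_of_nonneg (by positivity)]
      have := hx.2.le
      have : 0 ≤ (α : ℝ) := hS0 α.2
      gcongr
  rw [tsum_zero] at htend
  obtain ⟨x, hxρ, hx0, hxδ⟩ :=
    ((htend.eventually (gt_mem_nhds hρ0')).and (Ioo_mem_nhdsGT hδ0)).exists
  have hsx : Summable fun α : S => ‖a' (α : ℝ)‖ * x ^ (α : ℝ) := by
    refine Summable.of_nonneg_of_le (fun γ => by positivity) (fun γ => ?_) hsum'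
    have : 0 ≤ (γ : ℝ) := hS0 γ.2
    have := hxδ.le
    gcongr
  have hsub : ∀ w ∈ Omega x σ, w ∈ Omega δ' σ := fun w hw =>
    ⟨hw.1.trans (Real.log_lt_log hx0 hxδ), hw.2⟩
  have htermle : ∀ w ∈ Omega x σ, ∀ α : S,
      ‖Complex.exp (((α : ℝ) : ℂ) * w) * a' (α : ℝ)‖ ≤ ‖a' (α : ℝ)‖ * x ^ (α : ℝ) := by
    intro w hw α
    rw [norm_mul, mul_comm]
    gcongr
    exact norm_exp_le hx0 hw (hS0 α.2)
  have hnsum : ∀ w ∈ Omega x σ,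
      Summable fun α : S => ‖Complex.exp (((α : ℝ) : ℂ) * w) * a' (α : ℝ)‖ := fun w hw =>
    Summable.of_nonneg_of_le (fun _ => norm_nonneg _) (htermle w hw) hsx
  have hglt : ∀ w ∈ Omega x σ,
      ‖∑' α : S, Complex.exp (((α : ℝ) : ℂ) * w) * a' (α : ℝ)‖ < ρ := by
    intro w hw
    refine lt_of_le_of_lt ?_ hxρ
    exact (norm_tsum_le_tsum_norm (hnsum w hw)).trans
      ((hnsum w hw).tsum_le_tsum (htermle w hw) hsx)
  refine ⟨x, ⟨hx0, hxδ.le⟩, ?_, ?_⟩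
  · intro w hw
    apply hεU
    rw [hsplit w (hsub w hw), Metric.mem_ball, dist_eq_norm, add_sub_cancel_left]
    exact (hglt w hw).trans hρε
  have : Countable S := hSc
  let E : (Σ n : ℕ, (Fin n → S)) → ℝ := fun i => ∑ j, ((i.2 j : S) : ℝ)
  let d : (Σ n : ℕ, (Fin n → S)) → ℂ := fun i => p.coeff i.1 * ∏ j, a' ((i.2 j : S) : ℝ)
  have hE0 : ∀ i, 0 ≤ E i := fun i => Finset.sum_nonneg fun j _ => hS0 (i.2 j).2
  have hpn : Summable fun n : ℕ => ‖p.coeff n‖ * (ρ : ℝ) ^ n := by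
    have := p.summable_norm_mul_pow (hρr.trans_le hp.r_le)
    simpa using this
  have hds : Summable fun i => ‖d i‖ * x ^ (E i) := by
    have heq : ∀ i, ‖d i‖ * x ^ (E i) =
        ‖p.coeff i.1‖ * ∏ j, (‖a' ((i.2 j : S) : ℝ)‖ * x ^ ((i.2 j : S) : ℝ)) := by
      intro i
      simp only [d, E, norm_mul, norm_prod, Finset.prod_mul_distrib, mul_assoc,
        Real.rpow_sum_of_pos hx0]
    have hpi := hasSum_pi_pow (fun α : S => ‖a' (α : ℝ)‖ * x ^ (α : ℝ)) hsx.norm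
    rw [summable_sigma_of_nonneg (fun i => by positivity)]
    simp only [heq]
    refine ⟨fun n => (hpi n).2.summable.mul_left _, ?_⟩
    simp only [tsum_mul_left, (hpi _).2.tsum_eq]
    refine Summable.of_nonneg_of_le (fun n => ?_) (fun n => ?_) hpn
    · have : 0 ≤ ∑' α : S, ‖a' (α : ℝ)‖ * x ^ (α : ℝ) := tsum_nonneg fun α => by positivity
      positivity
    · have : 0 ≤ ∑' α : S, ‖a' (α : ℝ)‖ * x ^ (α : ℝ) := tsum_nonneg fun α => by positivity
      gcongr
  refine ⟨Set.range E, Set.countable_range E, ?_, ?_, regroup E hE0 d x hx0 σ hds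
    (fun w => h (f w)) ?_⟩
  · have hcl := hSwf.isPWO.addSubmonoid_closure (fun y hy => hS0 hy)
    refine (hcl.mono ?_).isWF
    rintro _ ⟨i, rfl⟩
    exact AddSubmonoid.sum_mem _ fun j _ => AddSubmonoid.subset_closure (i.2 j).2
  · rintro _ ⟨i, rfl⟩
    exact hE0 i
  · intro w hw
    have hsw : Summable fun i => Complex.exp ((E i : ℂ) * w) * d i := by
      refine Summable.of_norm_bounded hds fun i => ?_
      rw [norm_mul, mul_comm]
      gcongr
      exact norm_exp_le hx0 hw (hE0 i)
    have hpi := hasSum_pi_pow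
      (fun α : S => Complex.exp (((α : ℝ) : ℂ) * w) * a' (α : ℝ)) (hnsum w hw)
    have heq : ∀ i, Complex.exp ((E i : ℂ) * w) * d i =
        p.coeff i.1 * ∏ j, (Complex.exp ((((i.2 j : S) : ℝ) : ℂ) * w) * a' ((i.2 j : S) : ℝ)) := by
      intro i
      simp only [d, E, Finset.prod_mul_distrib, Complex.ofReal_sum, Finset.sum_mul,
        Complex.exp_sum]
      ring
    rw [hsw.tsum_sigma]
    simp only [heq, tsum_mul_left, (hpi _).2.tsum_eq]
    have hball : (∑' α : S, Complex.exp (((α : ℝ) : ℂ) * w) * a' (α : ℝ)) ∈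
        Metric.eball (0 : ℂ) r := by
      rw [Metric.mem_eball, edist_zero_right]
      refine lt_trans ?_ hρr
      rw [← ofReal_norm, ← ENNReal.ofReal_coe_nnreal]
      exact (ENNReal.ofReal_lt_ofReal_iff hρ0').mpr (hglt w hw)
    have hs := hp.hasSum hball
    rw [hsplit w (hsub w hw), ← hs.tsum_eq]
    refine tsum_congr fun n => ?_
    rw [FormalMultilinearSeries.apply_eq_pow_smul_coeff, smul_eq_mul, mul_comm]
end
end

section
/- Limits of z-Hahn holomorphic functions (Theorem 5.5): Let R > 0, let V be a complex Banach space, and let f_k : Ω(R,∞) → V be a sequence of bounded functions, each holomorphic and represented on some Ω(δ_k,∞), δ_k > 0, by a normally convergent generalized power series f_k(w) = ∑_{α∈S_k} a_α^{(k)} e^{αw} with countable well-ordered support S_k ⊂ [0,∞). Assume: (1) f_k converges uniformly on Ω(R,∞) to a bounded function f; (2) there are constants C > 0 and ε̂ > 0 with ∑_{α∈S_k} ε̂^α < C for every k; (3) there is a set I ⊂ ℝ such that for every compact K ⊂ ℝ there is N with S_k ∩ K = I ∩ K for all k ≥ N. Then f is z-Hahn holomorphic on Ω(R,∞) with support contained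 in I: I is well-ordered, for each α ∈ I the limit a_α := lim_{k→∞} a_α^{(k)} exists in V, and there is δ > 0 such that (a_α)_{α∈I} converges normally on Ω(δ,∞) and f(w) = ∑_{α∈I} a_α e^{αw} for w ∈ Ω(δ,∞). -/
noncomputable section

section
open Filter Topology

lemma hh_mean_tendsto {V : Type*} [NormedAddCommGroup V] [NormedSpace ℂ V] [CompleteSpace V]
    {ι : Type*} [Countable ι] (c : ι → ℝ) (v : ι → V) (hv : Summable fun i => ‖v i‖)
    (i0 : ι) (h0 : c i0 = 0) (hne : ∀ i, i ≠ i0 → c i ≠ 0) :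
    Tendsto (fun T : ℝ => (2 * T)⁻¹ • ∫ y in (-T)..T,
      ∑' i, Complex.exp (((c i : ℝ) : ℂ) * Complex.I * (y : ℂ)) • v i) atTop (𝓝 (v i0)) := by
  classical
  have hnorm : ∀ i (y : ℝ), ‖Complex.exp (((c i : ℝ) : ℂ) * Complex.I * (y : ℂ))‖ = 1 := by
    intro i y
    rw [Complex.norm_exp]
    simp
  have hint : ∀ T : ℝ, HasSum (fun i => ∫ y in (-T)..T,
      Complex.exp (((c i : ℝ) : ℂ) * Complex.I * (y : ℂ)) • v i) (∫ y in (-T)..T,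
      ∑' i, Complex.exp (((c i : ℝ) : ℂ) * Complex.I * (y : ℂ)) • v i) := by
    intro T
    refine intervalIntegral.hasSum_integral_of_dominated_convergence (fun i _ => ‖v i‖)
      (fun i => ?_) (fun i => ?_) ?_ ?_ ?_
    · apply Continuous.aestronglyMeasurable
      fun_prop
    · exact Eventually.of_forall fun y _ => by rw [norm_smul, hnorm, one_mul]
    · exact Eventually.of_forall fun y _ => hv
    · exact intervalIntegrable_const
    · refine Eventually.of_forall fun y _ => Summable.hasSum ?_
      refine Summable.of_norm ?_
      simpa [norm_smul, hnorm] using hv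
  have key : Tendsto (fun T : ℝ => ∑' i, (2 * T)⁻¹ • ∫ y in (-T)..T,
      Complex.exp (((c i : ℝ) : ℂ) * Complex.I * (y : ℂ)) • v i) atTop
      (𝓝 (∑' i, if i = i0 then v i0 else 0)) := by
    refine tendsto_tsum_of_dominated_convergence hv ?_ ?_
    · intro i
      by_cases hi : i = i0
      · subst hi
        simp only [h0, if_true]
        refine tendsto_const_nhds.congr' ?_
        filter_upwards [eventually_gt_atTop (0:ℝ)] with T hT
        simp only [Complex.ofReal_zero, zero_mul, Complex.exp_zero, one_smul,
          intervalIntegral.integral_const, smul_smul]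
        rw [show (2 * T)⁻¹ * (T - -T) = 1 by field_simp; ring, one_smul]
      · simp only [hi, if_false]
        have hc : (((c i : ℝ) : ℂ) * Complex.I) ≠ 0 :=
          mul_ne_zero (by exact_mod_cast hne i hi) Complex.I_ne_zero
        have hlim : Tendsto (fun T : ℝ => (2 * T)⁻¹ * ((2 / |c i|) * ‖v i‖)) atTop (𝓝 0) := by
          have h2 : Tendsto (fun T : ℝ => (2 * T)⁻¹) atTop (𝓝 0) :=
            tendsto_inv_atTop_zero.comp (tendsto_id.const_mul_atTop (by norm_num))
          simpa using h2.mul_const ((2 / |c i|) * ‖v i‖)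
        refine squeeze_zero_norm' ?_ hlim
        filter_upwards [eventually_gt_atTop (0:ℝ)] with T hT
        rw [norm_smul, Real.norm_of_nonneg (by positivity)]
        gcongr
        rw [intervalIntegral.integral_smul_const, norm_smul, integral_exp_mul_complex hc]
        gcongr
        rw [norm_div]
        have : ‖((c i : ℝ) : ℂ) * Complex.I‖ = |c i| := by simp
        rw [this]
        gcongr
        refine (norm_sub_le _ _).trans ?_
        rw [hnorm, hnorm]; norm_num
    · filter_upwards [eventually_gt_atTop (0:ℝ)] with T hT i
      rw [norm_smul, Real.norm_of_nonneg (by positivity)]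
      have := intervalIntegral.norm_integral_le_of_norm_le_const (a := -T) (b := T) (C := ‖v i‖)
        (f := fun y : ℝ => Complex.exp (((c i : ℝ) : ℂ) * Complex.I * (y : ℂ)) • v i)
        (fun y _ => by rw [norm_smul, hnorm, one_mul])
      calc _ ≤ (2 * T)⁻¹ * (‖v i‖ * |T - -T|) := by gcongr
        _ = ‖v i‖ := by
          rw [show T - -T = 2 * T by ring, abs_of_pos (by positivity)]; field_simp
  rw [tsum_ite_eq] at key
  refine key.congr fun T => ?_
  rw [← (hint T).tsum_eq, ← tsum_const_smul'']

lemma hh_coeff_bound {V : Type*} [NormedAddCommGroup V] [NormedSpace ℂ V] [CompleteSpace V]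
    (L l M : ℝ) (hl : l ≤ L) (g : ℂ → V) (hg : DifferentiableOn ℂ g {w | w.re < L})
    (hM : ∀ w : ℂ, w.re < L → ‖g w‖ ≤ M)
    (S : Set ℝ) (hS : S.Countable) (hS0 : S ⊆ Set.Ici 0) (b : ℝ → V) (hb : ∀ α ∉ S, b α = 0)
    (hsum : Summable fun α : ℝ => ‖b α‖ * Real.exp (α * l))
    (hrep : ∀ w : ℂ, w.re < l → g w = ∑' α : ℝ, Complex.exp ((α : ℂ) * w) • b α)
    (β : ℝ) : ‖b β‖ * Real.exp (β * L) ≤ M := by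
  have hM0 : 0 ≤ M := (norm_nonneg _).trans (hM ((L - 1 : ℝ) : ℂ) (by simp))
  by_cases hβ : β ∈ S
  swap
  · simpa [hb β hβ] using hM0
  have hβ0 : 0 ≤ β := hS0 hβ
  have : Countable S := hS.to_subtype
  -- the bound at each x < L
  suffices H : ∀ x, l - 1 < x → x < L → ‖b β‖ * Real.exp (β * x) ≤ M by
    have hcont : Tendsto (fun x : ℝ => ‖b β‖ * Real.exp (β * x)) (𝓝[<] L)
        (𝓝 (‖b β‖ * Real.exp (β * L))) := by
      apply tendsto_nhdsWithin_of_tendsto_nhds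
      exact Continuous.tendsto (by fun_prop) L
    refine le_of_tendsto hcont ?_
    filter_upwards [self_mem_nhdsWithin, mem_nhdsWithin_of_mem_nhds (lt_mem_nhds (show l - 1 < L by linarith))]
      with x hx hx'
    exact H x hx' hx
  intro x hx0 hxL
  set x0 := l - 1 with hx0d
  set h : ℂ → V := fun w => Complex.exp (-(β : ℂ) * w) • g w with hh
  have hhd : DifferentiableOn ℂ h {w | w.re < L} := by
    apply DifferentiableOn.smul _ hg
    fun_prop
  have hhb : ∀ w : ℂ, w.re < L → ‖h w‖ ≤ Real.exp (-β * w.re) * M := by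
    intro w hw
    simp only [hh, norm_smul, Complex.norm_exp]
    have : (-(β:ℂ) * w).re = -β * w.re := by simp
    rw [this]
    gcongr
    exact hM w hw
  -- rectangle
  have hrect : ∀ T : ℝ, 0 < T → ‖∫ y in (-T)..T, h (x0 + y * Complex.I)‖ ≤
      (Real.exp (-β * x) * M) * (2 * T) + 2 * ((Real.exp (-β * x0) * M) * (x - x0)) := by
    intro T hT
    have hr := Complex.integral_boundary_rect_eq_zero_of_differentiableOn h
      (⟨x0, -T⟩ : ℂ) (⟨x, T⟩ : ℂ) (hhd.mono (by
        intro w hw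
        have := hw.1
        simp only [Set.mem_preimage, Set.uIcc_of_le hx0.le, Set.mem_Icc] at this
        exact lt_of_le_of_lt this.2 hxL))
    simp only at hr
    have hside : ∀ t : ℝ, ‖∫ s in x0..x, h (s + t * Complex.I)‖ ≤
        (Real.exp (-β * x0) * M) * (x - x0) := by
      intro t
      have := intervalIntegral.norm_integral_le_of_norm_le_const (a := x0) (b := x)
        (C := Real.exp (-β * x0) * M) (f := fun s : ℝ => h (s + t * Complex.I)) (by
          intro s hs
          rw [Set.uIoc_of_le hx0.le] at hs
          have hre : ((s : ℂ) + t * Complex.I).re = s := by simp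
          refine (hhb _ (by rw [hre]; linarith [hs.2])).trans ?_
          rw [hre]
          have : -β * s ≤ -β * x0 := by nlinarith [hs.1]
          gcongr)
      rwa [abs_of_pos (by linarith)] at this
    have htop : ‖∫ y in (-T)..T, h (x + y * Complex.I)‖ ≤ (Real.exp (-β * x) * M) * (2 * T) := by
      have := intervalIntegral.norm_integral_le_of_norm_le_const (a := -T) (b := T)
        (C := Real.exp (-β * x) * M) (f := fun y : ℝ => h (x + y * Complex.I)) (by
          intro s hs
          have hre : ((x : ℂ) + s * Complex.I).re = x := by simp
          refine (hhb _ (by rw [hre]; exact hxL)).trans ?_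
          rw [hre])
      rwa [show T - -T = 2 * T by ring, abs_of_pos (by positivity)] at this
    have e : Complex.I • (∫ y in (-T)..T, h (x0 + y * Complex.I)) =
        ((∫ s in x0..x, h (s + (-T : ℝ) * Complex.I)) - (∫ s in x0..x, h (s + T * Complex.I))) +
        Complex.I • (∫ y in (-T)..T, h (x + y * Complex.I)) := by
      rw [sub_eq_zero] at hr
      exact hr.symm
    have e2 : ‖∫ y in (-T)..T, h (x0 + y * Complex.I)‖ =
        ‖Complex.I • (∫ y in (-T)..T, h (x0 + y * Complex.I))‖ := by simp [norm_smul]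
    rw [e2, e]
    refine (norm_add_le _ _).trans ?_
    have := norm_sub_le (∫ s in x0..x, h (s + (-T : ℝ) * Complex.I)) (∫ s in x0..x, h (s + T * Complex.I))
    have h1 := hside (-T)
    have h2 := hside T
    rw [norm_smul, Complex.norm_I, one_mul]
    linarith
  -- the mean
  have hmean := hh_mean_tendsto (fun α : S => (α : ℝ) - β)
    (fun α : S => Complex.exp ((((α : ℝ) - β) * x0 : ℝ) : ℂ) • b α) (by
      have h1 : Summable fun α : ℝ => Real.exp (-β * x0) * (‖b α‖ * Real.exp (α * l)) :=
        hsum.mul_left _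
      refine Summable.of_nonneg_of_le (fun _ => norm_nonneg _) (fun α => ?_) (h1.subtype S)
      rw [norm_smul, Complex.norm_exp, Complex.ofReal_re]
      have hα : (0:ℝ) ≤ α := hS0 α.2
      have : Real.exp (((α : ℝ) - β) * x0) ≤ Real.exp (-β * x0) * Real.exp (α * l) := by
        rw [← Real.exp_add]
        apply Real.exp_le_exp.2
        simp only [hx0d]
        nlinarith
      calc _ ≤ Real.exp (-β * x0) * Real.exp (α * l) * ‖b α‖ := by gcongr
        _ = _ := by simp only [Function.comp]; ring) ⟨β, hβ⟩ (by simp) (by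
      intro i hi h0
      exact hi (Subtype.ext (by simpa [sub_eq_zero] using h0)))
  have hval : ∀ y : ℝ, (∑' α : S, Complex.exp ((((α : ℝ) - β : ℝ) : ℂ) * Complex.I * (y : ℂ)) •
      Complex.exp ((((α : ℝ) - β) * x0 : ℝ) : ℂ) • b α) = h (x0 + y * Complex.I) := by
    intro y
    simp only [hh]
    rw [hrep _ (by simp [hx0d]), ← tsum_const_smul'',
      ← tsum_subtype_eq_of_support_subset (s := S)]
    · refine tsum_congr fun α => ?_
      rw [smul_smul, smul_smul, ← Complex.exp_add, ← Complex.exp_add]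
      congr 2
      push_cast
      ring
    · intro α hα
      by_contra hn
      exact hα (by simp [hb α hn])
  simp only [hval] at hmean
  simp only [sub_self, zero_mul, Complex.ofReal_zero, Complex.exp_zero, one_smul] at hmean
  have hup : Tendsto (fun T : ℝ => Real.exp (-β * x) * M +
      (2 * T)⁻¹ * (2 * ((Real.exp (-β * x0) * M) * (x - x0)))) atTop
      (𝓝 (Real.exp (-β * x) * M)) := by
    have h2 : Tendsto (fun T : ℝ => (2 * T)⁻¹) atTop (𝓝 0) :=
      tendsto_inv_atTop_zero.comp (tendsto_id.const_mul_atTop (by norm_num))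
    simpa using (h2.mul_const (2 * ((Real.exp (-β * x0) * M) * (x - x0)))).const_add
      (Real.exp (-β * x) * M)
  have hfin : ‖b β‖ ≤ Real.exp (-β * x) * M := by
    refine le_of_tendsto_of_tendsto hmean.norm hup ?_
    filter_upwards [eventually_gt_atTop (0:ℝ)] with T hT
    rw [norm_smul, Real.norm_of_nonneg (by positivity)]
    calc _ ≤ (2 * T)⁻¹ * ((Real.exp (-β * x) * M) * (2 * T) +
          2 * ((Real.exp (-β * x0) * M) * (x - x0))) := by
            gcongr; exact hrect T hT
      _ = _ := by field_simp
  calc _ ≤ Real.exp (-β * x) * M * Real.exp (β * x) := by gcongr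
    _ = M * Real.exp (-β * x + β * x) := by rw [Real.exp_add]; ring
    _ = M := by simp

lemma hh_identity {V : Type*} [NormedAddCommGroup V] [NormedSpace ℂ V] [CompleteSpace V]
    (L l m : ℝ) (hm : m ≤ L) (g : ℂ → V) (hg : DifferentiableOn ℂ g {w | w.re < L})
    (b : ℝ → V) (hb : ∀ α, α < 0 → b α = 0)
    (hsum : Summable fun α : ℝ => ‖b α‖ * Real.exp (α * m))
    (hrep : ∀ w : ℂ, w.re < l → g w = ∑' α : ℝ, Complex.exp ((α : ℂ) * w) • b α)
    (w : ℂ) (hw : w.re < m) : g w = ∑' α : ℝ, Complex.exp ((α : ℂ) * w) • b α := by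
  have hopen : ∀ r : ℝ, IsOpen {w : ℂ | w.re < r} := fun r =>
    isOpen_lt Complex.continuous_re continuous_const
  have hd : DifferentiableOn ℂ (fun w : ℂ => ∑' α : ℝ, Complex.exp ((α : ℂ) * w) • b α)
      {w : ℂ | w.re < m} := by
    refine Complex.differentiableOn_tsum_of_summable_norm hsum (fun α => ?_) (hopen m) ?_
    · apply Differentiable.differentiableOn
      fun_prop
    · intro α z hz
      rcases lt_or_ge α 0 with h | h
      · simp [hb α h]
      · rw [norm_smul, Complex.norm_exp, mul_comm]
        have hz' : z.re < m := hz
        have : ((α : ℂ) * z).re ≤ α * m := by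
          simp only [Complex.re_ofReal_mul]
          nlinarith
        gcongr
  have hd2 : DifferentiableOn ℂ g {w : ℂ | w.re < m} :=
    hg.mono fun z hz => lt_of_lt_of_le hz hm
  have hz0 : ((min l m - 1 : ℝ) : ℂ).re < min l m := by
    rw [Complex.ofReal_re]; linarith
  refine (hd2.analyticOnNhd (hopen m)).eqOn_of_preconnected_of_eventuallyEq
    (hd.analyticOnNhd (hopen m)) (convex_halfSpace_re_lt m).isPreconnected
    (z₀ := ((min l m - 1 : ℝ) : ℂ)) (lt_of_lt_of_le hz0 (min_le_right _ _)) ?_ hw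
  filter_upwards [(hopen (min l m)).mem_nhds hz0] with z hz
  exact hrep z (lt_of_lt_of_le hz (min_le_left _ _))

end

/-- Limits of z-Hahn holomorphic functions (Theorem 5.5). -/
theorem limit_of_zHahn_holomorphic
    {V : Type*} [NormedAddCommGroup V] [NormedSpace ℂ V] [CompleteSpace V]
    (R : ℝ) (hR : 0 < R)
    (f : ℕ → ℂ → V)
    (hhol : ∀ k, DifferentiableOn ℂ (f k) (Omega R ⊤))
    (hbdd : ∀ k, ∃ M : ℝ, ∀ w ∈ Omega R ⊤, ‖f k w‖ ≤ M)
    (δseq : ℕ → ℝ) (hδseq : ∀ k, δseq k ∈ Set.Ioc 0 R)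
    (S : ℕ → Set ℝ)
    (hSc : ∀ k, (S k).Countable) (hSwf : ∀ k, (S k).IsWF) (hS0 : ∀ k, S k ⊆ Set.Ici 0)
    (a : ℕ → ℝ → V) (hsupp : ∀ k, ∀ α ∉ S k, a k α = 0)
    (hsum : ∀ k, Summable fun α : S k => ‖a k (α : ℝ)‖ * δseq k ^ (α : ℝ))
    (hfk : ∀ k, ∀ w ∈ Omega (δseq k) ⊤,
      f k w = ∑' α : S k, Complex.exp (((α : ℝ) : ℂ) * w) • a k (α : ℝ))
    -- (1) uniform convergence to a bounded function f∞
    (flim : ℂ → V)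
    (huniform : TendstoUniformlyOn f flim Filter.atTop (Omega R ⊤))
    (hlimbdd : ∃ M : ℝ, ∀ w ∈ Omega R ⊤, ‖flim w‖ ≤ M)
    -- (2) uniform bound  ∑_{α ∈ S_k} ε̂^α < C
    (C εhat : ℝ) (hC : 0 < C) (hεhat : 0 < εhat)
    (hunif : ∀ k, (∑' α : S k, ENNReal.ofReal (εhat ^ (α : ℝ))) < ENNReal.ofReal C)
    -- (3) supports converge to I
    (I : Set ℝ)
    (hconv : ∀ K : Set ℝ, IsCompact K → ∃ N : ℕ, ∀ k ≥ N, S k ∩ K = I ∩ K) :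
    I.Countable ∧ I.IsWF ∧ I ⊆ Set.Ici 0 ∧
    ∃ aL : ℝ → V,
      (∀ α ∈ I, Filter.Tendsto (fun k => a k α) Filter.atTop (nhds (aL α))) ∧
      ∃ δ : ℝ, 0 < δ ∧ δ ≤ R ∧
        (Summable fun α : I => ‖aL (α : ℝ)‖ * δ ^ (α : ℝ)) ∧
        ∀ w ∈ Omega δ ⊤,
          flim w = ∑' α : I, Complex.exp (((α : ℝ) : ℂ) * w) • aL (α : ℝ) := by
  classical
  have memO : ∀ (r : ℝ) (w : ℂ), w ∈ Omega r ⊤ ↔ w.re < Real.log r := by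
    intro r w
    simp [Omega]
  have hrp : ∀ (x : ℝ), 0 < x → ∀ α : ℝ, x ^ α = Real.exp (α * Real.log x) := by
    intro x hx α
    rw [Real.rpow_def_of_pos hx, mul_comm]
  have hOR : Omega R ⊤ = {w : ℂ | w.re < Real.log R} := by
    ext w; exact memO R w
  -- properties of I
  have hIS : ∀ α ∈ I, ∃ N : ℕ, ∀ k ≥ N, α ∈ S k := by
    intro α hα
    obtain ⟨N, hN⟩ := hconv {α} isCompact_singleton
    refine ⟨N, fun k hk => ?_⟩
    have : α ∈ I ∩ {α} := ⟨hα, rfl⟩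
    rw [← hN k hk] at this
    exact this.1
  have hI0 : I ⊆ Set.Ici 0 := by
    intro α hα
    obtain ⟨N, hN⟩ := hIS α hα
    exact hS0 N (hN N le_rfl)
  have hIc : I.Countable := by
    have : I ⊆ ⋃ k, S k := by
      intro α hα
      obtain ⟨N, hN⟩ := hIS α hα
      exact Set.mem_iUnion.2 ⟨N, hN N le_rfl⟩
    exact (Set.countable_iUnion hSc).mono this
  have hIwf : I.IsWF := by
    rw [Set.isWF_iff_no_descending_seq]
    intro s hs hmem
    obtain ⟨N, hN⟩ := hconv (Set.Icc 0 (s 0)) isCompact_Icc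
    refine Set.isWF_iff_no_descending_seq.1 (hSwf N) s hs fun n => ?_
    have : s n ∈ I ∩ Set.Icc 0 (s 0) := ⟨hmem n, hI0 (hmem n), hs.antitone (Nat.zero_le n)⟩
    rw [← hN N le_rfl] at this
    exact this.1
  refine ⟨hIc, hIwf, hI0, ?_⟩
  -- series over ℝ
  have hA : ∀ k, Summable fun α : ℝ => ‖a k α‖ * Real.exp (α * Real.log (δseq k)) := by
    intro k
    have h := hsum k
    have hd := (hδseq k).1
    simp only [hrp _ hd] at h
    have h2 := (summable_subtype_iff_indicator (s := S k)
      (f := fun α : ℝ => ‖a k α‖ * Real.exp (α * Real.log (δseq k)))).1 h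
    rwa [Set.indicator_eq_self.2] at h2
    intro α hα
    by_contra hn
    exact hα (by simp [hsupp k α hn])
  have hsub : ∀ (T : Set ℝ) (b : ℝ → V), (∀ α ∉ T, b α = 0) → ∀ w : ℂ,
      ∑' α : T, Complex.exp (((α : ℝ) : ℂ) * w) • b (α : ℝ) =
        ∑' α : ℝ, Complex.exp ((α : ℂ) * w) • b α := by
    intro T b hb w
    refine tsum_subtype_eq_of_support_subset (s := T)
      (f := fun α : ℝ => Complex.exp ((α : ℂ) * w) • b α) ?_
    intro α hα
    by_contra hn
    exact hα (by simp [hb α hn])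
  have hB : ∀ k (w : ℂ), w.re < Real.log (δseq k) →
      f k w = ∑' α : ℝ, Complex.exp ((α : ℂ) * w) • a k α := by
    intro k w hw
    rw [hfk k w ((memO _ _).2 hw), hsub _ _ (hsupp k)]
  have hneg : ∀ k α, α < 0 → a k α = 0 := fun k α hα =>
    hsupp k α fun h => absurd (hS0 k h) (not_le.2 hα)
  have hlog : ∀ k, Real.log (δseq k) ≤ Real.log R := fun k =>
    Real.log_le_log (hδseq k).1 (hδseq k).2
  have hmono : ∀ k (l : ℝ), l ≤ Real.log (δseq k) →
      Summable fun α : ℝ => ‖a k α‖ * Real.exp (α * l) := by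
    intro k l hl
    refine Summable.of_nonneg_of_le (fun _ => by positivity) (fun α => ?_) (hA k)
    rcases lt_or_ge α 0 with h | h
    · simp [hneg k α h]
    · gcongr
  have hsummV : ∀ (b : ℝ → V) (l : ℝ), (∀ α, α < 0 → b α = 0) →
      (Summable fun α : ℝ => ‖b α‖ * Real.exp (α * l)) → ∀ w : ℂ, w.re ≤ l →
      Summable fun α : ℝ => Complex.exp ((α : ℂ) * w) • b α := by
    intro b l hb hs w hw
    refine Summable.of_norm_bounded hs fun α => ?_
    rcases lt_or_ge α 0 with h | h
    · simp [hb α h]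
    · rw [norm_smul, Complex.norm_exp, mul_comm, Complex.re_ofReal_mul]
      gcongr
  have hdiff : ∀ (k j : ℕ) (M : ℝ), (∀ w ∈ Omega R ⊤, ‖f k w - f j w‖ ≤ M) →
      ∀ β, ‖a k β - a j β‖ * Real.exp (β * Real.log R) ≤ M := by
    intro k j M hM β
    set l := min (Real.log (δseq k)) (Real.log (δseq j)) with hl
    have hk := hmono k l (min_le_left _ _)
    have hj := hmono j l (min_le_right _ _)
    refine hh_coeff_bound (Real.log R) l M ((min_le_left _ _).trans (hlog k))
      (fun w => f k w - f j w) ?_ (fun w hw => hM w ((memO _ _).2 hw)) (S k ∪ S j)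
      ((hSc k).union (hSc j)) (Set.union_subset (hS0 k) (hS0 j)) (fun α => a k α - a j α)
      ?_ ?_ ?_ β
    · rw [← hOR]; exact (hhol k).sub (hhol j)
    · intro α hα
      simp only [Set.mem_union, not_or] at hα
      simp [hsupp k α hα.1, hsupp j α hα.2]
    · refine Summable.of_nonneg_of_le (fun _ => by positivity) (fun α => ?_) (hk.add hj)
      rw [← add_mul]
      gcongr
      exact norm_sub_le _ _
    · intro w hw
      have s1 := hsummV (a k) l (hneg k) hk w hw.le
      have s2 := hsummV (a j) l (hneg j) hj w hw.le
      rw [hB k w (hw.trans_le (min_le_left _ _)), hB j w (hw.trans_le (min_le_right _ _)),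
        ← s1.tsum_sub s2]
      exact tsum_congr fun α => (smul_sub _ _ _).symm
  have hone : ∀ (k : ℕ) (M : ℝ), (∀ w ∈ Omega R ⊤, ‖f k w‖ ≤ M) →
      ∀ β, ‖a k β‖ * Real.exp (β * Real.log R) ≤ M := by
    intro k M hM β
    refine hh_coeff_bound (Real.log R) (Real.log (δseq k)) M (hlog k)
      (f k) ?_ (fun w hw => hM w ((memO _ _).2 hw)) (S k)
      (hSc k) (hS0 k) (a k) (hsupp k) (hA k) (hB k) β
    rw [← hOR]; exact hhol k
  have hcau : ∀ ε > 0, ∃ N : ℕ, ∀ k ≥ N, (∀ j ≥ N, ∀ β,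
      ‖a k β - a j β‖ * Real.exp (β * Real.log R) ≤ ε) ∧ ∀ w ∈ Omega R ⊤, ‖flim w - f k w‖ ≤ ε := by
    intro ε hε
    obtain ⟨N, hN⟩ := Filter.eventually_atTop.1
      ((Metric.tendstoUniformlyOn_iff.1 huniform) (ε / 2) (by positivity))
    refine ⟨N, fun k hk => ⟨fun j hj => ?_, fun w hw => ?_⟩⟩
    · refine hdiff k j ε fun w hw => ?_
      have h1 := hN k hk w hw
      have h2 := hN j hj w hw
      have h3 := dist_triangle_left (f k w) (f j w) (flim w)
      rw [← dist_eq_norm]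
      linarith
    · have h1 := hN k hk w hw
      rw [← dist_eq_norm]
      linarith
  have hlimex : ∀ α, ∃ v, Filter.Tendsto (fun k => a k α) Filter.atTop (nhds v) := by
    intro α
    apply cauchySeq_tendsto_of_complete
    rw [Metric.cauchySeq_iff]
    intro ε hε
    obtain ⟨N, hN⟩ := hcau (ε / 2 * Real.exp (α * Real.log R)) (by positivity)
    refine ⟨N, fun m hm n hn => ?_⟩
    have := (hN m hm).1 n hn α
    have := le_of_mul_le_mul_right this (Real.exp_pos _)
    rw [dist_eq_norm]
    linarith
  choose aL haL using hlimex
  have hLk : ∀ ε > 0, ∃ N : ℕ, ∀ k ≥ N, (∀ β,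
      ‖a k β - aL β‖ * Real.exp (β * Real.log R) ≤ ε) ∧ ∀ w ∈ Omega R ⊤, ‖flim w - f k w‖ ≤ ε := by
    intro ε hε
    obtain ⟨N, hN⟩ := hcau ε hε
    refine ⟨N, fun k hk => ⟨fun β => ?_, (hN k hk).2⟩⟩
    refine le_of_tendsto (((haL β).const_sub (a k β)).norm.mul_const _) ?_
    filter_upwards [Filter.eventually_ge_atTop N] with j hj
    exact (hN k hk).1 j hj β
  have hLsupp : ∀ α ∉ I, aL α = 0 := by
    intro α hα
    obtain ⟨N, hN⟩ := hconv {α} isCompact_singleton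
    refine tendsto_nhds_unique (haL α) (tendsto_const_nhds.congr' ?_)
    filter_upwards [Filter.eventually_ge_atTop N] with k hk
    refine (hsupp k α fun h => hα ?_).symm
    have : α ∈ S k ∩ {α} := ⟨h, rfl⟩
    rw [hN k hk] at this
    exact this.1
  have hLneg : ∀ α, α < 0 → aL α = 0 := fun α hα =>
    hLsupp α fun h => absurd (hI0 h) (not_le.2 hα)
  refine ⟨aL, fun α _ => haL α, ?_⟩
  -- the radius
  set q : ℝ := min 0 (Real.log εhat) with hq
  have hE : ∀ k (F : Finset ℝ), ∑ α ∈ F, (S k).indicator (fun α => Real.exp (α * q)) α ≤ C := by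
    intro k F
    have h1 := hunif k
    rw [tsum_subtype (S k) (fun α : ℝ => ENNReal.ofReal (εhat ^ α))] at h1
    have h2 := (ENNReal.sum_le_tsum (f := (S k).indicator
      fun α : ℝ => ENNReal.ofReal (εhat ^ α)) F).trans h1.le
    have h3 : ENNReal.ofReal (∑ α ∈ F, (S k).indicator (fun α => Real.exp (α * q)) α) ≤
        ENNReal.ofReal C := by
      rw [ENNReal.ofReal_sum_of_nonneg
        (fun α _ => Set.indicator_nonneg (fun _ _ => (Real.exp_pos _).le) α)]
      refine le_trans (Finset.sum_le_sum fun α _ => ?_) h2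
      by_cases hα : α ∈ S k
      · simp only [Set.indicator_of_mem hα, hrp _ hεhat]
        have h0 : 0 ≤ α := hS0 k hα
        apply ENNReal.ofReal_le_ofReal
        have : q ≤ Real.log εhat := min_le_right _ _
        gcongr
      · simp [hα]
    exact (ENNReal.ofReal_le_ofReal_iff hC.le).1 h3
  have hEI : ∀ (F : Finset ℝ), ∑ α ∈ F, I.indicator (fun α => Real.exp (α * q)) α ≤ C := by
    intro F
    obtain ⟨N, hN⟩ := hconv F F.finite_toSet.isCompact
    refine le_trans (le_of_eq (Finset.sum_congr rfl fun α hα => ?_)) (hE N F)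
    have : α ∈ S N ↔ α ∈ I := by
      have h := Set.ext_iff.1 (hN N le_rfl) α
      simpa [hα] using h
    by_cases hI : α ∈ I
    · rw [Set.indicator_of_mem hI, Set.indicator_of_mem (this.2 hI)]
    · rw [Set.indicator_of_notMem hI, Set.indicator_of_notMem (fun h => hI (this.1 h))]
  have hnn : ∀ T : Set ℝ, 0 ≤ T.indicator (fun α => Real.exp (α * q)) := fun T α =>
    Set.indicator_nonneg (fun _ _ => (Real.exp_pos _).le) α
  have hbs : ∀ (T : Set ℝ) (b : ℝ → V) (M : ℝ), (∀ α ∉ T, b α = 0) →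
      (∀ β, ‖b β‖ * Real.exp (β * Real.log R) ≤ M) →
      ∀ α, ‖b α‖ * Real.exp (α * (Real.log R + q)) ≤
        M * T.indicator (fun α => Real.exp (α * q)) α := by
    intro T b M hb hM α
    by_cases hα : α ∈ T
    · rw [Set.indicator_of_mem hα, mul_add, Real.exp_add, ← mul_assoc]
      gcongr
      exact hM α
    · simp [hb α hα, hα]
  have hsummT : ∀ (T : Set ℝ) (b : ℝ → V) (M : ℝ),
      (∀ (F : Finset ℝ), ∑ α ∈ F, T.indicator (fun α => Real.exp (α * q)) α ≤ C) →
      (∀ α ∉ T, b α = 0) →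
      (∀ β, ‖b β‖ * Real.exp (β * Real.log R) ≤ M) →
      Summable fun α : ℝ => ‖b α‖ * Real.exp (α * (Real.log R + q)) := by
    intro T b M hT hb hM
    exact Summable.of_nonneg_of_le (fun _ => by positivity) (hbs T b M hb hM)
      ((summable_of_sum_le (hnn T) hT).mul_left M)
  have hLbound : ∃ M, ∀ β, ‖aL β‖ * Real.exp (β * Real.log R) ≤ M := by
    obtain ⟨N, hN⟩ := hLk 1 one_pos
    obtain ⟨M, hM⟩ := hbdd N
    refine ⟨M + 1, fun β => ?_⟩
    have h1 := hone N M hM β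
    have h2 := (hN N le_rfl).1 β
    have h3 : ‖aL β‖ ≤ ‖a N β‖ + ‖a N β - aL β‖ := by
      have := norm_sub_le (a N β) (a N β - aL β)
      rwa [sub_sub_cancel] at this
    calc _ ≤ (‖a N β‖ + ‖a N β - aL β‖) * Real.exp (β * Real.log R) := by gcongr
      _ ≤ M + 1 := by rw [add_mul]; linarith
  obtain ⟨ML, hML⟩ := hLbound
  have hLsum := hsummT I aL ML hEI hLsupp hML
  have hq0 : q ≤ 0 := min_le_left _ _
  refine ⟨Real.exp (Real.log R + q), Real.exp_pos _, ?_, ?_, ?_⟩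
  · calc _ ≤ Real.exp (Real.log R) := by gcongr; linarith
      _ = R := Real.exp_log hR
  · simp only [hrp _ (Real.exp_pos (Real.log R + q)), Real.log_exp]
    exact hLsum.subtype I
  · intro w hw
    rw [memO, Real.log_exp] at hw
    have hwR : w ∈ Omega R ⊤ := (memO _ _).2 (by linarith)
    rw [hsub I aL hLsupp, ← sub_eq_zero, ← norm_le_zero_iff]
    refine le_of_forall_pos_le_add fun ε hε => ?_
    rw [zero_add]
    obtain ⟨N, hN⟩ := hLk (ε / (1 + 2 * C)) (by positivity)
    obtain ⟨hN1, hN2⟩ := hN N le_rfl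
    set η := ε / (1 + 2 * C) with hη
    have hη0 : 0 ≤ η := by positivity
    obtain ⟨M, hM⟩ := hbdd N
    have hks := hsummT (S N) (a N) M (hE N) (hsupp N) (hone N M hM)
    have hrep := hh_identity (Real.log R) (Real.log (δseq N)) (Real.log R + q) (by linarith)
      (f N) (by rw [← hOR]; exact hhol N) (a N) (hneg N) hks (hB N) w hw
    have s1 := hsummV (a N) _ (hneg N) hks w hw.le
    have s2 := hsummV aL _ hLneg hLsum w hw.le
    have t1 := summable_of_sum_le (hnn (S N)) (hE N)
    have t2 := summable_of_sum_le (hnn I) hEI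
    have t1' := Real.tsum_le_of_sum_le (hnn (S N)) (hE N)
    have t2' := Real.tsum_le_of_sum_le (hnn I) hEI
    have key : ‖f N w - ∑' α : ℝ, Complex.exp ((α : ℂ) * w) • aL α‖ ≤ η * (C + C) := by
      rw [hrep, ← s1.tsum_sub s2]
      refine (tsum_of_norm_bounded ((t1.hasSum.add t2.hasSum).mul_left η) fun α => ?_).trans
        (by gcongr)
      rw [← smul_sub, norm_smul, Complex.norm_exp, Complex.re_ofReal_mul]
      have hU := hbs (S N ∪ I) (fun α => a N α - aL α) η (by
        intro β hβ
        simp only [Set.mem_union, not_or] at hβ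
        simp [hsupp N β hβ.1, hLsupp β hβ.2]) hN1 α
      have hle : (S N ∪ I).indicator (fun α => Real.exp (α * q)) α ≤
          (S N).indicator (fun α => Real.exp (α * q)) α +
          I.indicator (fun α => Real.exp (α * q)) α := by
        have p1 := hnn (S N) α
        have p2 := hnn I α
        simp only [Pi.zero_apply] at p1 p2
        by_cases h1 : α ∈ S N
        · rw [Set.indicator_of_mem (Set.mem_union_left I h1), Set.indicator_of_mem h1]
          linarith
        · by_cases h2 : α ∈ I
          · rw [Set.indicator_of_mem (Set.mem_union_right (S N) h2), Set.indicator_of_mem h2]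
            linarith
          · rw [Set.indicator_of_notMem (by simp [h1, h2])]
            linarith
      refine le_trans ?_ (hU.trans (by gcongr))
      rcases lt_or_ge α 0 with h | h
      · simp [hneg N α h, hLneg α h]
      · rw [mul_comm]
        gcongr
    have htri := norm_add_le (flim w - f N w)
      (f N w - ∑' α : ℝ, Complex.exp ((α : ℂ) * w) • aL α)
    rw [sub_add_sub_cancel] at htri
    have hfw := hN2 w hwR
    have : η * (1 + 2 * C) = ε := by rw [hη]; field_simp
    nlinarith
end
end

section
/- Hahn holomorphic Fredholm theorem (Theorem 4.1, z-case): Let H be a complex Hilbert space, δ > 0, σ ∈ (0,∞], and let f : Ω(δ,σ) → K(H) (compact operators on H) be z-Hahn holomorphic, represented on Ω(δ',σ) by a normally convergent series f(w) = ∑_{α∈S} A_α e^{αw} with countable well-ordered S ⊂ [0,∞), and with limit value f(0) = A_0. Then exactly one of the following holds. Either Id − f(w) is not invertible in B(H) for any w ∈ Ω(δ,σ) and Id − f(0) is not invertible; or the set D := {w ∈ Ω(δ,σ) : Id − f(w) is not invertible} is discrete in Ω(δ,σ), there is δ'' > 0 with D ∩ Ω(δ'',σ) = ∅, and the inverse is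 z-Hahn meromorphic at 0: there exist μ ≥ 0 in the additive subgroup of ℝ generated by S, a countable well-ordered set S' ⊂ [0,∞), and operators (B_γ)_{γ∈S'} in B(H) with ∑_{γ∈S'} ‖B_γ‖ (δ'')^γ < ∞ such that (Id − f(w))^{-1} = e^{−μw} ∑_{γ∈S'} B_γ e^{γw} for all w ∈ Ω(δ'',σ); moreover every coefficient B_γ with γ < μ (i.e. every coefficient of e^{γ'w} with γ' < 0 in the expansion of the inverse) is a finite-rank operator, and at every point of D the coefficients of the principal part of the Laurent expansion of (Id − f(w))^{-1} are finite-rank operators. -/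
noncomputable section

/-- A continuous linear operator has finite rank. -/
def FiniteRank {H : Type*} [NormedAddCommGroup H] [InnerProductSpace ℂ H]
    (T : H →L[ℂ] H) : Prop :=
  FiniteDimensional ℂ (LinearMap.range T.toLinearMap)

/-- Admissible exponent monoids. -/
def GoodG (Γ : AddSubmonoid ℝ) : Prop := (Γ : Set ℝ).IsPWO ∧ ∀ γ ∈ Γ, 0 ≤ γ

/-- `a` is a family of coefficients, supported in `Γ`, representing `f` on `re w < log r`. -/
structure HC {X : Type*} [NormedAddCommGroup X] [NormedSpace ℂ X]
    (Γ : AddSubmonoid ℝ) (r : ℝ) (a : ℝ → X) (f : ℂ → X) : Prop where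
  supp : ∀ γ, γ ∉ Γ → a γ = 0
  summ : Summable fun γ : ℝ => ‖a γ‖ * r ^ γ
  hs : ∀ w : ℂ, w.re < Real.log r → HasSum (fun γ : ℝ => Complex.exp ((γ : ℂ) * w) • a γ) (f w)

theorem norm_exp_le_s6 {r : ℝ} (hr : 0 < r) {γ : ℝ} (hγ : 0 ≤ γ) {w : ℂ} (hw : w.re < Real.log r) :
    ‖Complex.exp ((γ : ℂ) * w)‖ ≤ r ^ γ := by
  rw [Complex.norm_exp, Real.rpow_def_of_pos hr]
  simp only [Complex.mul_re, Complex.ofReal_re, Complex.ofReal_im, zero_mul, sub_zero]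
  apply Real.exp_le_exp.2
  nlinarith

section
variable {X Y Z : Type*} [NormedAddCommGroup X] [NormedSpace ℂ X]
  [NormedAddCommGroup Y] [NormedSpace ℂ Y] [NormedAddCommGroup Z] [NormedSpace ℂ Z]
  {Γ : AddSubmonoid ℝ} {r : ℝ}

theorem norm_term_le (hΓ : GoodG Γ) (hr : 0 < r) {a : ℝ → X} (ha : ∀ γ, γ ∉ Γ → a γ = 0)
    {w : ℂ} (hw : w.re < Real.log r) (γ : ℝ) :
    ‖Complex.exp ((γ : ℂ) * w) • a γ‖ ≤ ‖a γ‖ * r ^ γ := by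
  by_cases h : γ ∈ Γ
  · rw [norm_smul, mul_comm]
    exact mul_le_mul_of_nonneg_left (norm_exp_le_s6 hr (hΓ.2 γ h) hw) (norm_nonneg _)
  · simp [ha γ h]

theorem HC.summable (hΓ : GoodG Γ) (hr : 0 < r) {a : ℝ → X} {f : ℂ → X} (h : HC Γ r a f)
    {w : ℂ} (hw : w.re < Real.log r) :
    Summable fun γ : ℝ => ‖Complex.exp ((γ : ℂ) * w) • a γ‖ :=
  Summable.of_nonneg_of_le (fun _ => norm_nonneg _) (norm_term_le hΓ hr h.supp hw) h.summ

theorem HC.of_tsum [CompleteSpace X] (hΓ : GoodG Γ) (hr : 0 < r) {a : ℝ → X}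
    (ha : ∀ γ, γ ∉ Γ → a γ = 0) (hs : Summable fun γ : ℝ => ‖a γ‖ * r ^ γ) :
    HC Γ r a (fun w => ∑' γ : ℝ, Complex.exp ((γ : ℂ) * w) • a γ) := by
  refine ⟨ha, hs, fun w hw => ?_⟩
  exact (Summable.of_norm (Summable.of_nonneg_of_le (fun _ => norm_nonneg _)
    (norm_term_le hΓ hr ha hw) hs)).hasSum

theorem HC.congr {a : ℝ → X} {f g : ℂ → X} (h : HC Γ r a f)
    (hfg : ∀ w : ℂ, w.re < Real.log r → f w = g w) : HC Γ r a g :=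
  ⟨h.supp, h.summ, fun w hw => hfg w hw ▸ h.hs w hw⟩

theorem HC.add (hr : 0 < r) {a b : ℝ → X} {f g : ℂ → X} (h : HC Γ r a f) (h' : HC Γ r b g) :
    HC Γ r (fun γ => a γ + b γ) (fun w => f w + g w) := by
  refine ⟨fun γ hγ => by simp [h.supp γ hγ, h'.supp γ hγ], ?_, fun w hw => ?_⟩
  · refine Summable.of_nonneg_of_le (fun γ => by positivity) (fun γ => ?_) (h.summ.add h'.summ)
    rw [← add_mul]
    exact mul_le_mul_of_nonneg_right (norm_add_le _ _) (by positivity)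
  · simpa [smul_add] using (h.hs w hw).add (h'.hs w hw)

theorem HC.map (hr : 0 < r) {a : ℝ → X} {f : ℂ → X} (h : HC Γ r a f) (L : X →L[ℂ] Y) :
    HC Γ r (fun γ => L (a γ)) (fun w => L (f w)) := by
  refine ⟨fun γ hγ => by simp [h.supp γ hγ], ?_, fun w hw => ?_⟩
  · refine Summable.of_nonneg_of_le (fun γ => by positivity) (fun γ => ?_) (h.summ.mul_left ‖L‖)
    rw [← mul_assoc]
    exact mul_le_mul_of_nonneg_right (L.le_opNorm _) (by positivity)
  · simpa using L.hasSum (h.hs w hw)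

theorem HC.neg {a : ℝ → X} {f : ℂ → X} (h : HC Γ r a f) :
    HC Γ r (fun γ => - a γ) (fun w => - f w) := by
  refine ⟨fun γ hγ => by simp [h.supp γ hγ], ?_, fun w hw => ?_⟩
  · simpa using h.summ
  · simpa using (h.hs w hw).neg

theorem HC.const (x : X) :
    HC Γ r (fun γ => if γ = 0 then x else 0) (fun _ => x) := by
  refine ⟨fun γ hγ => ?_, ?_, fun w hw => ?_⟩
  · have : γ ≠ 0 := fun h => hγ (h ▸ Γ.zero_mem)
    simp [this]
  · apply summable_of_ne_finset_zero (s := {0})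
    intro b hb
    simp at hb; simp [hb]
  · convert hasSum_ite_eq (0 : ℝ) x using 2 with γ
    by_cases h : γ = 0 <;> simp [h]

theorem HC.const_tsum (hr : 0 < r) (x : X) :
    ∑' γ : ℝ, ‖(if γ = 0 then x else 0 : X)‖ * r ^ γ = ‖x‖ := by
  rw [tsum_eq_single (0 : ℝ)]
  · simp
  · intro b hb; simp [hb]

theorem HC.mono {Γ' : AddSubmonoid ℝ} {r' : ℝ} (hΓ : GoodG Γ) (hΓΓ : Γ ≤ Γ') (hr' : 0 < r')
    (hrr : r' ≤ r) {a : ℝ → X} {f : ℂ → X} (h : HC Γ r a f) : HC Γ' r' a f := by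
  refine ⟨fun γ hγ => h.supp γ (fun h' => hγ (hΓΓ h')), ?_, fun w hw => h.hs w
    (hw.trans_le (Real.log_le_log hr' hrr))⟩
  refine Summable.of_nonneg_of_le (fun γ => by positivity) (fun γ => ?_) h.summ
  by_cases h1 : γ ∈ Γ
  · exact mul_le_mul_of_nonneg_left (Real.rpow_le_rpow hr'.le hrr (hΓ.2 γ h1)) (norm_nonneg _)
  · simp [h.supp γ h1]

theorem HC.sum (hr : 0 < r) {ι : Type*} (s : Finset ι) (p : AddSubmonoid X) {f : ι → ℂ → X}
    (h : ∀ i ∈ s, ∃ a, HC Γ r a (f i) ∧ ∀ γ, a γ ∈ p) :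
    ∃ a, HC Γ r a (fun w => ∑ i ∈ s, f i w) ∧ ∀ γ, a γ ∈ p := by
  classical
  induction s using Finset.induction_on with
  | empty =>
    refine ⟨_, by simpa using! HC.const (0 : X), fun γ => ?_⟩
    simp [p.zero_mem]
  | insert i s hi ih =>
    obtain ⟨a, ha, hap⟩ := h i (by simp)
    obtain ⟨b, hb, hbp⟩ := ih (fun j hj => h j (by simp [hj]))
    refine ⟨_, by simpa [hi] using! ha.add hr hb, fun γ => p.add_mem (hap γ) (hbp γ)⟩

/-- the shear `(γ, i) ↦ (i, γ - i)` -/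
def shear : ℝ × ℝ ≃ ℝ × ℝ where
  toFun q := (q.2, q.1 - q.2)
  invFun q := (q.1 + q.2, q.1)
  left_inv q := by simp
  right_inv q := by simp

theorem HC.mul [CompleteSpace Z] (hΓ : GoodG Γ) (hr : 0 < r) {a : ℝ → X} {b : ℝ → Y}
    {f : ℂ → X} {g : ℂ → Y} (hf : HC Γ r a f) (hg : HC Γ r b g)
    (L : X →L[ℂ] Y →L[ℂ] Z) (hL : ∀ x y, ‖L x y‖ ≤ ‖x‖ * ‖y‖)
    (p : AddSubmonoid Z) (hp : ∀ i j, L (a i) (b j) ∈ p) :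
    ∃ c, HC Γ r c (fun w => L (f w) (g w)) ∧ (∀ γ, c γ ∈ p) ∧
      ∑' γ : ℝ, ‖c γ‖ * r ^ γ ≤ (∑' γ : ℝ, ‖a γ‖ * r ^ γ) * (∑' γ : ℝ, ‖b γ‖ * r ^ γ) := by
  -- finiteness of fibres
  have hfin : ∀ γ : ℝ, {i : ℝ | i ∈ Γ ∧ γ - i ∈ Γ}.Finite := by
    intro γ
    have := (Set.AddAntidiagonal.finite_of_isPWO hΓ.1 hΓ.1 γ).image Prod.fst
    refine this.subset ?_
    rintro i ⟨h1, h2⟩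
    exact ⟨(i, γ - i), ⟨h1, h2, by simp⟩, rfl⟩
  have hz : ∀ γ i : ℝ, i ∉ {i : ℝ | i ∈ Γ ∧ γ - i ∈ Γ} → L (a i) (b (γ - i)) = 0 := by
    intro γ i hi
    by_cases h1 : i ∈ Γ
    · have : γ - i ∉ Γ := fun h2 => hi ⟨h1, h2⟩
      simp [hg.supp _ this]
    · simp [hf.supp _ h1]
  have hfs : ∀ γ : ℝ, HasSum (fun i => L (a i) (b (γ - i)))
      (∑ i ∈ (hfin γ).toFinset, L (a i) (b (γ - i))) := by
    intro γ
    apply hasSum_sum_of_ne_finset_zero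
    intro i hi
    exact hz γ i (by simpa using hi)
  set c : ℝ → Z := fun γ => ∑ i ∈ (hfin γ).toFinset, L (a i) (b (γ - i)) with hc
  -- real double sum
  have hN : Summable fun q : ℝ × ℝ => (‖a q.1‖ * r ^ q.1) * (‖b q.2‖ * r ^ q.2) :=
    hf.summ.mul_of_nonneg hg.summ (fun _ => by positivity) (fun _ => by positivity)
  have hNs := hf.summ.hasSum.mul hg.summ.hasSum hN
  have hNs' := (shear.hasSum_iff).2 hNs
  have hN' : Summable ((fun q : ℝ × ℝ => (‖a q.1‖ * r ^ q.1) * (‖b q.2‖ * r ^ q.2)) ∘ shear) :=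
    hNs'.summable
  have hle : ∀ γ : ℝ, ‖c γ‖ * r ^ γ ≤
      ∑' i : ℝ, ((fun q : ℝ × ℝ => (‖a q.1‖ * r ^ q.1) * (‖b q.2‖ * r ^ q.2)) ∘ shear) (γ, i) := by
    intro γ
    have h1 := hN'.prod_factor γ
    refine le_trans ?_ (h1.sum_le_tsum (hfin γ).toFinset (fun i _ => ?_))
    · rw [hc]
      refine (mul_le_mul_of_nonneg_right (norm_sum_le _ _) (by positivity)).trans ?_
      rw [Finset.sum_mul]
      apply Finset.sum_le_sum
      intro i _
      have e : r ^ γ = r ^ i * r ^ (γ - i) := by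
        rw [← Real.rpow_add hr]; congr 1; ring
      rw [e]
      have := hL (a i) (b (γ - i))
      simp only [Function.comp, shear, Equiv.coe_fn_mk]
      calc _ ≤ (‖a i‖ * ‖b (γ - i)‖) * (r ^ i * r ^ (γ - i)) :=
            mul_le_mul_of_nonneg_right this (by positivity)
        _ = _ := by ring
    · simp only [Function.comp, shear, Equiv.coe_fn_mk]
      positivity
  have hS := hN'.prod
  refine ⟨c, ⟨?_, ?_, ?_⟩, ?_, ?_⟩
  · intro γ hγ
    rw [hc]
    apply Finset.sum_eq_zero
    intro i hi
    have : i ∈ Γ ∧ γ - i ∈ Γ := by simpa using hi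
    exact absurd (by simpa using Γ.add_mem this.1 this.2) hγ
  · exact Summable.of_nonneg_of_le (fun _ => by positivity) hle hS
  · intro w hw
    have h1 := hf.hs w hw
    have h2 := hg.hs w hw
    have hsm : Summable fun q : ℝ × ℝ => L (Complex.exp ((q.1 : ℂ) * w) • a q.1)
        (Complex.exp ((q.2 : ℂ) * w) • b q.2) := by
      apply Summable.of_norm_bounded hN
      intro q
      exact (hL _ _).trans (mul_le_mul (norm_term_le hΓ hr hf.supp hw _)
        (norm_term_le hΓ hr hg.supp hw _) (norm_nonneg _) (by positivity))
    have h3 : HasSum (fun q : ℝ × ℝ => L (Complex.exp ((q.1 : ℂ) * w) • a q.1)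
        (Complex.exp ((q.2 : ℂ) * w) • b q.2)) (L (f w) (g w)) := by
      have h4 := hsm.hasSum
      have h5 : ∀ i : ℝ, HasSum (fun j : ℝ => L (Complex.exp ((i : ℂ) * w) • a i)
        (Complex.exp ((j : ℂ) * w) • b j)) (L (Complex.exp ((i : ℂ) * w) • a i) (g w)) :=
        fun i => (L (Complex.exp ((i : ℂ) * w) • a i)).hasSum h2
      have h6 := h4.prod_fiberwise h5
      have h7 : HasSum (fun i : ℝ => L (Complex.exp ((i : ℂ) * w) • a i) (g w)) (L (f w) (g w)) :=
        (L.flip (g w)).hasSum h1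
      rw [h7.unique h6]
      exact h4
    have h4 := (shear.hasSum_iff).2 h3
    refine h4.prod_fiberwise (fun γ => ?_)
    have := (hfs γ).const_smul (Complex.exp ((γ : ℂ) * w))
    convert this using 2 with i
    simp only [Function.comp, shear, Equiv.coe_fn_mk, map_smul, smul_apply,
      smul_smul, ← Complex.exp_add]
    congr 2
    push_cast
    ring
  · intro γ
    exact p.sum_mem (fun i _ => hp _ _)
  · rw [← hNs'.tsum_eq, hN'.tsum_prod]
    exact Summable.tsum_le_tsum hle (Summable.of_nonneg_of_le (fun _ => by positivity) hle hS) hS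

end

section
variable {X Y Z : Type*} [NormedAddCommGroup X] [NormedSpace ℂ X]
  {Γ : AddSubmonoid ℝ} {r : ℝ}

theorem HC.tsum_nat [CompleteSpace X] (hΓ : GoodG Γ) (hr : 0 < r) {a : ℕ → ℝ → X}
    {f : ℕ → ℂ → X} (h : ∀ n, HC Γ r (a n) (f n)) {c : ℕ → ℝ} (hc : Summable c)
    (hac : ∀ n, ∑' γ : ℝ, ‖a n γ‖ * r ^ γ ≤ c n) :
    ∃ b, HC Γ r b (fun w => ∑' n, f n w) := by
  have hN : Summable fun q : ℕ × ℝ => ‖a q.1 q.2‖ * r ^ q.2 := by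
    rw [summable_prod_of_nonneg (fun q => by simp only [Pi.zero_apply]; positivity)]
    refine ⟨fun n => (h n).summ, ?_⟩
    exact Summable.of_nonneg_of_le (fun n => tsum_nonneg (fun γ => by positivity)) hac hc
  have hN' : Summable fun q : ℝ × ℕ => ‖a q.2 q.1‖ * r ^ q.1 := by
    simpa [Function.comp_def] using! (Equiv.prodComm ℝ ℕ).summable_iff.2 hN
  have hNf : ∀ γ : ℝ, Summable fun n => ‖a n γ‖ := by
    intro γ
    have := hN'.prod_factor γ
    simp only at this
    exact (summable_mul_right_iff (by positivity)).1 this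
  refine ⟨fun γ => ∑' n, a n γ, ?_, ?_, ?_⟩
  · intro γ hγ
    simp [fun n => (h n).supp γ hγ]
  · refine Summable.of_nonneg_of_le (fun γ => by positivity) (fun γ => ?_) hN'.prod
    simp only
    rw [tsum_mul_right]
    exact mul_le_mul_of_nonneg_right (norm_tsum_le_tsum_norm (hNf γ)) (by positivity)
  · intro w hw
    have hsm : Summable fun q : ℝ × ℕ => Complex.exp ((q.1 : ℂ) * w) • a q.2 q.1 := by
      apply Summable.of_norm_bounded hN'
      intro q
      exact norm_term_le hΓ hr (h q.2).supp hw _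
    have h1 := hsm.hasSum
    have h2 : HasSum (fun γ : ℝ => Complex.exp ((γ : ℂ) * w) • ∑' n, a n γ)
        (∑' q : ℝ × ℕ, Complex.exp ((q.1 : ℂ) * w) • a q.2 q.1) := by
      refine h1.prod_fiberwise (fun γ => ?_)
      exact (Summable.of_norm (hNf γ)).hasSum.const_smul _
    have h3 := (Equiv.prodComm ℕ ℝ).hasSum_iff.2 h1
    have h4 := h3.prod_fiberwise (fun n => by simpa using (h n).hs w hw)
    rw [h4.tsum_eq]
    exact h2

theorem HC.small (hr : 0 < r) (hΓ : GoodG Γ) {a : ℝ → X} {f : ℂ → X} (h : HC Γ r a f)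
    {c : ℝ} (hc : ‖a 0‖ < c) :
    ∃ r' ∈ Set.Ioc 0 r, ∑' γ : ℝ, ‖a γ‖ * r' ^ γ < c := by
  have hlim : Filter.Tendsto (fun s : ℝ => ∑' γ : ℝ, ‖a γ‖ * s ^ γ) (nhdsWithin 0 (Set.Ioi 0))
      (nhds (∑' γ : ℝ, if γ = 0 then ‖a 0‖ else 0)) := by
    refine tendsto_tsum_of_dominated_convergence h.summ ?_ ?_
    · intro γ
      by_cases hγ : γ ∈ Γ
      · rcases (hΓ.2 γ hγ).eq_or_lt with h0 | h0
        · simp [← h0]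
        · have h1 : Filter.Tendsto (fun s : ℝ => s ^ γ) (nhds 0) (nhds 0) := by
            have := (Real.continuousAt_rpow_const 0 γ (Or.inr h0.le)).tendsto
            rwa [Real.zero_rpow h0.ne'] at this
          have h2 := (h1.const_mul ‖a γ‖).mono_left (nhdsWithin_le_nhds (s := Set.Ioi 0))
          simpa [h0.ne'] using h2
      · have h0 : γ ≠ 0 := fun h => hγ (h ▸ Γ.zero_mem)
        simp [h.supp γ hγ, h0]
    · have : Set.Ioc 0 r ∈ nhdsWithin (0 : ℝ) (Set.Ioi 0) := Ioc_mem_nhdsGT hr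
      filter_upwards [this] with s hs γ
      have hs0 := hs.1
      rw [Real.norm_of_nonneg (by positivity)]
      by_cases h1 : γ ∈ Γ
      · exact mul_le_mul_of_nonneg_left (Real.rpow_le_rpow hs0.le hs.2 (hΓ.2 γ h1)) (norm_nonneg _)
      · simp [h.supp γ h1]
  rw [tsum_ite_eq] at hlim
  have h1 := hlim.eventually (gt_mem_nhds hc)
  have h2 : ∀ᶠ s in nhdsWithin (0 : ℝ) (Set.Ioi 0), s ∈ Set.Ioc 0 r := Ioc_mem_nhdsGT hr
  obtain ⟨s, hs1, hs2⟩ := (h1.and h2).exists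
  exact ⟨s, hs2, hs1⟩

end

theorem HC.neumann {R : Type*} [NormedRing R] [NormedAlgebra ℂ R] [CompleteSpace R]
    {Γ : AddSubmonoid ℝ} {r : ℝ} (hΓ : GoodG Γ) (hr : 0 < r) {a : ℝ → R} {f : ℂ → R}
    (h : HC Γ r a f) (hlt : ∑' γ : ℝ, ‖a γ‖ * r ^ γ < 1) :
    (∀ w : ℂ, w.re < Real.log r → IsUnit (1 - f w)) ∧
    ∃ b, HC Γ r b (fun w => Ring.inverse (1 - f w)) := by
  set q := ∑' γ : ℝ, ‖a γ‖ * r ^ γ with hq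
  have hq0 : 0 ≤ q := tsum_nonneg (fun γ => by positivity)
  have hfn : ∀ w : ℂ, w.re < Real.log r → ‖f w‖ < 1 := by
    intro w hw
    refine lt_of_le_of_lt ?_ hlt
    rw [← (h.hs w hw).tsum_eq]
    refine (norm_tsum_le_tsum_norm (h.summable hΓ hr hw)).trans ?_
    exact Summable.tsum_le_tsum (norm_term_le hΓ hr h.supp hw) (h.summable hΓ hr hw) h.summ
  have hpow : ∀ n : ℕ, ∃ b, HC Γ r b (fun w => f w ^ n) ∧
      ∑' γ : ℝ, ‖b γ‖ * r ^ γ ≤ ‖(1 : R)‖ * q ^ n := by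
    intro n
    induction n with
    | zero =>
      refine ⟨_, by simpa using! HC.const (1 : R), ?_⟩
      rw [HC.const_tsum hr]; simp
    | succ n ih =>
      obtain ⟨b, hb, hbq⟩ := ih
      obtain ⟨c, hc, -, hcq⟩ := hb.mul hΓ hr h (ContinuousLinearMap.mul ℂ R)
        (fun x y => norm_mul_le x y) ⊤ (fun _ _ => trivial)
      refine ⟨c, hc.congr (fun w _ => by simp [pow_succ]), hcq.trans ?_⟩
      rw [pow_succ, ← mul_assoc]
      exact mul_le_mul_of_nonneg_right hbq hq0
  choose b hb hbq using hpow
  obtain ⟨c, hc⟩ := HC.tsum_nat hΓ hr hb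
    ((summable_geometric_of_lt_one hq0 hlt).mul_left ‖(1 : R)‖) hbq
  refine ⟨fun w hw => isUnit_one_sub_of_norm_lt_one (hfn w hw), c, hc.congr fun w hw => ?_⟩
  exact (NormedRing.inverse_one_sub _ (hfn w hw)).symm ▸ rfl

theorem abs_update {R : Type*} [Ring R] [Algebra ℂ R] {n : ℕ} (W : Fin n → Fin n → R)
    (M : Matrix (Fin n) (Fin n) ℂ) (hE : ∀ i j k l, W i j * W k l = M j k • W i l)
    (N : Matrix (Fin n) (Fin n) ℂ) (h1 : (1 - M) * N = 1) (h2 : N * (1 - M) = 1) :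
    (1 - ∑ i, ∑ j, (1 : Matrix (Fin n) (Fin n) ℂ) i j • W i j) *
      (1 + ∑ i, ∑ j, N i j • W i j) = 1 ∧
    (1 + ∑ i, ∑ j, N i j • W i j) *
      (1 - ∑ i, ∑ j, (1 : Matrix (Fin n) (Fin n) ℂ) i j • W i j) = 1 := by
  let D : Matrix (Fin n) (Fin n) ℂ →ₗ[ℂ] R :=
    { toFun := fun P => ∑ i, ∑ j, P i j • W i j
      map_add' := fun P Q => by simp [add_smul, Finset.sum_add_distrib]
      map_smul' := fun c P => by simp [mul_smul, Finset.smul_sum] }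
  have hD : ∀ P, ∑ i, ∑ j, P i j • W i j = D P := fun P => rfl
  have hprod : ∀ P Q, D P * D Q = D (P * M * Q) := by
    intro P Q
    simp only [← hD, Finset.sum_mul, Finset.mul_sum, smul_mul_smul_comm, hE, smul_smul,
      Matrix.mul_apply, Finset.sum_smul]
    have c1 : ∀ T : Fin n → Fin n → Fin n → R,
        ∑ k, ∑ l, ∑ i, T k l i = ∑ i, ∑ l, ∑ k, T k l i := by
      intro T
      rw [Finset.sum_congr rfl fun k _ => Finset.sum_comm, Finset.sum_comm]
      exact Finset.sum_congr rfl fun i _ => Finset.sum_comm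
    rw [c1]
    refine Finset.sum_congr rfl fun i _ => Finset.sum_congr rfl fun l _ =>
      Finset.sum_congr rfl fun k _ => Finset.sum_congr rfl fun j _ => ?_
    congr 1; ring
  simp only [hD]
  constructor
  · have : (1 - D 1) * (1 + D N) = 1 + D ((1 - M) * N - 1) := by
      simp only [sub_mul, mul_add, one_mul, mul_one, hprod, map_sub]
      abel
    rw [this, h1]; simp
  · have : (1 + D N) * (1 - D 1) = 1 + D (N * (1 - M) - 1) := by
      simp only [add_mul, mul_sub, one_mul, mul_one, hprod, map_sub]
      abel
    rw [this, h2]; simp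

section
variable {H : Type*} [NormedAddCommGroup H] [InnerProductSpace ℂ H]

/-- The finite rank operators as an additive submonoid. -/
def FR (H : Type*) [NormedAddCommGroup H] [InnerProductSpace ℂ H] :
    AddSubmonoid (H →L[ℂ] H) where
  carrier := {T | FiniteRank T}
  zero_mem' := by
    have : LinearMap.range (0 : H →L[ℂ] H).toLinearMap = ⊥ := by
      simp
    simp only [Set.mem_ofPred_eq, FiniteRank]
    rw [this]
    infer_instance
  add_mem' := by
    intro S T hS hT
    simp only [Set.mem_ofPred_eq, FiniteRank] at *
    have := hS
    have := hT
    refine Submodule.finiteDimensional_of_le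
      (S₂ := LinearMap.range S.toLinearMap ⊔ LinearMap.range T.toLinearMap) ?_
    rintro _ ⟨x, rfl⟩
    exact Submodule.add_mem_sup ⟨x, rfl⟩ ⟨x, rfl⟩

theorem mem_FR {T : H →L[ℂ] H} : T ∈ FR H ↔ FiniteRank T := Iff.rfl

theorem FR_mul_right {T : H →L[ℂ] H} (hT : T ∈ FR H) (S : H →L[ℂ] H) : T * S ∈ FR H := by
  have hT' : FiniteDimensional ℂ (LinearMap.range T.toLinearMap) := hT
  refine Submodule.finiteDimensional_of_le (S₂ := LinearMap.range T.toLinearMap) ?_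
  rintro _ ⟨x, rfl⟩
  exact ⟨S x, rfl⟩

theorem FR_mul_left {T : H →L[ℂ] H} (hT : T ∈ FR H) (S : H →L[ℂ] H) : S * T ∈ FR H := by
  have hT' : FiniteDimensional ℂ (LinearMap.range T.toLinearMap) := hT
  refine Submodule.finiteDimensional_of_le
    (S₂ := (LinearMap.range T.toLinearMap).map S.toLinearMap) ?_
  rintro _ ⟨x, rfl⟩
  exact ⟨T x, ⟨x, rfl⟩, rfl⟩

theorem FR_smul {T : H →L[ℂ] H} (hT : T ∈ FR H) (c : ℂ) : c • T ∈ FR H := by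
  have := FR_mul_left hT (c • (1 : H →L[ℂ] H))
  simpa using this

theorem FR_smulRight (φ : H →L[ℂ] ℂ) (e : H) : φ.smulRight e ∈ FR H := by
  refine Submodule.finiteDimensional_of_le (S₂ := Submodule.span ℂ {e}) ?_
  rintro _ ⟨x, rfl⟩
  exact Submodule.smul_mem _ _ (Submodule.mem_span_singleton_self e)

theorem approx [CompleteSpace H] {A : H →L[ℂ] H} (hA : IsCompactOperator A) :
    ∃ (n : ℕ) (e : Fin n → H) (φ : Fin n → H →L[ℂ] ℂ),
      ‖A - ∑ i, (φ i).smulRight (e i)‖ < 1 := by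
  have h1 : IsCompact (closure (A '' Metric.closedBall 0 1)) :=
    hA.isCompact_closure_image_closedBall (f := A.toLinearMap) 1
  have h2 : TotallyBounded (A '' Metric.closedBall 0 1) :=
    h1.totallyBounded.subset subset_closure
  obtain ⟨t, ht, hcov⟩ := Metric.totallyBounded_iff.1 h2 (1 / 2) (by norm_num)
  let V := Submodule.span ℂ t
  have : FiniteDimensional ℂ V := FiniteDimensional.span_of_finite ℂ ht
  let b := stdOrthonormalBasis ℂ V
  refine ⟨_, fun i => (b i : H), fun i => (innerSL ℂ (b i : H)).comp A, ?_⟩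
  have key : ∀ x, (∑ i, ((innerSL ℂ (b i : H)).comp A).smulRight (b i : H)) x
      = V.starProjection (A x) := by
    intro x
    rw [Submodule.starProjection_apply, b.orthogonalProjectionOnto_apply_eq_sum]
    simp
  refine lt_of_le_of_lt (ContinuousLinearMap.opNorm_le_of_unit_norm (C := 1 / 2) (by norm_num) ?_)
    (by norm_num)
  intro x hx
  rw [sub_apply, key]
  have hm : A x ∈ A '' Metric.closedBall 0 1 := ⟨x, by simp [hx], rfl⟩
  obtain ⟨y, hy, hxy⟩ := Set.mem_iUnion₂.1 (hcov hm)
  have hyV : y ∈ V := Submodule.subset_span hy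
  rw [Submodule.starProjection_minimal]
  refine (ciInf_le ⟨0, ?_⟩ (⟨y, hyV⟩ : V)).trans ?_
  · rintro _ ⟨z, rfl⟩
    exact norm_nonneg _
  · rw [← dist_eq_norm]
    exact (Metric.mem_ball.1 hxy).le

theorem rank_update {n : ℕ} (g : H →L[ℂ] H) (e : Fin n → H) (φ : Fin n → H →L[ℂ] ℂ)
    (M : Matrix (Fin n) (Fin n) ℂ) (hM : ∀ i j, M i j = φ i (g (e j))) :
    ((1 - M).det = 0 → ¬ IsUnit (1 - (∑ i, (φ i).smulRight (e i)) * g)) ∧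
    (∀ N : Matrix (Fin n) (Fin n) ℂ, (1 - M) * N = 1 → N * (1 - M) = 1 →
      (1 - (∑ i, (φ i).smulRight (e i)) * g) *
        (1 + ∑ i, ∑ j, N i j • ((φ j).smulRight (e i) * g)) = 1 ∧
      (1 + ∑ i, ∑ j, N i j • ((φ j).smulRight (e i) * g)) *
        (1 - (∑ i, (φ i).smulRight (e i)) * g) = 1) := by
  refine ⟨?_, ?_⟩
  · intro hdet hu
    obtain ⟨v, hv0, hv⟩ := Matrix.exists_mulVec_eq_zero_iff.2 hdet
    have hv' : ∀ i, v i = φ i (g (∑ j, v j • e j)) := by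
      intro i
      have := congrFun hv i
      rw [Matrix.sub_mulVec, Matrix.one_mulVec] at this
      simp only [Pi.sub_apply, Pi.zero_apply, Matrix.mulVec, dotProduct, hM] at this
      rw [sub_eq_zero.1 this]
      simp [mul_comm]
    set x := ∑ j, v j • e j with hx
    have hTx : (1 - (∑ i, (φ i).smulRight (e i)) * g) x = 0 := by
      simp [← hv', ← hx]
    have hx0 : x = 0 := by
      obtain ⟨u, hu⟩ := hu
      have : ((↑u⁻¹ : H →L[ℂ] H) * (1 - (∑ i, (φ i).smulRight (e i)) * g)) x = 0 := by
        rw [mul_apply_eq_comp, hTx, map_zero]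
      rw [← hu] at this
      simpa using this
    apply hv0
    ext i
    rw [hv' i, hx0]; simp
  · intro N h1 h2
    have hE : ∀ i j k l, ((φ j).smulRight (e i) * g) * ((φ l).smulRight (e k) * g)
        = M j k • ((φ l).smulRight (e i) * g) := by
      intro i j k l
      ext x
      simp [hM, smul_smul, mul_comm]
    have hF : (∑ i, (φ i).smulRight (e i)) * g =
        ∑ i, ∑ j, (1 : Matrix (Fin n) (Fin n) ℂ) i j • ((φ j).smulRight (e i) * g) := by
      simp [Finset.sum_mul, Matrix.one_apply]
    rw [hF]
    exact abs_update (fun i j => (φ j).smulRight (e i) * g) M hE N h1 h2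

end

/-- the ring of scalar functions with an expansion -/
def HSubr (Γ : AddSubmonoid ℝ) (r : ℝ) (hΓ : GoodG Γ) (hr : 0 < r) : Subring (ℂ → ℂ) where
  carrier := {f | ∃ a, HC Γ r a f}
  zero_mem' := ⟨_, HC.const 0⟩
  one_mem' := ⟨_, HC.const 1⟩
  add_mem' := by
    rintro f g ⟨a, ha⟩ ⟨b, hb⟩
    exact ⟨_, ha.add hr hb⟩
  neg_mem' := by
    rintro f ⟨a, ha⟩
    exact ⟨_, ha.neg⟩
  mul_mem' := by
    rintro f g ⟨a, ha⟩ ⟨b, hb⟩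
    obtain ⟨c, hc, -, -⟩ := ha.mul hΓ hr hb (ContinuousLinearMap.mul ℂ ℂ)
      (fun x y => norm_mul_le x y) ⊤ (fun _ _ => trivial)
    exact ⟨c, hc⟩

theorem det_mem (R : Subring (ℂ → ℂ)) {n : ℕ} (M : ℂ → Matrix (Fin n) (Fin n) ℂ)
    (h : ∀ i j, (fun w => M w i j) ∈ R) : (fun w => (M w).det) ∈ R := by
  have : (fun w => (M w).det) = Matrix.det (Matrix.of fun i j => fun w => M w i j) := by
    funext w
    have := RingHom.map_det (Pi.evalRingHom (fun _ : ℂ => ℂ) w)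
      (Matrix.of fun i j => fun w => M w i j)
    simp only [Pi.evalRingHom_apply] at this
    rw [this]
    rfl
  rw [this, Matrix.det_apply']
  refine R.sum_mem fun σ _ => R.mul_mem ?_ (R.prod_mem fun i _ => h _ _)
  exact intCast_mem R _

theorem adj_mem (R : Subring (ℂ → ℂ)) {n : ℕ} (M : ℂ → Matrix (Fin n) (Fin n) ℂ)
    (h : ∀ i j, (fun w => M w i j) ∈ R) (i j : Fin n) :
    (fun w => (M w).adjugate i j) ∈ R := by
  simp only [Matrix.adjugate_apply]
  refine det_mem R _ (fun k l => ?_)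
  by_cases hk : k = j
  · subst hk
    simp only [Matrix.updateRow_self, Pi.single_apply]
    by_cases hl : l = i
    · simp only [hl, if_true]; exact R.one_mem
    · simp only [hl, if_false]; exact R.zero_mem
  · simp only [Matrix.updateRow_ne hk]
    exact h k l

theorem HC.divide {Γ : AddSubmonoid ℝ} {r : ℝ} (hΓ : GoodG Γ) (hr : 0 < r) {a : ℝ → ℂ}
    {d : ℂ → ℂ} (h : HC Γ r a d) :
    (∀ w : ℂ, w.re < Real.log r → d w = 0) ∨
    ∃ μ ∈ Γ, ∃ Γ' : AddSubmonoid ℝ, GoodG Γ' ∧ Γ ≤ Γ' ∧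
      (Γ' : Set ℝ) ⊆ AddSubgroup.closure (Γ : Set ℝ) ∧
      ∃ r' ∈ Set.Ioc 0 r, (∀ w : ℂ, w.re < Real.log r' → d w ≠ 0) ∧
      ∃ b, HC Γ' r' b (fun w => Complex.exp ((μ : ℂ) * w) * (d w)⁻¹) := by
  by_cases hall : ∀ γ, a γ = 0
  · left
    intro w hw
    have := h.hs w hw
    simp only [hall, smul_zero] at this
    exact this.unique hasSum_zero
  right
  push Not at hall
  have hsub : {γ | a γ ≠ 0} ⊆ (Γ : Set ℝ) := by
    intro γ hγ
    by_contra hc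
    exact hγ (h.supp γ hc)
  have hwf : {γ | a γ ≠ 0}.IsWF := (hΓ.1.mono hsub).isWF
  have hne : {γ | a γ ≠ 0}.Nonempty := hall
  set μ := hwf.min hne with hμ
  have hμ0 : a μ ≠ 0 := hwf.min_mem hne
  have hμmin : ∀ γ, a γ ≠ 0 → μ ≤ γ := fun γ hγ => hwf.min_le hne hγ
  have hμΓ : μ ∈ Γ := hsub hμ0
  let T : Set ℝ := {γ | 0 ≤ γ ∧ γ + μ ∈ Γ}
  have hT : T.IsPWO := by
    have : T ⊆ (fun x => x - μ) '' (Γ : Set ℝ) := by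
      rintro γ ⟨-, h2⟩
      exact ⟨γ + μ, h2, by simp⟩
    exact (hΓ.1.image_of_monotone (f := fun x => x - μ)
      (fun x y hxy => sub_le_sub_right hxy μ)).mono this
  have hpos : ∀ x ∈ (Γ : Set ℝ) ∪ T, 0 ≤ x := by
    rintro x (hx | hx)
    · exact hΓ.2 x hx
    · exact hx.1
  let Γ' := AddSubmonoid.closure ((Γ : Set ℝ) ∪ T)
  have hΓ' : GoodG Γ' := by
    refine ⟨Set.IsPWO.addSubmonoid_closure hpos (hΓ.1.union hT), fun γ hγ => ?_⟩
    induction hγ using AddSubmonoid.closure_induction with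
    | mem x hx => exact hpos x hx
    | zero => exact le_rfl
    | add x y _ _ hx hy => exact add_nonneg hx hy
  have hΓΓ : Γ ≤ Γ' := fun x hx => AddSubmonoid.subset_closure (Or.inl hx)
  have hΓcl : (Γ' : Set ℝ) ⊆ AddSubgroup.closure (Γ : Set ℝ) := by
    have : Γ' ≤ (AddSubgroup.closure (Γ : Set ℝ)).toAddSubmonoid := by
      rw [AddSubmonoid.closure_le]
      rintro x (hx | hx)
      · exact AddSubgroup.subset_closure hx
      · have h1 : x + μ ∈ AddSubgroup.closure (Γ : Set ℝ) := AddSubgroup.subset_closure hx.2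
        have h2 : μ ∈ AddSubgroup.closure (Γ : Set ℝ) := AddSubgroup.subset_closure hμΓ
        simpa using AddSubgroup.sub_mem _ h1 h2
    exact this
  refine ⟨μ, hμΓ, Γ', hΓ', hΓΓ, hΓcl, ?_⟩
  have hd1 : HC Γ' r (fun γ => a (γ + μ)) (fun w => Complex.exp (-(μ : ℂ) * w) * d w) := by
    refine ⟨fun γ hγ => ?_, ?_, fun w hw => ?_⟩
    · by_contra hc
      refine hγ (AddSubmonoid.subset_closure (Or.inr ⟨?_, hsub hc⟩))
      linarith [hμmin _ hc]
    · have := ((Equiv.addRight μ).summable_iff.2 h.summ).mul_right (r ^ (-μ))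
      refine this.congr fun γ => ?_
      change ‖a (γ + μ)‖ * r ^ (γ + μ) * r ^ (-μ) = _
      rw [mul_assoc, ← Real.rpow_add hr]
      simp
    · have := ((Equiv.addRight μ).hasSum_iff.2 (h.hs w hw)).mul_left (Complex.exp (-(μ : ℂ) * w))
      refine Eq.subst (motive := fun F => HasSum F _) (funext fun γ => ?_) this
      symm
      change _ = Complex.exp (-(μ : ℂ) * w) * (Complex.exp (((γ + μ : ℝ) : ℂ) * w) • a (γ + μ))
      simp only [smul_eq_mul, ← mul_assoc, ← Complex.exp_add]
      congr 2
      push_cast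
      ring
  have hq := (HC.const (Γ := Γ') (r := r) (1 : ℂ)).add hr
    (hd1.map hr ((-(a μ)⁻¹) • ContinuousLinearMap.id ℂ ℂ))
  obtain ⟨r', hr', hlt⟩ := hq.small hr hΓ' (c := 1) (by simp [hμ0])
  have hq' := hq.mono hΓ' le_rfl hr'.1 hr'.2
  obtain ⟨hu, b, hb⟩ := hq'.neumann hΓ' hr'.1 hlt
  have hne0 : ∀ w : ℂ, w.re < Real.log r' → d w ≠ 0 := by
    intro w hw h0
    have := hu w hw
    simp [h0] at this
  refine ⟨r', hr', hne0, _, (hb.map hr'.1 (((a μ)⁻¹) • ContinuousLinearMap.id ℂ ℂ)).congr ?_⟩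
  intro w hw
  have h0 := hne0 w hw
  have e : Complex.exp (-(μ : ℂ) * w) = (Complex.exp ((μ : ℂ) * w))⁻¹ := by
    rw [← Complex.exp_neg]; congr 1; ring
  have := Complex.exp_ne_zero ((μ : ℂ) * w)
  simp only [e, smul_apply, ContinuousLinearMap.id_apply, smul_eq_mul,
    Ring.inverse_eq_inv']
  have e2 : (1 : ℂ) - (1 + -(a μ)⁻¹ * ((Complex.exp ((μ : ℂ) * w))⁻¹ * d w)) =
      (a μ)⁻¹ * (Complex.exp ((μ : ℂ) * w))⁻¹ * d w := by ring
  rw [e2]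
  field_simp

section
variable {H : Type*} [NormedAddCommGroup H] [InnerProductSpace ℂ H] [CompleteSpace H]

theorem HC.shift {X : Type*} [NormedAddCommGroup X] [NormedSpace ℂ X]
    {Γ : AddSubmonoid ℝ} {r : ℝ} (hr : 0 < r) {a : ℝ → X} {f : ℂ → X} (h : HC Γ r a f)
    {μ : ℝ} (hμ : μ ∈ Γ) :
    HC Γ r (fun γ => a (γ - μ)) (fun w => Complex.exp ((μ : ℂ) * w) • f w) := by
  refine ⟨fun γ hγ => ?_, ?_, fun w hw => ?_⟩
  · apply h.supp
    intro hc
    exact hγ (by simpa using Γ.add_mem hc hμ)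
  · have := ((Equiv.subRight μ).summable_iff.2 h.summ).mul_right (r ^ μ)
    refine this.congr fun γ => ?_
    simp only [Function.comp, Equiv.subRight_apply]
    rw [mul_assoc, ← Real.rpow_add hr]
    simp
  · have := ((Equiv.subRight μ).hasSum_iff.2 (h.hs w hw)).const_smul (Complex.exp ((μ : ℂ) * w))
    convert this using 2 with γ
    simp only [Function.comp, Equiv.subRight_apply, smul_smul, ← Complex.exp_add]
    congr 2
    push_cast
    ring

theorem local_fredholm {Γ : AddSubmonoid ℝ} {r : ℝ} (hΓ : GoodG Γ) (hr : 0 < r)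
    {A : ℝ → H →L[ℂ] H} {f : ℂ → H →L[ℂ] H} (h : HC Γ r A f) (hA : IsCompactOperator (A 0)) :
    ∃ r' ∈ Set.Ioc 0 r, (∀ w : ℂ, w.re < Real.log r' → ¬ IsUnit (1 - f w)) ∨
      ((∀ w : ℂ, w.re < Real.log r' → IsUnit (1 - f w)) ∧
      ∃ μ ∈ Γ, ∃ Γ' : AddSubmonoid ℝ, GoodG Γ' ∧
        (Γ' : Set ℝ) ⊆ AddSubgroup.closure (Γ : Set ℝ) ∧
        ∃ B, HC Γ' r' B (fun w => Complex.exp ((μ : ℂ) * w) • Ring.inverse (1 - f w)) ∧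
          ∀ γ < μ, FiniteRank (B γ)) := by
  obtain ⟨n, e, φ, hap⟩ := approx hA
  set F : H →L[ℂ] H := ∑ i, (φ i).smulRight (e i) with hF
  have hG := h.add hr (HC.const (-F))
  obtain ⟨r₁, hr₁, hlt⟩ := hG.small hr hΓ (c := 1) (by simpa [← sub_eq_add_neg] using hap)
  have hG' := hG.mono hΓ le_rfl hr₁.1 hr₁.2
  obtain ⟨hGu, b, hb⟩ := hG'.neumann hΓ hr₁.1 hlt
  set g : ℂ → H →L[ℂ] H := fun w => Ring.inverse (1 - (f w + -F)) with hg
  let M : ℂ → Matrix (Fin n) (Fin n) ℂ := fun w => Matrix.of fun i j => φ i (g w (e j))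
  let R := HSubr Γ r₁ hΓ hr₁.1
  have hM : ∀ i j, (fun w => (1 - M w) i j) ∈ R := by
    intro i j
    have h1 : (fun w => φ i (g w (e j))) ∈ R :=
      ⟨_, hb.map hr₁.1 ((φ i).comp (ContinuousLinearMap.apply ℂ H (e j)))⟩
    have h2 : (fun w : ℂ => (1 : Matrix (Fin n) (Fin n) ℂ) i j) ∈ R := ⟨_, HC.const _⟩
    exact R.sub_mem h2 h1
  have hfac : ∀ w : ℂ, w.re < Real.log r₁ →
      1 - f w = (1 - F * g w) * (1 - (f w + -F)) := by
    intro w hw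
    rw [sub_mul, mul_assoc, Ring.inverse_mul_cancel _ (hGu w hw)]
    simp; abel
  have hunit : ∀ w : ℂ, w.re < Real.log r₁ →
      (IsUnit (1 - f w) → IsUnit (1 - F * g w)) := by
    intro w hw hh
    rw [hfac w hw] at hh
    have h3 := hh.mul (hGu w hw).ringInverse
    rwa [mul_assoc, Ring.mul_inverse_cancel _ (hGu w hw), mul_one] at h3
  obtain ⟨ad, had⟩ : (fun w => (1 - M w).det) ∈ R := det_mem R _ hM
  rcases had.divide hΓ hr₁.1 with h0 | ⟨μ, hμ, Γ', hΓ', hΓΓ, hcl, r₂, hr₂, hne, c, hc⟩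
  · refine ⟨r₁, hr₁, Or.inl fun w hw hu => ?_⟩
    exact (rank_update (g w) e φ (M w) (fun i j => rfl)).1 (h0 w hw) (hunit w hw hu)
  · refine ⟨r₂, ⟨hr₂.1, hr₂.2.trans hr₁.2⟩, Or.inr ?_⟩
    have hlog : ∀ w : ℂ, w.re < Real.log r₂ → w.re < Real.log r₁ := fun w hw =>
      hw.trans_le (Real.log_le_log hr₂.1 hr₂.2)
    have hinv : ∀ w : ℂ, w.re < Real.log r₂ → IsUnit (1 - f w) ∧
        Ring.inverse (1 - f w) = g w + ∑ i, ∑ j, ((1 - M w).det⁻¹ * (1 - M w).adjugate i j) •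
          ((g w * (φ j).smulRight (e i)) * g w) := by
      intro w hw
      have hw1 := hlog w hw
      have hd : (1 - M w).det ≠ 0 := hne w hw
      obtain ⟨e1, e2⟩ := (rank_update (g w) e φ (M w) (fun i j => rfl)).2
        ((1 - M w).det⁻¹ • (1 - M w).adjugate)
        (by rw [Matrix.mul_smul, Matrix.mul_adjugate, smul_smul, inv_mul_cancel₀ hd, one_smul])
        (by rw [Matrix.smul_mul, Matrix.adjugate_mul, smul_smul, inv_mul_cancel₀ hd, one_smul])
      rw [← hF] at e1 e2
      set N := 1 + ∑ i, ∑ j, ((1 - M w).det⁻¹ • (1 - M w).adjugate) i j •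
        ((φ j).smulRight (e i) * g w) with hN
      have k1 : (1 - f w) * (g w * N) = 1 := by
        rw [hfac w hw1, mul_assoc, ← mul_assoc _ (g w), Ring.mul_inverse_cancel _ (hGu w hw1),
          one_mul, e1]
      have k2 : (g w * N) * (1 - f w) = 1 := by
        rw [hfac w hw1, mul_assoc, ← mul_assoc N, e2, one_mul,
          Ring.inverse_mul_cancel _ (hGu w hw1)]
      let u : (H →L[ℂ] H)ˣ := ⟨1 - f w, g w * N, k1, k2⟩
      refine ⟨⟨u, rfl⟩, ?_⟩
      have : Ring.inverse (1 - f w) = g w * N := Ring.inverse_unit u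
      rw [this, hN, mul_add, mul_one]
      simp only [Finset.mul_sum, mul_smul_comm, mul_assoc, Matrix.smul_apply, smul_eq_mul]
    refine ⟨fun w hw => (hinv w hw).1, μ, hμ, Γ', hΓ', hcl, ?_⟩
    have hr2 := hr₂.1
    have hb' := hb.mono hΓ hΓΓ hr2 hr₂.2
    have hK : ∃ k, HC Γ' r₂ k (fun w => ∑ i, ∑ j,
        ((Complex.exp ((μ : ℂ) * w) * (1 - M w).det⁻¹) * (1 - M w).adjugate i j) •
          ((g w * (φ j).smulRight (e i)) * g w)) ∧ ∀ γ, k γ ∈ FR H := by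
      refine HC.sum hr2 _ _ fun i _ => HC.sum hr2 _ _ fun j _ => ?_
      have m1 := hb'.map hr2
        ((ContinuousLinearMap.mul ℂ (H →L[ℂ] H)).flip ((φ j).smulRight (e i)))
      obtain ⟨c2, m2, m2p, -⟩ := m1.mul hΓ' hr2 hb' (ContinuousLinearMap.mul ℂ (H →L[ℂ] H))
        (fun x y => norm_mul_le x y) (FR H)
        (fun i' j' => FR_mul_right (FR_mul_left (FR_smulRight _ _) _) _)
      obtain ⟨c3, m3⟩ : (fun w => (1 - M w).adjugate i j) ∈ R := adj_mem R _ hM i j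
      obtain ⟨c4, m4, -, -⟩ := hc.mul hΓ' hr2 (m3.mono hΓ hΓΓ hr2 hr₂.2)
        (ContinuousLinearMap.mul ℂ ℂ) (fun x y => norm_mul_le x y) ⊤ (fun _ _ => trivial)
      obtain ⟨c5, m5, m5p, -⟩ := m4.mul hΓ' hr2 m2
        (ContinuousLinearMap.lsmul ℂ ℂ) (fun x y => (norm_smul x y).le) (FR H)
        (fun i' j' => FR_smul (m2p _) _)
      exact ⟨c5, m5.congr (fun w _ => rfl), m5p⟩
    obtain ⟨k, hk, hkp⟩ := hK
    refine ⟨_, ((hb'.shift hr2 (hΓΓ hμ)).add hr2 hk).congr fun w hw => ?_, fun γ hγ => ?_⟩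
    · rw [(hinv w hw).2, smul_add]
      congr 1
      simp only [Finset.smul_sum, smul_smul, mul_assoc]
    · have : b (γ - μ) = 0 := by
        apply hb'.supp
        intro hc
        have := hΓ'.2 _ hc
        linarith
      rw [this, zero_add]
      exact hkp γ

end

section
variable {H : Type*} [NormedAddCommGroup H] [InnerProductSpace ℂ H] [CompleteSpace H]

theorem natG : GoodG (AddMonoidHom.mrange (Nat.castAddMonoidHom ℝ)) := by
  constructor
  · have : ((AddMonoidHom.mrange (Nat.castAddMonoidHom ℝ) : AddSubmonoid ℝ) : Set ℝ) =
      (fun n : ℕ => (n : ℝ)) '' Set.univ := by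
      ext x; simp
    rw [this]
    exact (Set.IsPWO.of_linearOrder _).image_of_monotone Nat.mono_cast
  · rintro _ ⟨n, rfl⟩
    simp

theorem natG_closure {x : ℝ} (hx : x ∈ AddSubgroup.closure
    ((AddMonoidHom.mrange (Nat.castAddMonoidHom ℝ) : AddSubmonoid ℝ) : Set ℝ)) (h0 : 0 ≤ x) :
    ∃ n : ℕ, (n : ℝ) = x := by
  have : AddSubgroup.closure
    ((AddMonoidHom.mrange (Nat.castAddMonoidHom ℝ) : AddSubmonoid ℝ) : Set ℝ) ≤
    AddMonoidHom.range (Int.castAddHom ℝ) := by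
    rw [AddSubgroup.closure_le]
    rintro _ ⟨n, rfl⟩
    exact ⟨n, by simp⟩
  obtain ⟨m, rfl⟩ := this hx
  have h0' : 0 ≤ m := by simpa using h0
  lift m to ℕ using h0'
  exact ⟨m, by simp⟩

theorem HC.nat_hasSum {X : Type*} [NormedAddCommGroup X] [NormedSpace ℂ X]
    {Γ : AddSubmonoid ℝ} {r : ℝ} (hN : ∀ γ ∈ Γ, ∃ n : ℕ, (n : ℝ) = γ)
    {a : ℝ → X} {f : ℂ → X} (h : HC Γ r a f) {w : ℂ} (hw : w.re < Real.log r) :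
    HasSum (fun n : ℕ => (Complex.exp w) ^ n • a n) (f w) := by
  have h1 : ∀ x ∉ Set.range (fun n : ℕ => (n : ℝ)), Complex.exp ((x : ℂ) * w) • a x = 0 := by
    intro x hx
    rw [h.supp x (fun hc => hx (hN x hc)), smul_zero]
  have := ((Nat.cast_injective (R := ℝ)).hasSum_iff h1).2 (h.hs w hw)
  convert this using 2 with n
  simp [Complex.exp_nat_mul]

theorem point_fredholm {w₀ : ℂ} {f : ℂ → H →L[ℂ] H} (hf : AnalyticAt ℂ f w₀)
    (hc : IsCompactOperator (f w₀)) :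
    ∃ ε > (0 : ℝ), (∀ w ∈ Metric.ball w₀ ε, w ≠ w₀ → ¬ IsUnit (1 - f w)) ∨
      ((∀ w ∈ Metric.ball w₀ ε, w ≠ w₀ → IsUnit (1 - f w)) ∧
      ∃ n : ℕ, ∃ P : ℕ → H →L[ℂ] H, ∃ g : ℂ → H →L[ℂ] H,
        DifferentiableOn ℂ g (Metric.ball w₀ ε) ∧
        (∀ j, FiniteRank (P j)) ∧
        ∀ w ∈ Metric.ball w₀ ε, w ≠ w₀ →
          Ring.inverse (1 - f w) =
            (∑ j ∈ Finset.range n, ((w - w₀) ^ (-(j : ℤ) - 1)) • P j) + g w) := by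
  obtain ⟨p, R, hp⟩ := hf
  obtain ⟨r, hr0, hrR⟩ : ∃ r : NNReal, 0 < r ∧ (r : ENNReal) < R := by
    obtain ⟨r, h1, h2⟩ := ENNReal.lt_iff_exists_nnreal_btwn.1 hp.r_pos
    exact ⟨r, by simpa using h1, h2⟩
  have hr : (0 : ℝ) < r := hr0
  have hinj : Function.Injective (fun n : ℕ => (n : ℝ)) := Nat.cast_injective
  set A : ℝ → H →L[ℂ] H := Function.extend (fun n : ℕ => (n : ℝ)) (fun n => p.coeff n) 0 with hA
  have hAn : ∀ n : ℕ, A n = p.coeff n := fun n => hinj.extend_apply _ _ n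
  have hA0 : ∀ x ∉ Set.range (fun n : ℕ => (n : ℝ)), A x = 0 := by
    intro x hx
    exact Function.extend_apply' _ _ _ (fun ⟨n, hn⟩ => hx ⟨n, hn⟩)
  have hHC : HC (AddMonoidHom.mrange (Nat.castAddMonoidHom ℝ)) r A
      (fun s => f (w₀ + Complex.exp s)) := by
    refine ⟨fun γ hγ => hA0 γ fun ⟨n, hn⟩ => hγ ⟨n, hn⟩, ?_, fun w hw => ?_⟩
    · have h1 := p.summable_norm_mul_pow (hrR.trans_le hp.r_le)
      refine (hinj.summable_iff (fun x hx => ?_)).1 (h1.congr fun n => ?_)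
      · rw [hA0 x hx]; simp
      · simp [hAn, FormalMultilinearSeries.norm_apply_eq_norm_coef]
    · have h1 : Complex.exp w ∈ Metric.eball (0 : ℂ) R := by
        have : ‖Complex.exp w‖ < r := by
          rw [Complex.norm_exp]
          exact (Real.lt_log_iff_exp_lt hr).1 hw
        rw [Metric.mem_eball, edist_zero_right]
        refine lt_trans ?_ hrR
        rw [enorm_eq_nnnorm]
        exact_mod_cast this
      have h2 := hp.hasSum h1
      refine (hinj.hasSum_iff (fun x hx => ?_)).1 ?_
      · rw [hA0 x hx]; simp
      · convert h2 using 2 with n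
        simp [hAn, Complex.exp_nat_mul]
  have hAc : IsCompactOperator (A 0) := by
    have : A 0 = f w₀ := by
      have := hAn 0
      rw [Nat.cast_zero] at this
      rw [this, FormalMultilinearSeries.coeff]
      exact hp.coeff_zero _
    rw [this]; exact hc
  obtain ⟨ε, hε, hcase⟩ := local_fredholm natG hr hHC hAc
  have hε0 := hε.1
  have hlog : ∀ w ∈ Metric.ball w₀ ε, w ≠ w₀ → (Complex.log (w - w₀)).re < Real.log ε ∧
      Complex.exp (Complex.log (w - w₀)) = w - w₀ := by
    intro w hw hne
    have h0 : w - w₀ ≠ 0 := sub_ne_zero.2 hne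
    refine ⟨?_, Complex.exp_log h0⟩
    rw [Complex.log_re]
    apply Real.log_lt_log (norm_pos_iff.2 h0)
    rwa [← dist_eq_norm]
  refine ⟨ε, hε0, ?_⟩
  rcases hcase with hbad | ⟨hgood, μ, ⟨m, rfl⟩, Γ', hΓ', hcl, B, hB, hBf⟩
  · left
    intro w hw hne
    obtain ⟨h1, h2⟩ := hlog w hw hne
    have := hbad _ h1
    rwa [h2, add_sub_cancel] at this
  · right
    refine ⟨fun w hw hne => ?_, ?_⟩
    · obtain ⟨h1, h2⟩ := hlog w hw hne
      have := hgood _ h1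
      rwa [h2, add_sub_cancel] at this
    have hN : ∀ γ ∈ Γ', ∃ n : ℕ, (n : ℝ) = γ := fun γ hγ => natG_closure (hcl hγ) (hΓ'.2 γ hγ)
    have hBs : Summable fun k : ℕ => ‖B ((k + m : ℕ) : ℝ)‖ * ε ^ k := by
      have h1 := hB.summ.comp_injective hinj
      have h2 := ((summable_nat_add_iff m).2 h1).mul_right ((ε ^ m)⁻¹)
      refine h2.congr fun k => ?_
      simp only [Function.comp, Real.rpow_natCast, pow_add]
      field_simp
    refine ⟨m, fun j => if j < m then B ((m - 1 - j : ℕ) : ℝ) else 0,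
      fun w => ∑' k : ℕ, (w - w₀) ^ k • B ((k + m : ℕ) : ℝ), ?_, ?_, ?_⟩
    · refine Complex.differentiableOn_tsum_of_summable_norm hBs (fun k => ?_)
        Metric.isOpen_ball (fun k w hw => ?_)
      · fun_prop
      · rw [norm_smul, norm_pow, mul_comm]
        refine mul_le_mul_of_nonneg_left (pow_le_pow_left₀ (norm_nonneg _) ?_ k) (norm_nonneg _)
        rw [← dist_eq_norm]
        exact (Metric.mem_ball.1 hw).le
    · intro j
      by_cases hj : j < m
      · simp only [hj, if_true]
        apply hBf
        simp only [Nat.coe_castAddMonoidHom]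
        exact_mod_cast (by omega : m - 1 - j < m)
      · simp only [hj, if_false]
        exact mem_FR.1 (FR H).zero_mem
    · intro w hw hne
      obtain ⟨h1, h2⟩ := hlog w hw hne
      have h0 : w - w₀ ≠ 0 := sub_ne_zero.2 hne
      have h3 := hB.nat_hasSum hN h1
      rw [h2, add_sub_cancel] at h3
      set z := w - w₀ with hz
      have e1 : Complex.exp (((Nat.castAddMonoidHom ℝ m : ℝ) : ℂ) * Complex.log z) = z ^ m := by
        rw [Nat.coe_castAddMonoidHom, Complex.ofReal_natCast, Complex.exp_nat_mul, h2]
      rw [e1] at h3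
      have h4 := h3.const_smul ((z ^ m)⁻¹)
      rw [smul_smul, inv_mul_cancel₀ (pow_ne_zero _ h0), one_smul] at h4
      rw [← h4.tsum_eq, ← h4.summable.sum_add_tsum_nat_add m]
      congr 1
      · rw [← Finset.sum_range_reflect]
        refine Finset.sum_congr rfl fun j hj => ?_
        have hj' := Finset.mem_range.1 hj
        simp only [hj', if_true, smul_smul]
        congr 1
        rw [← zpow_natCast, ← zpow_natCast, ← zpow_neg, ← zpow_add₀ h0]
        congr 1
        omega
      · refine tsum_congr fun k => ?_
        rw [smul_smul, pow_add]
        congr 1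
        field_simp
        rfl

end

theorem Omega_convex (δ : ℝ) (σ : ENNReal) : Convex ℝ (Omega δ σ) := by
  have h1 : Convex ℝ {w : ℂ | w.re < Real.log δ} := convex_halfSpace_re_lt _
  have h2 : Set.OrdConnected {x : ℝ | ENNReal.ofReal |x| < σ} := by
    refine ⟨fun x hx y hy z hz => ?_⟩
    have : |z| ≤ max |x| |y| := abs_le_max_abs_abs hz.1 hz.2
    rcases le_max_iff.1 this with h | h
    · exact (ENNReal.ofReal_le_ofReal h).trans_lt hx
    · exact (ENNReal.ofReal_le_ofReal h).trans_lt hy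
  exact h1.inter (h2.convex.is_linear_preimage Complex.imLm.isLinear)

theorem Omega_open (δ : ℝ) (σ : ENNReal) : IsOpen (Omega δ σ) := by
  have h1 : IsOpen {w : ℂ | w.re < Real.log δ} := isOpen_lt Complex.continuous_re continuous_const
  have h2 : IsOpen {w : ℂ | ENNReal.ofReal |w.im| < σ} :=
    isOpen_lt (ENNReal.continuous_ofReal.comp (continuous_abs.comp Complex.continuous_im))
      continuous_const
  exact h1.inter h2

theorem Omega_mono {δ δ' : ℝ} (h0 : 0 < δ') (h : δ' ≤ δ) (σ : ENNReal) :
    Omega δ' σ ⊆ Omega δ σ :=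
  fun _ hw => ⟨hw.1.trans_le (Real.log_le_log h0 h), hw.2⟩

theorem punctured_open (P : ℂ → Prop) :
    IsOpen {x : ℂ | ∀ᶠ y in nhdsWithin x {x}ᶜ, P y} := by
  rw [isOpen_iff_eventually]
  intro x hx
  have h1 := eventually_nhdsNE_eventually_nhds_iff.2 hx
  rw [eventually_nhdsWithin_iff] at h1
  filter_upwards [h1] with y hy
  by_cases hxy : y = x
  · rw [hxy]; exact hx
  · exact (hy hxy).filter_mono nhdsWithin_le_nhds

theorem dichotomy {U : Set ℂ} (hU : IsPreconnected U) (P : ℂ → Prop)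
    (h : ∀ x ∈ U, (∀ᶠ y in nhdsWithin x {x}ᶜ, P y) ∨ (∀ᶠ y in nhdsWithin x {x}ᶜ, ¬ P y))
    {a b : ℂ} (ha : a ∈ U) (hb : b ∈ U) (hPa : ∀ᶠ y in nhdsWithin a {a}ᶜ, P y)
    (hPb : ∀ᶠ y in nhdsWithin b {b}ᶜ, ¬ P y) : False := by
  obtain ⟨x, -, h1, h2⟩ := hU _ _ (punctured_open P) (punctured_open fun y => ¬ P y)
    (fun x hx => h x hx) ⟨a, ha, hPa⟩ ⟨b, hb, hPb⟩
  have h1a : ∀ᶠ y in nhdsWithin x {x}ᶜ, P y := h1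
  have h2a : ∀ᶠ y in nhdsWithin x {x}ᶜ, ¬ P y := h2
  obtain ⟨y, h3, h4⟩ := (h1a.and h2a).exists
  exact h4 h3

theorem HC.near_zero {X : Type*} [NormedAddCommGroup X] [NormedSpace ℂ X]
    {Γ : AddSubmonoid ℝ} {r : ℝ} (hΓ : GoodG Γ) (hr : 0 < r) {a : ℝ → X} {f : ℂ → X}
    (h : HC Γ r a f) {c : ℝ} (hc : 0 < c) :
    ∃ r' ∈ Set.Ioc 0 r, ∀ w : ℂ, w.re < Real.log r' → ‖f w - a 0‖ < c := by
  have h1 := h.add hr (HC.const (-(a 0)))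
  obtain ⟨r', hr', hlt⟩ := h1.small hr hΓ (c := c) (by simpa using hc)
  refine ⟨r', hr', fun w hw => ?_⟩
  have h2 := h1.mono hΓ le_rfl hr'.1 hr'.2
  refine lt_of_le_of_lt ?_ hlt
  rw [sub_eq_add_neg, ← (h2.hs w hw).tsum_eq]
  refine (norm_tsum_le_tsum_norm (h2.summable hΓ hr'.1 hw)).trans ?_
  exact Summable.tsum_le_tsum (norm_term_le hΓ hr'.1 h2.supp hw) (h2.summable hΓ hr'.1 hw) h2.summ

/-- Hahn holomorphic Fredholm theorem (Theorem 4.1, z-case). -/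
theorem hahn_holomorphic_fredholm
    {H : Type*} [NormedAddCommGroup H] [InnerProductSpace ℂ H] [CompleteSpace H]
    (δ : ℝ) (hδ : 0 < δ) (σ : ENNReal) (hσ : 0 < σ)
    (δ' : ℝ) (hδ' : δ' ∈ Set.Ioc 0 δ)
    (S : Set ℝ) (hSc : S.Countable) (hSwf : S.IsWF) (hS0 : S ⊆ Set.Ici 0)
    (A : ℝ → H →L[ℂ] H) (hsupp : ∀ α ∉ S, A α = 0)
    (hAcpt : ∀ α, IsCompactOperator (A α))
    (hsum : Summable fun α : S => ‖A (α : ℝ)‖ * δ' ^ (α : ℝ))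
    (f : ℂ → H →L[ℂ] H)
    (hhol : DifferentiableOn ℂ f (Omega δ σ))
    (hfcpt : ∀ w ∈ Omega δ σ, IsCompactOperator (f w))
    (hf : ∀ w ∈ Omega δ' σ, f w = ∑' α : S, Complex.exp (((α : ℝ) : ℂ) * w) • A (α : ℝ)) :
    -- either Id - f(w) is nowhere invertible (including at the limit point 0) …
    ((∀ w ∈ Omega δ σ, ¬ IsUnit (1 - f w)) ∧ ¬ IsUnit (1 - A 0)) ∨
    -- … or the non-invertibility set is discrete, empty near 0,
    -- and the inverse is z-Hahn meromorphic at 0 with finite rank singular coefficients.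
    ((∀ w₀ ∈ Omega δ σ, ∃ ε > (0 : ℝ), ∀ w ∈ Omega δ σ,
        ¬ IsUnit (1 - f w) → w ∈ Metric.ball w₀ ε → w = w₀) ∧
      ∃ δ'' ∈ Set.Ioc 0 δ',
        (∀ w ∈ Omega δ'' σ, IsUnit (1 - f w)) ∧
        ∃ μ : ℝ, μ ∈ AddSubgroup.closure S ∧ 0 ≤ μ ∧
        ∃ S' : Set ℝ, S'.Countable ∧ S'.IsWF ∧ S' ⊆ Set.Ici 0 ∧
        ∃ B : ℝ → H →L[ℂ] H,
          (Summable fun γ : S' => ‖B (γ : ℝ)‖ * δ'' ^ (γ : ℝ)) ∧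
          (∀ w ∈ Omega δ'' σ,
            Ring.inverse (1 - f w) =
              Complex.exp (-(μ : ℂ) * w) •
                ∑' γ : S', Complex.exp (((γ : ℝ) : ℂ) * w) • B (γ : ℝ)) ∧
          (∀ γ ∈ S', γ < μ → FiniteRank (B γ)) ∧
          -- finite rank principal parts at the poles away from 0
          (∀ w₀ ∈ Omega δ σ, ¬ IsUnit (1 - f w₀) →
            ∃ n : ℕ, ∃ P : ℕ → H →L[ℂ] H, ∃ g : ℂ → H →L[ℂ] H, ∃ ε > (0 : ℝ),
              DifferentiableOn ℂ g (Metric.ball w₀ ε) ∧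
              (∀ j, FiniteRank (P j)) ∧
              ∀ w ∈ Metric.ball w₀ ε ∩ Omega δ σ, w ≠ w₀ →
                Ring.inverse (1 - f w) =
                  (∑ j ∈ Finset.range n, ((w - w₀) ^ (-(j : ℤ) - 1)) • P j) + g w)) := by
  have hΓ : GoodG (AddSubmonoid.closure S) := by
    refine ⟨Set.IsPWO.addSubmonoid_closure hS0 (Set.isPWO_iff_isWF.2 hSwf), fun γ hγ => ?_⟩
    induction hγ using AddSubmonoid.closure_induction with
    | mem x hx => exact hS0 hx
    | zero => exact le_rfl
    | add x y _ _ hx hy => exact add_nonneg hx hy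
  have hδ0 := hδ'.1
  have hvanish : ∀ x ∉ Set.range ((↑) : S → ℝ), A x = 0 := by
    intro x hx
    exact hsupp x (by simpa using hx)
  have hsumR : Summable fun γ : ℝ => ‖A γ‖ * δ' ^ γ := by
    refine (Subtype.val_injective.summable_iff (fun x hx => ?_)).1 hsum
    rw [hvanish x hx]; simp
  have hHC := HC.of_tsum hΓ hδ0
    (fun γ hγ => hsupp γ fun hc => hγ (AddSubmonoid.subset_closure hc)) hsumR
  set F : ℂ → H →L[ℂ] H := fun w => ∑' γ : ℝ, Complex.exp ((γ : ℂ) * w) • A γ with hF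
  have hfF : ∀ w ∈ Omega δ' σ, f w = F w := by
    intro w hw
    rw [hf w hw]
    refine HasSum.tsum_eq ?_
    refine (Function.Injective.hasSum_iff (g := ((↑) : S → ℝ)) Subtype.val_injective
      (f := fun γ : ℝ => Complex.exp ((γ : ℂ) * w) • A γ) (fun x hx => ?_)).2 (hHC.hs w hw.1)
    rw [hvanish x hx]; simp
  have hopen := Omega_open δ σ
  have hconn := (Omega_convex δ σ).isPreconnected
  have hpt : ∀ w₀ ∈ Omega δ σ, _ := fun w₀ hw₀ =>
    point_fredholm (hhol.analyticAt (hopen.mem_nhds hw₀)) (hfcpt w₀ hw₀)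
  have hball : ∀ (w₀ : ℂ) (ε : ℝ), 0 < ε → ∀ Q : ℂ → Prop,
      (∀ w ∈ Metric.ball w₀ ε, w ≠ w₀ → Q w) → ∀ᶠ y in nhdsWithin w₀ {w₀}ᶜ, Q y := by
    intro w₀ ε hε Q hQ
    rw [eventually_nhdsWithin_iff]
    filter_upwards [Metric.ball_mem_nhds w₀ hε] with y hy hne
    exact hQ y hy hne
  have hdich : ∀ x ∈ Omega δ σ, (∀ᶠ y in nhdsWithin x {x}ᶜ, IsUnit (1 - f y)) ∨
      (∀ᶠ y in nhdsWithin x {x}ᶜ, ¬ IsUnit (1 - f y)) := by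
    intro x hx
    obtain ⟨ε, hε, h | ⟨h, -⟩⟩ := hpt x hx
    · exact Or.inr (hball x ε hε _ h)
    · exact Or.inl (hball x ε hε _ h)
  have hpick : ∀ s : ℝ, ((Real.log s - 1 : ℝ) : ℂ) ∈ Omega s σ := by
    intro s
    refine ⟨?_, ?_⟩
    · rw [Complex.ofReal_re]; linarith
    · rw [Complex.ofReal_im]; simpa using hσ
  obtain ⟨r, hr, hcase⟩ := local_fredholm hΓ hδ0 hHC (hAcpt 0)
  have hrΩ' := Omega_mono hr.1 hr.2 σ
  have hrΩ := hrΩ'.trans (Omega_mono hδ0 hδ'.2 σ)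
  rcases hcase with hbad | ⟨hgood, μ, hμ, Γ', hΓ', hcl, B, hB, hBf⟩
  · left
    constructor
    · intro w hw hu
      have h1 : ∀ᶠ y in nhdsWithin w {w}ᶜ, IsUnit (1 - f y) := by
        have hcont : ContinuousAt (fun y => 1 - f y) w :=
          continuousAt_const.sub (hhol.differentiableAt (hopen.mem_nhds hw)).continuousAt
        exact (hcont.eventually (Units.isOpen.mem_nhds hu)).filter_mono nhdsWithin_le_nhds
      refine dichotomy hconn _ hdich hw (hrΩ (hpick r)) h1 ?_
      have h2 : ∀ᶠ y in nhds ((Real.log r - 1 : ℝ) : ℂ), ¬ IsUnit (1 - f y) := by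
        filter_upwards [(Omega_open r σ).mem_nhds (hpick r)] with y hy
        rw [hfF y (hrΩ' hy)]
        exact hbad y hy.1
      exact h2.filter_mono nhdsWithin_le_nhds
    · intro hu
      obtain ⟨ε, hε, hsub⟩ := Metric.isOpen_iff.1 (Units.isOpen (R := H →L[ℂ] H)) _ hu
      obtain ⟨r', hr', hn⟩ := hHC.near_zero hΓ hδ0 hε
      let x : ℝ := min (Real.log r) (Real.log r') - 1
      have hx1 : ((x : ℝ) : ℂ).re < Real.log r := by
        rw [Complex.ofReal_re]; linarith [min_le_left (Real.log r) (Real.log r')]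
      have hx2 : ((x : ℝ) : ℂ).re < Real.log r' := by
        rw [Complex.ofReal_re]; linarith [min_le_right (Real.log r) (Real.log r')]
      apply hbad _ hx1
      apply hsub
      have e : (1 - F (x : ℂ)) - (1 - A 0) = -(F (x : ℂ) - A 0) := by abel
      rw [Metric.mem_ball, dist_eq_norm, e, norm_neg]
      exact hn _ hx2
  · right
    have hunit : ∀ w ∈ Omega r σ, IsUnit (1 - f w) := by
      intro w hw
      rw [hfF w (hrΩ' hw)]
      exact hgood w hw.1
    have hgoodpt : ∀ᶠ y in nhdsWithin ((Real.log r - 1 : ℝ) : ℂ) {((Real.log r - 1 : ℝ) : ℂ)}ᶜ,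
        IsUnit (1 - f y) := by
      have h2 : ∀ᶠ y in nhds ((Real.log r - 1 : ℝ) : ℂ), IsUnit (1 - f y) := by
        filter_upwards [(Omega_open r σ).mem_nhds (hpick r)] with y hy
        exact hunit y hy
      exact h2.filter_mono nhdsWithin_le_nhds
    have hnobad : ∀ w₀ ∈ Omega δ σ, ∀ ε > (0 : ℝ),
        ¬ (∀ w ∈ Metric.ball w₀ ε, w ≠ w₀ → ¬ IsUnit (1 - f w)) := by
      intro w₀ hw₀ ε hε hb
      exact dichotomy hconn _ hdich (hrΩ (hpick r)) hw₀ hgoodpt (hball w₀ ε hε _ hb)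
    refine ⟨?_, r, hr, hunit, μ, ?_, hΓ.2 μ hμ, {γ | B γ ≠ 0}, ?_, ?_, ?_, B, ?_, ?_, ?_, ?_⟩
    · intro w₀ hw₀
      obtain ⟨ε, hε, h | ⟨h, -⟩⟩ := hpt w₀ hw₀
      · exact absurd h (hnobad w₀ hw₀ ε hε)
      · refine ⟨ε, hε, fun w _ hnu hw => ?_⟩
        by_contra hne
        exact hnu (h w hw hne)
    · have : AddSubmonoid.closure S ≤ (AddSubgroup.closure S).toAddSubmonoid := by
        rw [AddSubmonoid.closure_le]
        exact AddSubgroup.subset_closure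
      exact this hμ
    · refine hB.summ.countable_support.mono fun γ hγ => ?_
      have := hr.1
      have h2 : ‖B γ‖ ≠ 0 := norm_ne_zero_iff.2 hγ
      exact mul_ne_zero h2 (Real.rpow_pos_of_pos this γ).ne'
    · refine (hΓ'.1.mono fun γ hγ => ?_).isWF
      by_contra hc
      exact hγ (hB.supp γ hc)
    · intro γ hγ
      apply hΓ'.2
      by_contra hc
      exact hγ (hB.supp γ hc)
    · exact hB.summ.comp_injective Subtype.val_injective
    · intro w hw
      have h1 := hB.hs w hw.1
      have h2 : HasSum (fun γ : {γ | B γ ≠ 0} => Complex.exp (((γ : ℝ) : ℂ) * w) • B (γ : ℝ))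
          (Complex.exp ((μ : ℂ) * w) • Ring.inverse (1 - F w)) := by
        refine (Subtype.val_injective.hasSum_iff (fun x hx => ?_)).2 h1
        have : B x = 0 := by
          by_contra hc
          exact hx ⟨⟨x, hc⟩, rfl⟩
        rw [this, smul_zero]
      rw [h2.tsum_eq, smul_smul, ← Complex.exp_add, hfF w (hrΩ' hw)]
      simp
    · intro γ _ hγ
      exact hBf γ hγ
    · intro w₀ hw₀ _
      obtain ⟨ε, hε, h | ⟨-, n, P, g, h1, h2, h3⟩⟩ := hpt w₀ hw₀
      · exact absurd h (hnobad w₀ hw₀ ε hε)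
      · exact ⟨n, P, g, ε, hε, h1, h2, fun w hw hne => h3 w hw.1 hne⟩
end
end

section
/- Monotonicity of the functions z^α(−log z)^{−β} (Lemma 6.1 a): Let σ > 0 and N ∈ ℕ₀. There exists r_N ∈ (0,1), depending only on N and σ, such that for every pair (α,β) ∈ ℝ² satisfying both (α,β) > (0,0) in the lexicographic order (i.e. α > 0, or α = 0 and β > 0) and −β ≤ Nα, and for every θ with |θ| < σ, the function r ↦ r^α · ((log r)² + θ²)^{−β/2} is monotone increasing on the interval (0, r_N). -/
noncomputable section

/-- Monotonicity of the functions `z^α (−log z)^{−β}` on the logarithmic cover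
(Lemma 6.1 a). -/
theorem monotone_zlogz
    (σ : ℝ) (hσ : 0 < σ) (N : ℕ) :
    ∃ rN ∈ Set.Ioo (0 : ℝ) 1, ∀ α β : ℝ,
      (0 < α ∨ (α = 0 ∧ 0 < β)) → -β ≤ N * α →
      ∀ θ : ℝ, |θ| < σ →
      MonotoneOn (fun r : ℝ => r ^ α * ((Real.log r) ^ 2 + θ ^ 2) ^ (-β / 2))
        (Set.Ioo 0 rN) := by
  have hN : (0 : ℝ) ≤ N := Nat.cast_nonneg N
  refine ⟨Real.exp (-((N : ℝ) + 1)), ⟨Real.exp_pos _, Real.exp_lt_one_iff.2 (by linarith)⟩, ?_⟩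
  intro α β hab hβ θ _ x hx y hy hxy
  have hα : 0 ≤ α := by
    rcases hab with h | h
    · exact h.le
    · exact h.1.ge
  have hly : Real.log y < -((N : ℝ) + 1) := (Real.log_lt_iff_lt_exp hy.1).2 hy.2
  have hlxy : Real.log x ≤ Real.log y := Real.log_le_log hx.1 hxy
  dsimp only
  rw [Real.rpow_def_of_pos hx.1, Real.rpow_def_of_pos hy.1]
  obtain ⟨a, ha⟩ : ∃ a, a = -Real.log x := ⟨_, rfl⟩
  obtain ⟨b, hb⟩ : ∃ b, b = -Real.log y := ⟨_, rfl⟩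
  rw [show Real.log x = -a by linarith, show Real.log y = -b by linarith, neg_sq, neg_sq]
  have hbN : (N : ℝ) + 1 < b := by linarith
  have hba : b ≤ a := by linarith
  have hb0 : 0 < b := by linarith
  have ha0 : 0 < a := by linarith
  have hA : 0 < a ^ 2 + θ ^ 2 := by positivity
  have hB : 0 < b ^ 2 + θ ^ 2 := by positivity
  rw [Real.rpow_def_of_pos hA, Real.rpow_def_of_pos hB, ← Real.exp_add, ← Real.exp_add]
  apply Real.exp_le_exp.2
  have hsq : b ^ 2 ≤ a ^ 2 := by gcongr
  have h1 : Real.log (b ^ 2 + θ ^ 2) ≤ Real.log (a ^ 2 + θ ^ 2) :=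
    Real.log_le_log hB (by linarith)
  have h2 : Real.log (a ^ 2 + θ ^ 2) - Real.log (b ^ 2 + θ ^ 2) ≤ 2 * (a / b - 1) := by
    rw [← Real.log_div hA.ne' hB.ne']
    have h3 : (a ^ 2 + θ ^ 2) / (b ^ 2 + θ ^ 2) ≤ (a / b) ^ 2 := by
      rw [div_pow, div_le_div_iff₀ hB (by positivity)]
      nlinarith [mul_nonneg (sub_nonneg.2 hsq) (sq_nonneg θ)]
    calc _ ≤ Real.log ((a / b) ^ 2) := Real.log_le_log (by positivity) h3
      _ = 2 * Real.log (a / b) := by rw [Real.log_pow]; norm_num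
      _ ≤ _ := by linarith [Real.log_le_sub_one_of_pos (div_pos ha0 hb0)]
  have h4 : (N : ℝ) * (a / b - 1) ≤ a - b := by
    have h5 : 0 ≤ a / b - 1 := by
      have := (one_le_div hb0).2 hba
      linarith
    calc (N : ℝ) * (a / b - 1) ≤ b * (a / b - 1) := by gcongr; linarith
      _ = a - b := by field_simp
  have h6 := mul_le_mul_of_nonneg_right hβ (sub_nonneg.2 h1)
  have h7 := mul_le_mul_of_nonneg_left h2 (mul_nonneg hN hα)
  have h8 := mul_le_mul_of_nonneg_left h4 hα
  nlinarith
end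
end

section
/- Weak monotonicity of the functions z^α(−log z)^{−β} (Lemma 6.1 b): Let σ > 0 and N ∈ ℕ₀, and let r_N ∈ (0,1) be as in Lemma 6.1 a). For every x with 0 < x < r_N there exists ρ = ρ_N(x) with 0 < ρ ≤ x such that for every pair (α,β) ∈ ℝ² satisfying both (α,β) > (0,0) in the lexicographic order (i.e. α > 0, or α = 0 and β > 0) and −β ≤ Nα, and for all r, θ with 0 < r ≤ ρ and |θ| < σ, one has r^α · ((log r)² + θ²)^{−β/2} ≤ x^α · (−log x)^{−β}. -/
noncomputable section

/-- Weak monotonicity of the functions `z^α (−log z)^{−β}` (Lemma 6.1 b),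
assuming the monotonicity statement of Lemma 6.1 a) for the radius `rN`. -/
theorem weak_monotonicity_zlogz
    (σ : ℝ) (hσ : 0 < σ) (N : ℕ)
    (rN : ℝ) (hrN : rN ∈ Set.Ioo (0 : ℝ) 1)
    (hmono : ∀ α β : ℝ,
      (0 < α ∨ (α = 0 ∧ 0 < β)) → -β ≤ N * α →
      ∀ θ : ℝ, |θ| < σ →
      MonotoneOn (fun r : ℝ => r ^ α * ((Real.log r) ^ 2 + θ ^ 2) ^ (-β / 2))
        (Set.Ioo 0 rN)) :
    ∀ x : ℝ, 0 < x → x < rN →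
      ∃ ρ : ℝ, 0 < ρ ∧ ρ ≤ x ∧
        ∀ α β : ℝ, (0 < α ∨ (α = 0 ∧ 0 < β)) → -β ≤ N * α →
        ∀ r θ : ℝ, 0 < r → r ≤ ρ → |θ| < σ →
          r ^ α * ((Real.log r) ^ 2 + θ ^ 2) ^ (-β / 2) ≤
            x ^ α * (-Real.log x) ^ (-β) := by
  intro x hx hxr
  have hx1 : x < 1 := hxr.trans hrN.2
  have hl : 0 < -Real.log x := by
    have := Real.log_neg hx hx1
    linarith
  set l : ℝ := -Real.log x with hldef
  obtain ⟨C, hC⟩ : ∃ C : ℝ, C = (1 + σ ^ 2 / l ^ 2) / l ^ 2 := ⟨_, rfl⟩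
  have ht1 : Filter.Tendsto (fun r : ℝ => -Real.log r) (nhdsWithin 0 (Set.Ioi 0)) Filter.atTop :=
    Filter.tendsto_neg_atBot_atTop.comp Real.tendsto_log_nhdsGT_zero
  have ht2 := ((Real.tendsto_pow_mul_exp_neg_atTop_nhds_zero (2 * N)).comp ht1).const_mul (C ^ N)
  rw [mul_zero] at ht2
  have hev := ht2.eventually (gt_mem_nhds hx)
  obtain ⟨u, hu, hsub⟩ := mem_nhdsGT_iff_exists_Ioc_subset.1 hev
  have hu0 : 0 < u := hu
  refine ⟨min u x, lt_min hu0 hx, min_le_right _ _, ?_⟩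
  intro α β hab hN r θ hr hrρ hθ
  have hrx : r ≤ x := hrρ.trans (min_le_right _ _)
  have hkey := hsub ⟨hr, hrρ.trans (min_le_left _ _)⟩
  simp only [Set.mem_setOf_eq, Function.comp, neg_neg, Real.exp_log hr] at hkey
  have hα : 0 ≤ α := by
    rcases hab with h | h
    · exact h.le
    · exact h.1.ge
  have hlog : Real.log r ≤ Real.log x := Real.log_le_log hr hrx
  have hL : l ≤ -Real.log r := by linarith
  have hL2 : l ^ 2 ≤ Real.log r ^ 2 := by nlinarith
  have hl2 : 0 < l ^ 2 := by positivity
  have hpow : ∀ t : ℝ, (l ^ 2) ^ (t / 2) = l ^ t := by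
    intro t
    rw [← Real.rpow_natCast, ← Real.rpow_mul hl.le]
    congr 1
    push_cast
    ring
  rcases le_or_gt 0 β with hβ | hβ
  · have h1 : (Real.log r ^ 2 + θ ^ 2) ^ (-β / 2) ≤ (l ^ 2) ^ (-β / 2) :=
      Real.rpow_le_rpow_of_nonpos hl2 (by nlinarith [sq_nonneg θ]) (by linarith)
    rw [hpow] at h1
    exact mul_le_mul (Real.rpow_le_rpow hr.le hrx hα) h1 (by positivity) (by positivity)
  · obtain ⟨D, hD⟩ : ∃ D : ℝ, D = (Real.log r ^ 2 + θ ^ 2) / l ^ 2 := ⟨_, rfl⟩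
    have hT : Real.log r ^ 2 + θ ^ 2 = l ^ 2 * D := by
      rw [hD]; field_simp
    have hD1 : 1 ≤ D := by
      rw [hD, le_div_iff₀ hl2]
      nlinarith [sq_nonneg θ]
    have hDC : D ≤ C * Real.log r ^ 2 := by
      have h3 : θ ^ 2 ≤ σ ^ 2 := by
        rw [← sq_abs θ]
        exact pow_le_pow_left₀ (abs_nonneg _) hθ.le 2
      have h4 : σ ^ 2 ≤ σ ^ 2 / l ^ 2 * Real.log r ^ 2 := by
        calc σ ^ 2 = σ ^ 2 / l ^ 2 * l ^ 2 := by field_simp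
          _ ≤ _ := by gcongr
      rw [hD, hC, div_mul_eq_mul_div]
      gcongr
      linarith
    have hkey2 : r * D ^ N ≤ x := by
      have h5 : D ^ N ≤ (C * Real.log r ^ 2) ^ N := by gcongr
      have h6 : r * (C * Real.log r ^ 2) ^ N = C ^ N * ((-Real.log r) ^ (2 * N) * r) := by
        rw [pow_mul, neg_sq, mul_pow]; ring
      calc r * D ^ N ≤ r * (C * Real.log r ^ 2) ^ N := by gcongr
        _ ≤ x := by rw [h6]; exact hkey.le
    have hD0 : 0 ≤ D := by linarith
    have h7 : D ^ (-β / 2) ≤ (D ^ N) ^ α := by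
      rw [← Real.rpow_natCast, ← Real.rpow_mul hD0]
      exact Real.rpow_le_rpow_of_exponent_le hD1 (by linarith)
    rw [hT, Real.mul_rpow hl2.le hD0, hpow]
    calc r ^ α * (l ^ (-β) * D ^ (-β / 2)) ≤ r ^ α * (l ^ (-β) * (D ^ N) ^ α) := by gcongr
      _ = (r * D ^ N) ^ α * l ^ (-β) := by
        rw [Real.mul_rpow hr.le (by positivity)]; ring
      _ ≤ x ^ α * l ^ (-β) := by
        gcongr
end
end

section
/- κ-suitability of square roots of integers (Lemma 7.7): For every κ > 0, the set { 1 / ((2κ)^{√q} · |sin(√q · π)| · Γ(√q + 1)) : q ∈ ℕ, √q ∉ ℕ } is a bounded subset of ℝ. Equivalently, for every κ > 0 there exists M > 0 such that (2κ)^{√q} · |sin(√q π)| · Γ(√q + 1) ≥ 1/M for every positive integer q that is not a perfect square. -/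
noncomputable section

lemma sin_aux (t d : ℝ) (hd : 0 ≤ d) (h1 : d ≤ t) (h2 : d ≤ 1 - t) :
    2 * d ≤ Real.sin (t * Real.pi) := by
  have hp := Real.pi_pos
  rcases le_total t (1/2) with h | h
  · have := Real.mul_le_sin (x := t * Real.pi) (by apply mul_nonneg <;> linarith) (by nlinarith)
    have e : 2 / Real.pi * (t * Real.pi) = 2 * t := by field_simp
    linarith
  · have := Real.mul_le_sin (x := (1 - t) * Real.pi) (by apply mul_nonneg <;> linarith)
      (by nlinarith)
    have e : 2 / Real.pi * ((1 - t) * Real.pi) = 2 * (1 - t) := by field_simp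
    have e2 : Real.sin ((1 - t) * Real.pi) = Real.sin (t * Real.pi) := by
      rw [← Real.sin_pi_sub]; congr 1; ring
    linarith

lemma key_aux (κ : ℝ) (hκ : 0 < κ) : ∃ M : ℝ, 0 < M ∧ ∀ q : ℕ, 0 < q → (¬ ∃ n : ℕ, n ^ 2 = q) →
      (2 * κ) ^ Real.sqrt q * |Real.sin (Real.sqrt q * Real.pi)| *
        Real.Gamma (Real.sqrt q + 1) ≥ 1 / M := by
  obtain ⟨c, hc0, hc1, hcκ⟩ : ∃ c : ℝ, 0 < c ∧ c ≤ 1 ∧ c ≤ 2 * κ :=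
    ⟨min 1 (2 * κ), by positivity, min_le_left _ _, min_le_right _ _⟩
  refine ⟨Real.exp (2 / c) / c, by positivity, ?_⟩
  intro q hq hns
  obtain ⟨n, hn⟩ : ∃ n, n = Nat.sqrt q := ⟨_, rfl⟩
  have hn1 : 1 ≤ n := by rw [hn]; exact Nat.sqrt_pos.2 hq
  have ha : n ^ 2 + 1 ≤ q := by
    have h := Nat.sqrt_le' q
    rw [← hn] at h
    have : n ^ 2 ≠ q := fun h => hns ⟨n, h⟩
    omega
  have hb : q + 1 ≤ (n + 1) ^ 2 := by
    have h := Nat.lt_succ_sqrt' q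
    rw [← hn] at h
    exact h
  have ha' : (n : ℝ) ^ 2 + 1 ≤ q := by exact_mod_cast ha
  have hb' : (q : ℝ) + 1 ≤ (n + 1) ^ 2 := by exact_mod_cast hb
  have hn1' : (1 : ℝ) ≤ n := by exact_mod_cast hn1
  obtain ⟨s, hs⟩ : ∃ s, s = Real.sqrt q := ⟨_, rfl⟩
  have hs0 : 0 ≤ s := hs ▸ Real.sqrt_nonneg _
  have hss : s ^ 2 = q := by rw [hs]; exact Real.sq_sqrt (by positivity)
  rw [← hs]
  have hsn : (n : ℝ) < s := by nlinarith
  have hsn' : s < n + 1 := by nlinarith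
  have hsin : 1 / ((n : ℝ) + 1) ≤ |Real.sin (s * Real.pi)| := by
    have h := sin_aux (s - n) (1 / (2 * ((n : ℝ) + 1))) (by positivity)
      (by rw [div_le_iff₀ (by positivity)]; nlinarith)
      (by rw [div_le_iff₀ (by positivity)]; nlinarith)
    have e : Real.sin (s * Real.pi) = (-1) ^ n * Real.sin ((s - n) * Real.pi) := by
      have := Real.sin_add_nat_mul_pi ((s - n) * Real.pi) n
      rw [← this]; congr 1; ring
    rw [e, abs_mul, abs_pow, abs_neg, abs_one, one_pow, one_mul]
    refine le_trans (le_of_eq ?_) (h.trans (le_abs_self _))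
    field_simp
  have hG : (n.factorial : ℝ) ≤ Real.Gamma (s + 1) := by
    rw [← Real.Gamma_nat_eq_factorial]
    exact Real.Gamma_strictMonoOn_Ici.monotoneOn (by simp; linarith) (by simp; linarith)
      (by linarith)
  have hP : c ^ (n + 1) ≤ (2 * κ) ^ s := by
    calc c ^ (n + 1) = c ^ ((n + 1 : ℕ) : ℝ) := (Real.rpow_natCast _ _).symm
      _ ≤ c ^ s := Real.rpow_le_rpow_of_exponent_ge hc0 hc1 (by push_cast; linarith)
      _ ≤ _ := Real.rpow_le_rpow hc0.le hcκ hs0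
  have hmain : c ^ (n + 1) * (1 / ((n : ℝ) + 1)) * n.factorial ≤
      (2 * κ) ^ s * |Real.sin (s * Real.pi)| * Real.Gamma (s + 1) := by
    gcongr
  refine le_trans ?_ hmain
  have hexp := Real.pow_div_factorial_le_exp (2 / c) (by positivity) n
  have h2 : (n : ℝ) + 1 ≤ 2 ^ n := by exact_mod_cast Nat.lt_two_pow_self (n := n)
  have hf : (0 : ℝ) < n.factorial := by positivity
  rw [div_pow, div_div, div_le_iff₀ (by positivity)] at hexp
  rw [one_div_div, div_le_iff₀ (Real.exp_pos _)]
  have : c ^ (n + 1) * (1 / ((n : ℝ) + 1)) * n.factorial * Real.exp (2 / c)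
      = c * (Real.exp (2 / c) * (c ^ n * n.factorial)) / (n + 1) := by
    rw [pow_succ]; ring
  rw [this, le_div_iff₀ (by positivity)]
  exact mul_le_mul_of_nonneg_left (h2.trans hexp) hc0.le

/-- κ-suitability of square roots of integers (Lemma 7.7). -/
theorem kappa_suitable_sqrt_integers (κ : ℝ) (hκ : 0 < κ) :
    Bornology.IsBounded
      {r : ℝ | ∃ q : ℕ, 0 < q ∧ (¬ ∃ n : ℕ, n ^ 2 = q) ∧
        r = ((2 * κ) ^ Real.sqrt q * |Real.sin (Real.sqrt q * Real.pi)| *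
          Real.Gamma (Real.sqrt q + 1))⁻¹} ∧
    ∃ M : ℝ, 0 < M ∧ ∀ q : ℕ, 0 < q → (¬ ∃ n : ℕ, n ^ 2 = q) →
      (2 * κ) ^ Real.sqrt q * |Real.sin (Real.sqrt q * Real.pi)| *
        Real.Gamma (Real.sqrt q + 1) ≥ 1 / M := by
  obtain ⟨M, hM, h⟩ := key_aux κ hκ
  refine ⟨?_, M, hM, h⟩
  refine (Metric.isBounded_Icc 0 M).subset ?_
  rintro r ⟨q, hq, hns, rfl⟩
  have h1 := h q hq hns
  have hp : 0 < 1 / M := by positivity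
  refine ⟨inv_nonneg.2 (hp.le.trans h1), ?_⟩
  exact inv_le_of_inv_le₀ hM (by rw [← one_div]; exact h1)
end
end

section
/- Sine bounds for square roots of non-square integers: Let q be a positive integer that is not a perfect square and set ν := √q. Then (ν+1)·|sin(νπ)| > 1 and ν·|sin(νπ)| > 2/3; equivalently 1/((ν+1)|sin(νπ)|) < 1 and 1/(ν|sin(νπ)|) < 3/2. -/
noncomputable section

/-- Sine bounds for square roots of non-square integers. -/
theorem sine_bounds_sqrt_nonsquare
    (q : ℕ) (hq : 0 < q) (hns : ¬ ∃ n : ℕ, n ^ 2 = q) :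
    (Real.sqrt q + 1) * |Real.sin (Real.sqrt q * Real.pi)| > 1 ∧
    Real.sqrt q * |Real.sin (Real.sqrt q * Real.pi)| > 2 / 3 ∧
    ((Real.sqrt q + 1) * |Real.sin (Real.sqrt q * Real.pi)|)⁻¹ < 1 ∧
    (Real.sqrt q * |Real.sin (Real.sqrt q * Real.pi)|)⁻¹ < 3 / 2 := by
  obtain ⟨n, hn⟩ : ∃ n, n = Nat.sqrt q := ⟨_, rfl⟩
  have h1 : n ^ 2 + 1 ≤ q := by
    have h := Nat.sqrt_le' q
    rw [← hn] at h
    exact lt_of_le_of_ne h (fun h' => hns ⟨n, h'⟩)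
  have h2 : q + 1 ≤ (n + 1) ^ 2 := by
    have h := Nat.lt_succ_sqrt' q
    rw [← hn] at h
    exact h
  have hn1 : 1 ≤ n := by
    rw [hn]; exact Nat.sqrt_pos.2 hq
  have h1r : (n : ℝ) ^ 2 + 1 ≤ q := by exact_mod_cast h1
  have h2r : (q : ℝ) + 1 ≤ ((n : ℝ) + 1) ^ 2 := by exact_mod_cast h2
  have hn1r : (1 : ℝ) ≤ n := by exact_mod_cast hn1
  have hv : Real.sqrt q ^ 2 = q := Real.sq_sqrt (by positivity)
  have hv0 : 0 ≤ Real.sqrt q := Real.sqrt_nonneg _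
  generalize Real.sqrt q = v at hv hv0 ⊢
  have hnv : (n : ℝ) < v := by nlinarith
  have hvn : v < n + 1 := by nlinarith
  have hpi := Real.pi_pos
  have key : ∀ x : ℝ, 0 ≤ x → x ≤ 1 / 2 → 2 * x ≤ Real.sin (x * Real.pi) := by
    intro x hx hx'
    have h := Real.mul_le_sin (x := x * Real.pi) (by positivity) (by nlinarith)
    have e : 2 / Real.pi * (x * Real.pi) = 2 * x := by field_simp
    rwa [e] at h
  have hs : |Real.sin (v * Real.pi)| = |Real.sin ((v - n) * Real.pi)| := by
    rw [sub_mul, Real.sin_sub_nat_mul_pi, abs_mul]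
    simp
  have hS : 2 ≤ |Real.sin (v * Real.pi)| * (n + 1 + v) := by
    rw [hs]
    have hle := le_abs_self (Real.sin ((v - n) * Real.pi))
    rcases le_total (v - n) (1 / 2) with h | h
    · have k := key (v - n) (by linarith) h
      have : 2 * (v - n) * (n + 1 + v) ≤ |Real.sin ((v - n) * Real.pi)| * (n + 1 + v) :=
        mul_le_mul_of_nonneg_right (k.trans hle) (by linarith)
      nlinarith
    · have k := key (1 - (v - n)) (by linarith) (by linarith)
      rw [sub_mul, one_mul, Real.sin_pi_sub] at k
      have : 2 * (1 - (v - n)) * (n + 1 + v) ≤ |Real.sin ((v - n) * Real.pi)| * (n + 1 + v) :=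
        mul_le_mul_of_nonneg_right (k.trans hle) (by linarith)
      nlinarith
  generalize |Real.sin (v * Real.pi)| = S at hS
  have hS0 : 0 < S := by
    by_contra h
    nlinarith
  have a : (v + 1) * S > 1 := by nlinarith
  have b : v * S > 2 / 3 := by nlinarith
  refine ⟨a, b, inv_lt_one_of_one_lt₀ a, ?_⟩
  rw [inv_lt_comm₀ (by linarith) (by norm_num)]
  norm_num
  linarith
end
end

section
/- Nonvanishing near zero and meromorphy of reciprocals (z-case): Let δ > 0, σ ∈ (0,∞], and let f : Ω(δ,σ) → ℂ be z-Hahn holomorphic, represented on Ω(δ',σ) by the normally convergent series f(w) = ∑_{α∈S} a_α e^{αw}, and assume f is not identically zero, so that m := min{α ∈ S : a_α ≠ 0} exists with a_m ≠ 0. Then there exists δ'' ∈ (0,δ'] such that f(w) ≠ 0 for all w ∈ Ω(δ'',σ), and the function w ↦ e^{mw} / f(w) is z-Hahn holomorphic on Ω(δ'',σ) with value 1/a_m at zero. -/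
noncomputable section

section aux

lemma pow_aux {I R : Type*} [NormedField R] [CompleteSpace R] (x : I → R) (hx : Summable fun i => ‖x i‖) (n : ℕ) :
    (Summable fun p : Fin n → I => ‖∏ k, x (p k)‖) ∧ 
    ∑' p : Fin n → I, ∏ k, x (p k) = (∑' i, x i) ^ n := by
  induction n with
  | zero => 
    refine ⟨(hasSum_fintype _).summable, by simp⟩
  | succ n ih =>
    constructor
    · rw [← (Fin.consEquiv (fun _ : Fin (n+1) => I)).summable_iff]
      have := hx.mul_norm ih.1
      refine this.congr fun q => ?_
      simp [Fin.prod_univ_succ, Fin.consEquiv]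
    · rw [← (Fin.consEquiv (fun _ : Fin (n+1) => I)).tsum_eq, pow_succ', ← ih.2,
        tsum_mul_tsum_of_summable_norm hx ih.1]
      refine tsum_congr fun q => ?_
      simp [Fin.prod_univ_succ, Fin.consEquiv]

lemma geom_aux {I R : Type*} [NormedField R] [CompleteSpace R] (x : I → R) (hx : Summable fun i => ‖x i‖)
    (h1 : ∑' i, ‖x i‖ < 1) :
    (Summable fun p : Σ n : ℕ, (Fin n → I) => ‖∏ k, x (p.2 k)‖) ∧
    ∑' p : Σ n : ℕ, (Fin n → I), ∏ k, x (p.2 k) = (1 - ∑' i, x i)⁻¹ := by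
  have hs : Summable fun p : Σ n : ℕ, (Fin n → I) => ‖∏ k, x (p.2 k)‖ := by
    rw [summable_sigma_of_nonneg (fun _ => norm_nonneg _)]
    refine ⟨fun n => (pow_aux x hx n).1, ?_⟩
    have : ∀ n : ℕ, ∑' p : Fin n → I, ‖∏ k, x (p k)‖ = (∑' i, ‖x i‖) ^ n := by
      intro n
      rw [← (pow_aux (fun i => ‖x i‖) (by simpa using hx) n).2]
      simp
    simp only [this]
    exact summable_geometric_of_lt_one (tsum_nonneg fun _ => norm_nonneg _) h1
  refine ⟨hs, ?_⟩
  have h2 : Summable fun p : Σ n : ℕ, (Fin n → I) => ∏ k, x (p.2 k) := hs.of_norm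
  have h3 := h2.tsum_sigma
  rw [h3]
  have h4 : ∀ n : ℕ, ∑' p : Fin n → I, ∏ k, x (p k) = (∑' i, x i) ^ n :=
    fun n => (pow_aux x hx n).2
  refine (tsum_congr h4).trans ?_
  exact tsum_geometric_of_norm_lt_one ((norm_tsum_le_tsum_norm hx).trans_lt h1)

lemma main_aux {I : Type*} [Countable I] (e : I → ℝ) (he : ∀ i, 0 < e i) (hwf : (Set.range e).IsPWO)
    (b : I → ℂ) (r : ℝ) (hr : 0 < r) (hs : Summable fun i => ‖b i‖ * r ^ e i)
    (h1 : ∑' i, ‖b i‖ * r ^ e i < 1) :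
    ∃ S' : Set ℝ, S'.Countable ∧ S'.IsWF ∧ S' ⊆ Set.Ici 0 ∧
        ∃ cc : ℝ → ℂ, (∀ γ ∉ S', cc γ = 0) ∧
          (Summable fun γ : S' => ‖cc (γ : ℝ)‖ * r ^ (γ : ℝ)) ∧
          (∀ w : ℂ, w.re < Real.log r →
            1 - ∑' i, b i * Complex.exp (((e i : ℝ) : ℂ) * w) ≠ 0 ∧
            (1 - ∑' i, b i * Complex.exp (((e i : ℝ) : ℂ) * w))⁻¹ =
              ∑' γ : S', Complex.exp (((γ : ℝ) : ℂ) * w) * cc (γ : ℝ)) ∧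
          cc 0 = 1 := by
  set φ : (Σ n : ℕ, (Fin n → I)) → ℝ := fun p => ∑ k, e (p.2 k) with hφ
  set c : (Σ n : ℕ, (Fin n → I)) → ℂ := fun p => ∏ k, b (p.2 k) with hc
  have hsum : Summable fun p => ‖c p‖ * r ^ φ p := by
    have := (geom_aux (fun i => ‖b i‖ * r ^ e i) (by simpa [abs_of_pos (Real.rpow_pos_of_pos hr _)] using hs)
      (by simpa [abs_of_pos (Real.rpow_pos_of_pos hr _)] using h1)).1
    refine this.congr fun p => ?_
    simp [hφ, hc, Finset.prod_mul_distrib, Real.rpow_sum_of_pos hr, abs_of_pos (Real.rpow_pos_of_pos hr _)]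
  let ψ : (Σ n : ℕ, (Fin n → I)) → Set.range φ := Set.rangeFactorization φ
  let cc : ℝ → ℂ := fun γ => ∑' q : {p // φ p = γ}, c q
  have hfib : ∀ γ : Set.range φ, ∀ F : (Σ n : ℕ, (Fin n → I)) → ℂ,
      ∑' q : {p // φ p = (γ:ℝ)}, F q = ∑' q : {p // ψ p = γ}, F q := by
    intro γ F
    refine ((Equiv.subtypeEquivRight (fun p => ?_)).tsum_eq (fun q : {p // ψ p = γ} => F q))
    simp [ψ, Subtype.ext_iff, Set.rangeFactorization]
  have hsub : ∀ γ, Summable fun q : {p // φ p = γ} => ‖c q‖ := by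
    intro γ
    have h2 := (hsum.subtype {p | φ p = γ}).mul_right ((r ^ γ)⁻¹)
    refine h2.congr fun q => ?_
    have : φ q.1 = γ := q.2
    have h3 := (Real.rpow_pos_of_pos hr γ).ne'
    simp [this, h3]
  refine ⟨Set.range φ, Set.countable_range φ, ?_, ?_, cc, ?_, ?_, ?_, ?_⟩
  · refine Set.IsPWO.isWF ((Set.IsPWO.addSubmonoid_closure ?_ hwf).mono ?_)
    · rintro _ ⟨i, rfl⟩; exact (he i).le
    · rintro _ ⟨p, rfl⟩
      exact AddSubmonoid.sum_mem _ fun k _ => AddSubmonoid.subset_closure ⟨_, rfl⟩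
  · rintro _ ⟨p, rfl⟩
    exact Finset.sum_nonneg fun k _ => (he _).le
  · intro γ hγ
    have : IsEmpty {p // φ p = γ} := ⟨fun q => hγ ⟨q.1, q.2⟩⟩
    exact tsum_empty
  · have h2 := (Equiv.sigmaFiberEquiv ψ).summable_iff.2 hsum
    have h3 := h2.sigma
    refine Summable.of_nonneg_of_le (fun γ => by positivity) (fun γ => ?_) h3
    have h4 : ‖cc γ‖ ≤ ∑' q : {p // φ p = (γ:ℝ)}, ‖c q‖ := norm_tsum_le_tsum_norm (hsub _)
    refine (mul_le_mul_of_nonneg_right h4 (by positivity)).trans (le_of_eq ?_)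
    rw [← tsum_mul_right]
    rw [← ((Equiv.subtypeEquivRight (p := fun p => φ p = (γ:ℝ)) (q := fun p => ψ p = γ) (fun p => ?_)).tsum_eq)]
    · refine tsum_congr fun q => ?_
      simp [Equiv.sigmaFiberEquiv, q.2]
    · simp [ψ, Subtype.ext_iff, Set.rangeFactorization]
  · intro w hw
    have hE : ∀ t : ℝ, 0 ≤ t → ‖Complex.exp ((t:ℂ) * w)‖ ≤ r ^ t := by
      intro t ht
      rw [Complex.norm_exp, Real.rpow_def_of_pos hr, mul_comm (Real.log r)]
      simp only [Complex.mul_re, Complex.ofReal_re, Complex.ofReal_im, zero_mul, sub_zero]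
      gcongr
    have hle : ∀ i, ‖b i * Complex.exp (((e i : ℝ) : ℂ) * w)‖ ≤ ‖b i‖ * r ^ e i := fun i => by
      rw [norm_mul]; gcongr; exact hE _ (he i).le
    have hxs : Summable fun i => ‖b i * Complex.exp (((e i : ℝ) : ℂ) * w)‖ :=
      Summable.of_nonneg_of_le (fun _ => norm_nonneg _) hle hs
    have hx1 : ∑' i, ‖b i * Complex.exp (((e i : ℝ) : ℂ) * w)‖ < 1 :=
      (hxs.tsum_le_tsum hle hs).trans_lt h1
    obtain ⟨g1, g2⟩ := geom_aux _ hxs hx1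
    refine ⟨?_, ?_⟩
    · intro h0
      have h5 := (norm_tsum_le_tsum_norm hxs).trans_lt hx1
      rw [← sub_eq_zero.1 h0] at h5
      simp at h5
    · rw [← g2, ← (Equiv.sigmaFiberEquiv ψ).tsum_eq]
      refine ((Equiv.sigmaFiberEquiv ψ).summable_iff.2 g1.of_norm).tsum_sigma.trans ?_
      refine tsum_congr fun γ => ?_
      rw [← tsum_mul_left, hfib γ (fun p => Complex.exp (((γ : ℝ) : ℂ) * w) * c p)]
      refine tsum_congr fun q => ?_
      have : (γ:ℝ) = φ q.1 := congrArg Subtype.val q.2.symm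
      rw [this]
      simp [Equiv.sigmaFiberEquiv, hc, hφ, Finset.prod_mul_distrib, Finset.mul_sum, Complex.exp_sum, mul_comm]
  · have h0 : ∀ q : {p // φ p = 0}, q = ⟨⟨0, Fin.elim0⟩, by simp [hφ]⟩ := by
      rintro ⟨⟨n, p⟩, hq⟩
      cases n with
      | zero => congr; exact Subsingleton.elim _ _
      | succ n => 
        have : 0 < φ ⟨n+1, p⟩ := Finset.sum_pos (fun _ _ => he _) Finset.univ_nonempty
        exact absurd hq this.ne'
    show ∑' q : {p // φ p = 0}, c q = 1
    rw [tsum_eq_single _ (fun q hq => absurd (h0 q) hq)]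
    simp [hc]

end aux

open Filter Topology

set_option maxHeartbeats 2000000

/-- Nonvanishing near zero and Hahn holomorphy of `e^{mw}/f(w)` (z-case). -/
theorem nonvanishing_and_reciprocal_zHahn
    (δ : ℝ) (hδ : 0 < δ) (σ : ENNReal) (hσ : 0 < σ)
    (δ' : ℝ) (hδ' : δ' ∈ Set.Ioc 0 δ)
    (S : Set ℝ) (hSc : S.Countable) (hSwf : S.IsWF) (hS0 : S ⊆ Set.Ici 0)
    (a : ℝ → ℂ) (hsupp : ∀ α ∉ S, a α = 0)
    (hsum : Summable fun α : S => ‖a (α : ℝ)‖ * δ' ^ (α : ℝ))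
    (f : ℂ → ℂ)
    (hhol : DifferentiableOn ℂ f (Omega δ σ))
    (hf : ∀ w ∈ Omega δ' σ, f w = ∑' α : S, Complex.exp (((α : ℝ) : ℂ) * w) * a (α : ℝ))
    (m : ℝ) (hmS : m ∈ S) (hm : a m ≠ 0)
    (hmin : ∀ α ∈ S, a α ≠ 0 → m ≤ α) :
    ∃ δ'' ∈ Set.Ioc 0 δ',
      (∀ w ∈ Omega δ'' σ, f w ≠ 0) ∧
      DifferentiableOn ℂ (fun w => Complex.exp ((m : ℂ) * w) / f w) (Omega δ'' σ) ∧
      ∃ S' : Set ℝ, S'.Countable ∧ S'.IsWF ∧ S' ⊆ Set.Ici 0 ∧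
        ∃ cc : ℝ → ℂ, (∀ γ ∉ S', cc γ = 0) ∧
          (Summable fun γ : S' => ‖cc (γ : ℝ)‖ * δ'' ^ (γ : ℝ)) ∧
          (∀ w ∈ Omega δ'' σ,
            Complex.exp ((m : ℂ) * w) / f w =
              ∑' γ : S', Complex.exp (((γ : ℝ) : ℂ) * w) * cc (γ : ℝ)) ∧
          cc 0 = (a m)⁻¹ := by
  have hδ'0 : 0 < δ' := hδ'.1
  let T : Set ℝ := {α | α ∈ S ∧ m < α}
  have hTS : T ⊆ S := fun α h => h.1
  have hcT : Countable T := (hSc.mono hTS).to_subtype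
  let e : T → ℝ := fun i => (i : ℝ) - m
  have he : ∀ i, 0 < e i := fun i => sub_pos.2 i.2.2
  have hPWO : (Set.range e).IsPWO := by
    have h1 : T.IsPWO := (Set.isPWO_iff_isWF.2 hSwf).mono hTS
    have h2 := h1.image_of_monotone (f := fun x : ℝ => x - m) (fun x y h => sub_le_sub_right h m)
    refine h2.mono ?_
    rintro _ ⟨i, rfl⟩
    exact ⟨i, i.2, rfl⟩
  let b : T → ℂ := fun i => -(a i / a m)
  have hsT : Summable fun i : T => ‖a (i : ℝ)‖ * δ' ^ (i : ℝ) := by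
    have h0 := hsum.comp_injective (i := Set.inclusion hTS) (Set.inclusion_injective hTS)
    exact h0.congr fun i => rfl
  have hb : Summable fun i : T => ‖b i‖ * δ' ^ e i := by
    refine (hsT.mul_right ((δ' ^ m)⁻¹ * ‖a m‖⁻¹)).congr fun i => ?_
    simp only [b, e, norm_neg, norm_div, Real.rpow_sub hδ'0]
    ring
  have hlim : Tendsto (fun r : ℝ => ∑' i : T, ‖b i‖ * r ^ e i) (𝓝[>] 0) (𝓝 (∑' i : T, 0)) := by
    refine tendsto_tsum_of_dominated_convergence hb (fun i => ?_) ?_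
    · have h1 : Tendsto (fun r : ℝ => r ^ e i) (𝓝[>] 0) (𝓝 0) := by
        have := (Real.continuousAt_rpow_const 0 (e i) (Or.inr (he i).le)).tendsto
        rw [Real.zero_rpow (he i).ne'] at this
        exact this.mono_left nhdsWithin_le_nhds
      simpa using h1.const_mul ‖b i‖
    · filter_upwards [Ioc_mem_nhdsGT hδ'0] with r hr i
      have := Real.rpow_le_rpow hr.1.le hr.2 (he i).le
      have h0 := Real.rpow_nonneg hr.1.le (e i)
      rw [Real.norm_of_nonneg (by positivity)]
      gcongr
  rw [tsum_zero] at hlim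
  obtain ⟨r, hr1, hr⟩ := ((hlim.eventually (gt_mem_nhds one_pos)).and (Ioc_mem_nhdsGT hδ'0)).exists
  have hr0 : 0 < r := hr.1
  have hbr : Summable fun i : T => ‖b i‖ * r ^ e i := by
    refine Summable.of_nonneg_of_le (fun i => by positivity) (fun i => ?_) hb
    have := Real.rpow_le_rpow hr.1.le hr.2 (he i).le
    gcongr
  obtain ⟨S', hS'c, hS'wf, hS'0, cc, hcc, hccs, hrep, hcc0⟩ := main_aux e he hPWO b r hr0 hbr hr1
  have hsub' : Omega r σ ⊆ Omega δ' σ := fun w hw =>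
    ⟨hw.1.trans_le (Real.log_le_log hr0 hr.2), hw.2⟩
  have hsub : Omega r σ ⊆ Omega δ σ := fun w hw =>
    ⟨hw.1.trans_le (Real.log_le_log hr0 (hr.2.trans hδ'.2)), hw.2⟩
  have hfact : ∀ w ∈ Omega r σ, f w = Complex.exp ((m : ℂ) * w) * a m *
      (1 - ∑' i, b i * Complex.exp (((e i : ℝ) : ℂ) * w)) := by
    intro w hw
    rw [hf w (hsub' hw)]
    let F : ℝ → ℂ := fun α => Complex.exp ((α : ℂ) * w) * a α
    have hFs : Summable (F ∘ (Subtype.val : T → ℝ)) := by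
      refine Summable.of_norm_bounded hsT fun i => ?_
      have hi : (0:ℝ) ≤ i := hS0 i.2.1
      have hw' := (hsub' hw).1.le
      simp only [Function.comp, F, norm_mul]
      rw [mul_comm, Complex.norm_exp, Real.rpow_def_of_pos hδ'0, mul_comm (Real.log δ')]
      simp only [Complex.mul_re, Complex.ofReal_re, Complex.ofReal_im, zero_mul, sub_zero]
      gcongr
    have h1 : ∑' α : S, F α = F m + ∑' i : T, F i := by
      have h2 : ∑' α : S, F α = ∑' α : ({m} ∪ T : Set ℝ), F α := by
        rw [tsum_subtype S F, tsum_subtype ({m} ∪ T) F]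
        congr 1
        ext α
        by_cases hα : a α = 0
        · have : F α = 0 := by simp [F, hα]
          rw [Set.indicator_apply_eq_zero.2 fun _ => this, Set.indicator_apply_eq_zero.2 fun _ => this]
        · have hS : α ∈ S := by_contra fun h => hα (hsupp α h)
          have h3 := hmin α hS hα
          have h4 : α ∈ ({m} ∪ T : Set ℝ) := by
            rcases h3.eq_or_lt with h | h
            · exact Or.inl h.symm
            · exact Or.inr ⟨hS, h⟩
          rw [Set.indicator_of_mem hS, Set.indicator_of_mem h4]
      rw [h2, Summable.tsum_union_disjoint (f := F) _ (hasSum_fintype _).summable hFs, tsum_singleton m F]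
      rw [Set.disjoint_singleton_left]
      exact fun h => lt_irrefl _ h.2
    refine h1.trans ?_
    rw [mul_sub, mul_one, ← tsum_mul_left, sub_eq_add_neg, ← tsum_neg]
    congr 1
    refine tsum_congr fun i => ?_
    have h5 : Complex.exp (((i : ℝ) : ℂ) * w) =
        Complex.exp ((m : ℂ) * w) * Complex.exp (((e i : ℝ) : ℂ) * w) := by
      rw [← Complex.exp_add]; congr 1; simp only [e]; push_cast; ring
    simp only [F, h5, b]
    field_simp
  have hne : ∀ w ∈ Omega r σ, f w ≠ 0 := by
    intro w hw
    rw [hfact w hw]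
    exact mul_ne_zero (mul_ne_zero (Complex.exp_ne_zero _) hm) (hrep w hw.1).1
  refine ⟨r, hr, hne, ?_, S', hS'c, hS'wf, hS'0, fun γ => (a m)⁻¹ * cc γ, ?_, ?_, ?_, ?_⟩
  · have hexp : DifferentiableOn ℂ (fun w : ℂ => Complex.exp ((m : ℂ) * w)) (Omega r σ) := by
      fun_prop
    exact DifferentiableOn.fun_div hexp (hhol.mono hsub) hne
  · intro γ hγ
    simp [hcc γ hγ]
  · refine (hccs.mul_left ‖(a m)⁻¹‖).congr fun γ => ?_
    rw [norm_mul, mul_assoc]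
  · intro w hw
    obtain ⟨h1, h2⟩ := hrep w hw.1
    have h3 : ∑' γ : S', Complex.exp (((γ : ℝ) : ℂ) * w) * ((a m)⁻¹ * cc (γ : ℝ)) =
        (a m)⁻¹ * ∑' γ : S', Complex.exp (((γ : ℝ) : ℂ) * w) * cc (γ : ℝ) := by
      rw [← tsum_mul_left]
      exact tsum_congr fun γ => by ring
    rw [h3, ← h2, hfact w hw]
    have := Complex.exp_ne_zero ((m : ℂ) * w)
    field_simp
  · simp [hcc0]
end
end
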